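/- arXiv:2006.12058 — 5 statements merged into one kernel-verified Lean document; each statement's English description precedes it below -/
import Mathlib

section
/- Every self-similar set in ℝ^d that is not contained in an affine hyperplane of ℝ^d is arithmetically thick. -/
open Metric Set
open scoped RealInnerProductSpace

/-- The `n`-fold arithmetic sum `⊕_n E = {x_1 + ⋯ + x_n : x_i ∈ E}`. -/
def nfoldSum {d : ℕ} (n : ℕ) (E : Set (EuclideanSpace ℝ (Fin d))) :
    Set (EuclideanSpace ℝ (Fin d)) :=
  {y | ∃ x : Fin n → EuclideanSpace ℝ (Fin d), (∀ i, x i ∈ E) ∧ y = ∑ i, x i}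

/-- A compact set is arithmetically thick if some `n`-fold arithmetic sum of it has
non-empty interior. -/
def ArithmeticallyThick {d : ℕ} (E : Set (EuclideanSpace ℝ (Fin d))) : Prop :=
  ∃ n : ℕ, 0 < n ∧ (interior (nfoldSum n E)).Nonempty

/-!
A copy of `E` inside `E` is the image of `E` under a similarity mapping `E` into itself. The points
at which arbitrarily small copies of `E` accumulate form a non-empty closed set preserved by every
`φ i`, and hence contain `E`. As `E` lies in no hyperplane, a ball around some point `b` lies in the
convex hull of finitely many points of `E`; replacing these points by small copies, all of one ratio
`ρ`, we find that the positions of `b` in the copies of ratio `ρ` surround `b` in all directions.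
The same holds, at scale `ρ ^ k`, inside each copy of ratio `ρ ^ k`. So for `n` large, a target near
`n • b` can be approximated by sums of `n` positions of `b`: passing from copies of ratio `ρ ^ k` to
copies of ratio `ρ ^ (k + 1)` inside them, greedy choices reduce the error by the factor `ρ`. Hence
the `n`-fold sum of `E`, which is closed, contains a ball around `n • b`.
-/

section SimilarityInto

variable {X : Type*} [PseudoMetricSpace X] {E : Set X}

/-- `g` is a similarity of ratio `s ∈ (0, 1]` mapping `E` into itself, so that `g '' E` is a copy of
`E` inside `E`. Ratio `1` is allowed so that the identity qualifies. -/
structure IsSimilarityInto (E : Set X) (s : ℝ) (g : X → X) : Prop where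
  pos : 0 < s
  le_one : s ≤ 1
  dist_eq : ∀ x y, dist (g x) (g y) = s * dist x y
  mapsTo : MapsTo g E E

namespace IsSimilarityInto

variable {s s' : ℝ} {g g' : X → X}

protected lemma id : IsSimilarityInto E 1 id :=
  ⟨one_pos, le_rfl, fun x y => by simp, mapsTo_id E⟩

lemma comp (h : IsSimilarityInto E s g) (h' : IsSimilarityInto E s' g') :
    IsSimilarityInto E (s * s') (g ∘ g') where
  pos := mul_pos h.pos h'.pos
  le_one := mul_le_one₀ h.le_one h'.pos.le h'.le_one
  dist_eq x y := by simp only [Function.comp_apply, h.dist_eq, h'.dist_eq, mul_assoc]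
  mapsTo := h.mapsTo.comp h'.mapsTo

lemma iterate (h : IsSimilarityInto E s g) : ∀ k : ℕ, IsSimilarityInto E (s ^ k) (g^[k])
  | 0 => by simpa using IsSimilarityInto.id
  | k + 1 => by simpa only [pow_succ, Function.iterate_succ] using (h.iterate k).comp h

lemma lipschitzWith (h : IsSimilarityInto E s g) : LipschitzWith s.toNNReal g :=
  LipschitzWith.of_dist_le_mul fun x y => by rw [h.dist_eq, Real.coe_toNNReal _ h.pos.le]

lemma contractingWith {Y : Type*} [MetricSpace Y] {E : Set Y} {g : Y → Y}
    (h : IsSimilarityInto E s g) (hs : s < 1) : ContractingWith s.toNNReal g :=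
  ⟨Real.toNNReal_lt_one.2 hs, h.lipschitzWith⟩

lemma mapsTo_closedBall (h : IsSimilarityInto E s g) (p : X) (R : ℝ) :
    MapsTo g (closedBall p R) (closedBall (g p) (s * R)) := fun x hx => by
  rw [mem_closedBall, h.dist_eq]
  exact mul_le_mul_of_nonneg_left hx h.pos.le

end IsSimilarityInto

/-- The points at which arbitrarily small copies of `E` inside `E` accumulate. -/
def smallCopyLimits (E : Set X) : Set X :=
  {p | ∀ ε > 0, ∃ s ≤ ε, ∃ g, IsSimilarityInto E s g ∧ MapsTo g E (closedBall p ε)}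

lemma isClosed_smallCopyLimits : IsClosed (smallCopyLimits E) := by
  refine isClosed_of_closure_subset fun p hp ε hε => ?_
  obtain ⟨q, hq, hpq⟩ := Metric.mem_closure_iff.1 hp (ε / 2) (half_pos hε)
  obtain ⟨s, hs, g, hg, hgE⟩ := hq (ε / 2) (half_pos hε)
  refine ⟨s, hs.trans (half_le_self hε.le), g, hg,
    hgE.mono_right (closedBall_subset_closedBall' ?_)⟩
  rw [dist_comm]
  linarith

lemma IsSimilarityInto.mapsTo_smallCopyLimits {s : ℝ} {g : X → X} (hg : IsSimilarityInto E s g) :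
    MapsTo g (smallCopyLimits E) (smallCopyLimits E) := by
  intro p hp ε hε
  obtain ⟨s', hs', g', hg', hgE⟩ := hp ε hε
  refine ⟨s * s', ?_, g ∘ g', hg.comp hg', ?_⟩
  · exact (mul_le_of_le_one_left hg'.pos.le hg.le_one).trans hs'
  · exact ((hg.mapsTo_closedBall p ε).mono_right (closedBall_subset_closedBall
      (mul_le_of_le_one_left hε.le hg.le_one))).comp hgE

lemma IsSimilarityInto.isFixedPt_mem_smallCopyLimits {s : ℝ} {g : X → X}
    (hg : IsSimilarityInto E s g) (hs : s < 1) (hE : Bornology.IsBounded E) {p : X}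
    (hp : Function.IsFixedPt g p) : p ∈ smallCopyLimits E := by
  intro ε hε
  obtain ⟨R, hR, hER⟩ := hE.subset_closedBall_lt 0 p
  obtain ⟨k, hk⟩ := exists_pow_lt_of_lt_one (lt_min hε (div_pos hε hR)) hs
  refine ⟨s ^ k, hk.le.trans (min_le_left _ _), g^[k], hg.iterate k, ?_⟩
  have hball := (hg.iterate k).mapsTo_closedBall p R
  rw [(hp.iterate k).eq] at hball
  refine (hball.mono_left hER).mono_right (closedBall_subset_closedBall ?_)
  exact (le_div_iff₀ hR).1 (hk.le.trans (min_le_right _ _))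

lemma infDist_le_mul_infDist_of_mapsTo {Y : Type*} [PseudoMetricSpace Y] {f : X → Y} {K : NNReal}
    (hf : LipschitzWith K f) {F : Set X} {G : Set Y} (hFG : MapsTo f F G) (hF : F.Nonempty)
    (x : X) : infDist (f x) G ≤ K * infDist x F := by
  have := hF.to_subtype
  rw [infDist_eq_iInf (s := F), Real.mul_iInf_of_nonneg K.coe_nonneg]
  exact le_ciInf fun y => (infDist_le_dist_of_mem (hFG y.2)).trans (hf.dist_le_mul x y)

end SimilarityInto

section Attractor

variable {X ι : Type*} [MetricSpace X] {E : Set X} {φ : ι → X → X}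

-- A point of `E` at maximal distance from `F` is the image of another point of `E` under a
-- contraction preserving `F`, so this maximal distance is zero.
lemma subset_of_isClosed_of_mapsTo_of_subset_iUnion_image {K : ι → NNReal} (hE : IsCompact E)
    (hφ : ∀ i, ContractingWith (K i) (φ i)) (hcover : E ⊆ ⋃ i, φ i '' E) {F : Set X}
    (hF : IsClosed F) (hne : F.Nonempty) (hmaps : ∀ i, MapsTo (φ i) F F) : E ⊆ F := by
  intro x hx
  obtain ⟨p, hp, hmax⟩ := hE.exists_isMaxOn ⟨x, hx⟩ (continuous_infDist_pt F).continuousOn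
  obtain ⟨i, q, hq, rfl⟩ := mem_iUnion.1 (hcover hp)
  have hcontract : infDist (φ i q) F ≤ K i * infDist (φ i q) F :=
    (infDist_le_mul_infDist_of_mapsTo (hφ i).2 (hmaps i) hne q).trans
      (mul_le_mul_of_nonneg_left (hmax hq) (K i).coe_nonneg)
  have hzero : infDist (φ i q) F ≤ 0 := by
    have : (K i : ℝ) < 1 := (hφ i).1
    nlinarith
  exact (hF.mem_iff_infDist_zero hne).2 (((hmax hx).trans hzero).antisymm infDist_nonneg)

lemma subset_smallCopyLimits {r : ι → ℝ} (hE : IsCompact E)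
    (hφ : ∀ i, IsSimilarityInto E (r i) (φ i)) (hr : ∀ i, r i < 1) (hcover : E ⊆ ⋃ i, φ i '' E) :
    E ⊆ smallCopyLimits E := by
  intro x hx
  obtain ⟨i, -⟩ := mem_iUnion.1 (hcover hx)
  have hcontr := fun i => (hφ i).contractingWith (hr i)
  obtain ⟨p, -, hp, -⟩ := ((hcontr i).restrict (hφ i).mapsTo).exists_fixedPoint'
    hE.isComplete (hφ i).mapsTo hx (edist_ne_top _ _)
  exact subset_of_isClosed_of_mapsTo_of_subset_iUnion_image hE hcontr hcover
    isClosed_smallCopyLimits ⟨p, (hφ i).isFixedPt_mem_smallCopyLimits (hr i) hE.isBounded hp⟩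
    (fun i => (hφ i).mapsTo_smallCopyLimits) hx

end Attractor

section CopyPositions

variable {X : Type*} [PseudoMetricSpace X] {E : Set X} {b : X} {s s' : ℝ}

/-- The positions `g b` of the point `b` in the copies `g '' E` of ratio `s` inside `E`. The point
`b` need not belong to `E`: it will be a centre of the convex hull of `E`. -/
def copyPositions (E : Set X) (b : X) (s : ℝ) : Set X :=
  {x | ∃ g, IsSimilarityInto E s g ∧ g b = x}

lemma self_mem_copyPositions_one : b ∈ copyPositions E b 1 :=
  ⟨id, IsSimilarityInto.id, rfl⟩

lemma IsSimilarityInto.image_copyPositions_subset {g : X → X} (hg : IsSimilarityInto E s g) :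
    g '' copyPositions E b s' ⊆ copyPositions E b (s * s') := by
  rintro _ ⟨_, ⟨g', hg', rfl⟩, rfl⟩
  exact ⟨g ∘ g', hg.comp hg', rfl⟩

lemma exists_dist_le_of_mem_copyPositions {x z : X} (hz : z ∈ E)
    (hx : x ∈ copyPositions E b s) : ∃ w ∈ E, dist x w ≤ s * dist b z := by
  obtain ⟨g, hg, rfl⟩ := hx
  exact ⟨g z, hg.mapsTo hz, (hg.dist_eq b z).le⟩

lemma exists_copyPositions_subset_closedBall (hE : Bornology.IsBounded E) (hne : E.Nonempty)
    (b : X) : ∃ D > 0, ∀ s, copyPositions E b s ⊆ closedBall b D := by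
  obtain ⟨R, hR, hER⟩ := hE.subset_closedBall_lt 0 b
  obtain ⟨z, hz⟩ := hne
  refine ⟨R + R, add_pos hR hR, ?_⟩
  rintro s _ ⟨g, hg, rfl⟩
  have hgb : dist (g b) (g z) ≤ R := by
    rw [hg.dist_eq, dist_comm]
    exact (mul_le_of_le_one_left dist_nonneg hg.le_one).trans (hER hz)
  exact (dist_triangle _ _ _).trans (add_le_add hgb (hER (hg.mapsTo hz)))

-- Composing a small copy with a further similarity keeps it inside the small copy, so ratios can be
-- equalized by multiplying each one by all the others.
lemma exists_common_ratio_of_subset_smallCopyLimits {t : Finset X} (hne : t.Nonempty)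
    (ht : ↑t ⊆ smallCopyLimits E) {ε : ℝ} (hε : 0 < ε) :
    ∃ ρ ≤ ε, ∀ p ∈ t, ∃ g, IsSimilarityInto E ρ g ∧ MapsTo g E (closedBall p ε) := by
  induction hne using Finset.Nonempty.cons_induction with
  | singleton p => simpa using ht (Finset.mem_singleton_self p) ε hε
  | cons p t hpt hne ih =>
    rw [Finset.coe_cons, insert_subset_iff] at ht
    obtain ⟨s, -, g, hg, hgE⟩ := ht.1 ε hε
    obtain ⟨ρ, hρε, hρ⟩ := ih ht.2
    obtain ⟨q, hq⟩ := hne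
    obtain ⟨g', hg', -⟩ := hρ q hq
    refine ⟨s * ρ, (mul_le_of_le_one_left hg'.pos.le hg.le_one).trans hρε,
      Finset.forall_mem_cons hpt _ |>.2 ⟨⟨g ∘ g', hg.comp hg', hgE.comp hg'.mapsTo⟩, ?_⟩⟩
    intro q hq
    obtain ⟨h, hh, hhE⟩ := hρ q hq
    exact ⟨h ∘ g, mul_comm ρ s ▸ hh.comp hg, hhE.comp hg.mapsTo⟩

end CopyPositions

section Surrounds

variable {V : Type*} [NormedAddCommGroup V] [InnerProductSpace ℝ V]
  {A B : Set V} {b : V} {c : ℝ}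

/-- `A` surrounds `b` at depth `c`: every closed half-space at distance `c` from `b` meets `A`.
For compact `A` this says that the closed ball of radius `c` about `b` lies in the convex hull of
`A`. -/
def Surrounds (A : Set V) (b : V) (c : ℝ) : Prop :=
  ∀ u, ∃ a ∈ A, c * ‖u‖ ≤ ⟪a - b, u⟫

namespace Surrounds

lemma nonempty (h : Surrounds A b c) : A.Nonempty :=
  let ⟨a, ha, _⟩ := h 0
  ⟨a, ha⟩

lemma mono (h : Surrounds A b c) (hAB : A ⊆ B) : Surrounds B b c := fun u =>
  let ⟨a, ha, hau⟩ := h u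
  ⟨a, hAB ha, hau⟩

lemma of_forall_dist_le (h : Surrounds A b c) {δ : ℝ} (hAB : ∀ a ∈ A, ∃ a' ∈ B, dist a' a ≤ δ) :
    Surrounds B b (c - δ) := by
  intro u
  obtain ⟨a, ha, hau⟩ := h u
  obtain ⟨a', ha', hdist⟩ := hAB a ha
  refine ⟨a', ha', ?_⟩
  have hclose : -(δ * ‖u‖) ≤ ⟪a' - a, u⟫ := by
    refine neg_le_of_abs_le ((abs_real_inner_le_norm _ _).trans ?_)
    rw [← dist_eq_norm]
    exact mul_le_mul_of_nonneg_right hdist (norm_nonneg u)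
  calc (c - δ) * ‖u‖ = -(δ * ‖u‖) + c * ‖u‖ := by ring
    _ ≤ ⟪a' - a, u⟫ + ⟪a - b, u⟫ := add_le_add hclose hau
    _ = ⟪a' - b, u⟫ := by rw [← inner_add_left, sub_add_sub_cancel]

end Surrounds

lemma surrounds_of_closedBall_subset_convexHull (hc : 0 ≤ c)
    (h : closedBall b c ⊆ convexHull ℝ A) : Surrounds A b c := by
  intro u
  by_contra! hlt
  have hhull : convexHull ℝ A ⊆ {x | ⟪u, x⟫ < ⟪u, b⟫ + c * ‖u‖} := by
    refine convexHull_min (fun a ha => ?_)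
      (convex_halfSpace_lt (innerSL ℝ u).toLinearMap.isLinear _)
    have := hlt a ha
    rw [real_inner_comm, inner_sub_right] at this
    exact sub_lt_iff_lt_add'.1 this
  have hmem : b + (c * ‖u‖⁻¹) • u ∈ closedBall b c := by
    rw [mem_closedBall, dist_self_add_left, norm_smul, norm_mul, norm_inv, norm_norm,
      Real.norm_of_nonneg hc, mul_assoc]
    exact mul_le_of_le_one_right hc inv_mul_le_one
  have hfar : ⟪u, b + (c * ‖u‖⁻¹) • u⟫ = ⟪u, b⟫ + c * ‖u‖ := by
    rw [inner_add_right, inner_smul_right, real_inner_self_eq_norm_sq, sq, mul_assoc,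
      ← mul_assoc ‖u‖⁻¹, inv_mul_mul_self]
  exact (hhull (h hmem)).ne hfar

lemma exists_finset_surrounds_of_affineSpan_eq_top [FiniteDimensional ℝ V]
    (hA : affineSpan ℝ A = ⊤) :
    ∃ t : Finset V, ↑t ⊆ A ∧ ∃ b, ∃ c > 0, Surrounds (t : Set V) b c := by
  obtain ⟨t, htA, hspan, hind⟩ := exists_affineIndependent ℝ V A
  lift t to Finset V using finite_set_of_fin_dim_affineIndependent ℝ hind
  obtain ⟨b, hb⟩ := interior_convexHull_nonempty_iff_affineSpan_eq_top.2 (hspan.trans hA)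
  obtain ⟨c, hc, hball⟩ := nhds_basis_closedBall.mem_iff.1 (mem_interior_iff_mem_nhds.1 hb)
  exact ⟨t, htA, b, c, hc, surrounds_of_closedBall_subset_convexHull hc.le hball⟩

lemma affineSpan_eq_top_of_not_subset_hyperplane [FiniteDimensional ℝ V] (hne : A.Nonempty)
    (hA : ¬ ∃ (v : V) (c : ℝ), v ≠ 0 ∧ ∀ x ∈ A, ⟪x, v⟫ = c) : affineSpan ℝ A = ⊤ := by
  rw [AffineSubspace.affineSpan_eq_top_iff_vectorSpan_eq_top_of_nonempty ℝ V V hne,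
    ← Submodule.orthogonal_eq_bot_iff]
  by_contra h
  obtain ⟨v, hv, hv0⟩ := Submodule.exists_mem_ne_zero_of_ne_bot h
  obtain ⟨x₀, hx₀⟩ := hne
  refine hA ⟨v, ⟪x₀, v⟫, hv0, fun x hx => ?_⟩
  have := (Submodule.mem_orthogonal _ v).1 hv _ (vsub_mem_vectorSpan ℝ hx hx₀)
  rwa [vsub_eq_sub, inner_sub_left, sub_eq_zero] at this

lemma exists_linearIsometryEquiv_sub_eq_smul [FiniteDimensional ℝ V] {g : V → V} {s : ℝ}
    (hs : 0 < s) (hg : ∀ x y, dist (g x) (g y) = s * dist x y) :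
    ∃ L : V ≃ₗᵢ[ℝ] V, ∀ x y, g x - g y = s • L (x - y) := by
  have hiso : Isometry fun x => s⁻¹ • g x := Isometry.of_dist_eq fun x y => by
    rw [dist_smul₀, hg, Real.norm_of_nonneg (inv_nonneg.2 hs.le), inv_mul_cancel_left₀ hs.ne']
  let f := hiso.affineIsometryOfStrictConvexSpace
  refine ⟨f.linearIsometry.toLinearIsometryEquiv rfl, fun x y => ?_⟩
  have hf : f.linearIsometry (x - y) = s⁻¹ • g x - s⁻¹ • g y :=
    f.toAffineMap.linearMap_vsub x y
  rw [LinearIsometry.coe_toLinearIsometryEquiv, hf, ← smul_sub, smul_inv_smul₀ hs.ne']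

lemma Surrounds.image_of_dist_eq [FiniteDimensional ℝ V] (h : Surrounds A b c) {g : V → V} {s : ℝ}
    (hs : 0 < s) (hg : ∀ x y, dist (g x) (g y) = s * dist x y) :
    Surrounds (g '' A) (g b) (s * c) := by
  obtain ⟨L, hL⟩ := exists_linearIsometryEquiv_sub_eq_smul hs hg
  intro u
  obtain ⟨a, ha, hau⟩ := h (L.symm u)
  refine ⟨g a, mem_image_of_mem g ha, ?_⟩
  calc s * c * ‖u‖ = s * (c * ‖L.symm u‖) := by rw [L.symm.norm_map, mul_assoc]
    _ ≤ s * ⟪a - b, L.symm u⟫ := mul_le_mul_of_nonneg_left hau hs.le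
    _ = ⟪g a - g b, u⟫ := by
      rw [hL, real_inner_smul_left, ← L.inner_map_map (a - b), L.apply_symm_apply]

lemma exists_surrounds_copyPositions [FiniteDimensional ℝ V] {E : Set V}
    (hspan : affineSpan ℝ E = ⊤) (hE : E ⊆ smallCopyLimits E) :
    ∃ b, ∃ ρ > 0, ρ < 1 ∧ ∃ c > 0, Surrounds (copyPositions E b ρ) b c := by
  obtain ⟨t, htE, b, c, hc, ht⟩ := exists_finset_surrounds_of_affineSpan_eq_top hspan
  obtain ⟨z, hz⟩ := ht.nonempty
  obtain ⟨ε, hε, hε1, hεc⟩ : ∃ ε > 0, ε < 1 ∧ ε * (dist b z + 1) ≤ c / 2 :=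
    ⟨min (1 / 2) (c / 2 / (dist b z + 1)), by positivity,
      (min_le_left _ _).trans_lt one_half_lt_one,
      (le_div_iff₀ (by positivity)).1 (min_le_right _ _)⟩
  obtain ⟨ρ, hρε, hρ⟩ := exists_common_ratio_of_subset_smallCopyLimits ht.nonempty
    (htE.trans hE) hε
  have hρ0 : 0 < ρ := let ⟨_, hg, _⟩ := hρ z hz; hg.pos
  refine ⟨b, ρ, hρ0, hρε.trans_lt hε1, c - c / 2, by linarith, ht.of_forall_dist_le fun p hp => ?_⟩
  obtain ⟨g, hg, hgE⟩ := hρ p hp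
  refine ⟨g b, ⟨g, hg, rfl⟩, ?_⟩
  calc dist (g b) p ≤ dist (g b) (g z) + dist (g z) p := dist_triangle _ _ _
    _ ≤ ε * dist b z + ε := by
      rw [hg.dist_eq]
      exact add_le_add (mul_le_mul_of_nonneg_right hρε dist_nonneg) (hgE (htE hz))
    _ ≤ c / 2 := by linarith

end Surrounds

section GreedyApproximation

variable {V : Type*} [NormedAddCommGroup V] [InnerProductSpace ℝ V] {c D : ℝ}

-- When `‖e‖ ≥ D ^ 2 / c`, expanding the square gives
-- `‖e - a‖ ^ 2 ≤ ‖e‖ ^ 2 - 2 * c * ‖e‖ + D ^ 2 ≤ ‖e‖ ^ 2 - c * ‖e‖ ≤ (‖e‖ - c / 2) ^ 2`.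
lemma norm_sub_le_max_of_mul_norm_le_inner {e a : V} (hc : 0 < c) (ha : ‖a‖ ≤ D)
    (hin : c * ‖e‖ ≤ ⟪a, e⟫) : ‖e - a‖ ≤ max (D ^ 2 / c + D) (‖e‖ - c / 2) := by
  rcases le_or_gt ‖e‖ (D ^ 2 / c) with hnear | hfar
  · exact le_max_of_le_left ((norm_sub_le _ _).trans (add_le_add hnear ha))
  have he : 0 < ‖e‖ := (by positivity : 0 ≤ D ^ 2 / c).trans_lt hfar
  have hcD : c ≤ D := le_of_mul_le_mul_right
    (hin.trans ((real_inner_le_norm a e).trans (mul_le_mul_of_nonneg_right ha he.le))) he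
  have hDe : D ^ 2 < c * ‖e‖ := (div_lt_iff₀' hc).1 hfar
  have hce : c ≤ ‖e‖ := by nlinarith
  have hsq : ‖e - a‖ ^ 2 ≤ (‖e‖ - c / 2) ^ 2 := by
    have haD : ‖a‖ ^ 2 ≤ D ^ 2 := pow_le_pow_left₀ (norm_nonneg a) ha 2
    rw [norm_sub_sq_real, real_inner_comm]
    nlinarith
  exact le_max_of_le_right (le_of_sq_le_sq hsq (by linarith))

-- Greedy choice: each summand is taken in the direction of the error left by the previous ones.
lemma exists_norm_sub_sum_le_of_surrounds {ι : Type*} (hc : 0 < c) (T : Finset ι)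
    {A : ι → Set V} {x : ι → V} (hA : ∀ i ∈ T, A i ⊆ closedBall (x i) D)
    (hsurr : ∀ i ∈ T, Surrounds (A i) (x i) c) (y : V) :
    ∃ a : ι → V, (∀ i ∈ T, a i ∈ A i) ∧
      ‖y - ∑ i ∈ T, a i‖ ≤ max (D ^ 2 / c + D) (‖y - ∑ i ∈ T, x i‖ - T.card * (c / 2)) := by
  classical
  induction T using Finset.induction_on generalizing y with
  | empty => exact ⟨x, by simp, by simp⟩
  | insert j T hj ih =>
    rw [Finset.forall_mem_insert] at hA hsurr
    obtain ⟨a, haA, ha⟩ := ih hA.2 hsurr.2 (y - x j)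
    obtain ⟨p, hp, hpe⟩ := hsurr.1 (y - x j - ∑ i ∈ T, a i)
    refine ⟨Function.update a j p, ?_, ?_⟩
    · rw [Finset.forall_mem_insert, Function.update_self]
      refine ⟨hp, fun i hi => ?_⟩
      rw [Function.update_of_ne (ne_of_mem_of_not_mem hi hj)]
      exact haA i hi
    have herr : y - ∑ i ∈ insert j T, Function.update a j p i =
        y - x j - ∑ i ∈ T, a i - (p - x j) := by
      rw [Finset.sum_insert hj, Function.update_self, Finset.sum_update_of_notMem hj]
      abel
    have hstep := norm_sub_le_max_of_mul_norm_le_inner hc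
      (mem_closedBall_iff_norm.1 (hA.1 hp)) hpe
    rw [herr, Finset.sum_insert hj, ← sub_sub, Finset.card_insert_of_notMem hj]
    push_cast
    grind

end GreedyApproximation

section ArithmeticSum

open scoped Pointwise

lemma isCompact_sum_const {M : Type*} [TopologicalSpace M] [AddCommMonoid M] [ContinuousAdd M]
    {E : Set M} (hE : IsCompact E) (n : ℕ) : IsCompact (∑ _i : Fin n, E) := by
  induction n with
  | zero => simp
  | succ n ih =>
    rw [Fin.sum_univ_succ]
    exact hE.add ih

variable {V : Type*} [NormedAddCommGroup V] [InnerProductSpace ℝ V] [FiniteDimensional ℝ V]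
  {E : Set V} {b y : V} {c C D ρ : ℝ} {n : ℕ}

lemma exists_copyPositions_mul_norm_sub_sum_le {s : ℝ} (hs : 0 < s) (hc : 0 < c)
    (hsurr : Surrounds (copyPositions E b ρ) b c) (hD : copyPositions E b ρ ⊆ closedBall b D)
    {x : Fin n → V} (hx : ∀ i, x i ∈ copyPositions E b s) (y : V) :
    ∃ x' : Fin n → V, (∀ i, x' i ∈ copyPositions E b (s * ρ)) ∧
      ‖y - ∑ i, x' i‖ ≤ max (s * (D ^ 2 / c + D)) (‖y - ∑ i, x i‖ - n * (s * (c / 2))) := by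
  choose g hg hgx using hx
  obtain ⟨x', hx', hle⟩ := exists_norm_sub_sum_le_of_surrounds (mul_pos hs hc) Finset.univ
    (A := fun i => g i '' copyPositions E b ρ) (x := x) (D := s * D)
    (fun i _ => hgx i ▸ (((hg i).mapsTo_closedBall b D).mono_left hD).image_subset)
    (fun i _ => hgx i ▸ hsurr.image_of_dist_eq hs (hg i).dist_eq) y
  refine ⟨x', fun i => (hg i).image_copyPositions_subset (hx' i (Finset.mem_univ i)), ?_⟩
  have hscale : (s * D) ^ 2 / (s * c) + s * D = s * (D ^ 2 / c + D) := by field_simp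
  rwa [Finset.card_univ, Fintype.card_fin, hscale, mul_div_assoc] at hle

-- The number `n` of summands is so large that the greedy gain at scale `ρ ^ k` exceeds the whole
-- error left at that scale.
lemma exists_copyPositions_pow_norm_sub_sum_le (hc : 0 < c) (hρ : 0 < ρ)
    (hsurr : Surrounds (copyPositions E b ρ) b c) (hD : copyPositions E b ρ ⊆ closedBall b D)
    (hC : D ^ 2 / c + D ≤ ρ * C) (hn : C ≤ n * (c / 2)) (hy : ‖y - n • b‖ ≤ C) (k : ℕ) :
    ∃ x : Fin n → V, (∀ i, x i ∈ copyPositions E b (ρ ^ k)) ∧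
      ‖y - ∑ i, x i‖ ≤ ρ ^ k * C := by
  induction k with
  | zero =>
    exact ⟨fun _ => b, fun _ => by simpa using self_mem_copyPositions_one, by simpa using hy⟩
  | succ k ih =>
    obtain ⟨x, hx, hxy⟩ := ih
    have hρk : 0 < ρ ^ k := pow_pos hρ k
    obtain ⟨x', hx', hle⟩ := exists_copyPositions_mul_norm_sub_sum_le hρk hc hsurr hD hx y
    refine ⟨x', by simpa only [pow_succ] using hx', hle.trans (max_le ?_ ?_)⟩
    · rw [pow_succ ρ, mul_assoc]
      exact mul_le_mul_of_nonneg_left hC hρk.le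
    · have hgain : ‖y - ∑ i, x i‖ ≤ n * (ρ ^ k * (c / 2)) := by
        rw [mul_left_comm]
        exact hxy.trans (mul_le_mul_of_nonneg_left hn hρk.le)
      have hC0 : 0 ≤ C := (norm_nonneg _).trans hy
      exact (sub_nonpos.2 hgain).trans (by positivity)

lemma closedBall_subset_sum_of_surrounds (hE : IsCompact E) (hne : E.Nonempty) (hc : 0 < c)
    (hρ : 0 < ρ) (hρ1 : ρ < 1) (hsurr : Surrounds (copyPositions E b ρ) b c)
    (hD : copyPositions E b ρ ⊆ closedBall b D) (hC : D ^ 2 / c + D ≤ ρ * C)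
    (hn : C ≤ n * (c / 2)) : closedBall (n • b) C ⊆ ∑ _i : Fin n, E := by
  intro y hy
  have hC0 : 0 ≤ C := dist_nonneg.trans hy
  obtain ⟨z, hz⟩ := hne
  rw [← (isCompact_sum_const hE n).isClosed.closure_eq, Metric.mem_closure_iff]
  intro ε hε
  obtain ⟨k, hk⟩ := exists_pow_lt_of_lt_one
    (show 0 < ε / (C + n * dist b z + 1) by positivity) hρ1
  obtain ⟨x, hx, hxy⟩ := exists_copyPositions_pow_norm_sub_sum_le hc hρ hsurr hD hC hn
    (mem_closedBall_iff_norm.1 hy) k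
  choose w hw hxw using fun i => exists_dist_le_of_mem_copyPositions hz (hx i)
  refine ⟨∑ i, w i, (Set.mem_fintype_sum _ _).2 ⟨w, hw, rfl⟩, ?_⟩
  have hsum : dist (∑ i, x i) (∑ i, w i) ≤ n * (ρ ^ k * dist b z) := by
    simpa using dist_sum_sum_le_of_le Finset.univ fun i _ => hxw i
  calc dist y (∑ i, w i) ≤ dist y (∑ i, x i) + dist (∑ i, x i) (∑ i, w i) := dist_triangle _ _ _
    _ ≤ ρ ^ k * C + n * (ρ ^ k * dist b z) := add_le_add (dist_eq_norm y _ ▸ hxy) hsum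
    _ ≤ ρ ^ k * (C + n * dist b z + 1) := by linarith [pow_pos hρ k]
    _ < ε := (lt_div_iff₀ (by positivity)).1 hk

theorem selfSimilar_arithmetically_thick_general {ι : Type*} (φ : ι → V → V)
    (hsim : ∀ i, ∃ r : ℝ, 0 < r ∧ r < 1 ∧ ∀ x y, dist (φ i x) (φ i y) = r * dist x y)
    (hcomp : IsCompact E) (hattr : E = ⋃ i, φ i '' E) (hspan : affineSpan ℝ E = ⊤) :
    ∃ n : ℕ, 0 < n ∧ (interior (∑ _i : Fin n, E)).Nonempty := by
  choose r hr0 hr1 hdist using hsim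
  have hφ i : IsSimilarityInto E (r i) (φ i) :=
    ⟨hr0 i, (hr1 i).le, hdist i, fun x hx => hattr ▸ mem_iUnion_of_mem i (mem_image_of_mem _ hx)⟩
  have hne : E.Nonempty := by
    rw [← affineSpan_nonempty ℝ, hspan]
    exact univ_nonempty
  obtain ⟨b, ρ, hρ, hρ1, c, hc, hsurr⟩ :=
    exists_surrounds_copyPositions hspan (subset_smallCopyLimits hcomp hφ hr1 hattr.subset)
  obtain ⟨D, hD0, hD⟩ := exists_copyPositions_subset_closedBall hcomp.isBounded hne b
  obtain ⟨C, hC0, hC⟩ : ∃ C > 0, ρ * C = D ^ 2 / c + D :=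
    ⟨(D ^ 2 / c + D) / ρ, by positivity, mul_div_cancel₀ _ hρ.ne'⟩
  obtain ⟨n, hn⟩ := exists_nat_ge (C / (c / 2))
  rw [div_le_iff₀ (half_pos hc)] at hn
  refine ⟨n, Nat.pos_of_ne_zero fun h0 => ?_, n • b, mem_interior_iff_mem_nhds.2 ?_⟩
  · simp only [h0, Nat.cast_zero, zero_mul] at hn
    exact hC0.not_ge hn
  · exact Filter.mem_of_superset (closedBall_mem_nhds _ hC0)
      (closedBall_subset_sum_of_surrounds hcomp hne hc hρ hρ1 hsurr (hD ρ) hC.ge hn)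

lemma nfoldSum_eq_sum {d : ℕ} (n : ℕ) (E : Set (EuclideanSpace ℝ (Fin d))) :
    nfoldSum n E = ∑ _i : Fin n, E := by
  ext y
  simp only [nfoldSum, mem_ofPred_eq, Set.mem_fintype_sum, exists_prop, eq_comm]

end ArithmeticSum

/-- Every self-similar set in `ℝ^d` not contained in an affine hyperplane is
arithmetically thick. -/
theorem selfSimilar_arithmetically_thick {d ℓ : ℕ} (hl : 0 < ℓ)
    (φ : Fin ℓ → EuclideanSpace ℝ (Fin d) → EuclideanSpace ℝ (Fin d))
    (hsim : ∀ i, ∃ r : ℝ, 0 < r ∧ r < 1 ∧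
      ∀ x y, dist (φ i x) (φ i y) = r * dist x y)
    (E : Set (EuclideanSpace ℝ (Fin d))) (hne : E.Nonempty) (hcomp : IsCompact E)
    (hattr : E = ⋃ i, φ i '' E)
    (hhyp : ¬ ∃ (v : EuclideanSpace ℝ (Fin d)) (c : ℝ), v ≠ 0 ∧
      ∀ x ∈ E, ⟪x, v⟫ = c) :
    ArithmeticallyThick E := by
  obtain ⟨n, hn, hinterior⟩ := selfSimilar_arithmetically_thick_general φ hsim hcomp hattr
    (affineSpan_eq_top_of_not_subset_hyperplane hne hhyp)
  exact ⟨n, hn, by rwa [nfoldSum_eq_sum]⟩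
end

section
/- Let E be the attractor of an affine iterated function system Φ = {φ_i(x) = T_i x + a_i}_{i=1}^ℓ on ℝ^d with d ≥ 2, where each T_i is an invertible d×d real matrix with operator norm strictly less than 1. Suppose E is not contained in an affine hyperplane of ℝ^d and that T_i T_j = T_j T_i for all 1 ≤ i, j ≤ ℓ. Then E is arithmetically thick. -/
open Metric Set
open scoped RealInnerProductSpace

/-!
Let `A L` be the set of all `t` for which `x ↦ L x + t` maps `E` into itself. Choose `L` in the
semigroup generated by the `T i` for which the differences of elements of `A L` span the largest
possible subspace `W`; since the `T i` commute, `W` contains the corresponding span for every other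
element of the semigroup. Given `x, y ∈ E`, let `f` and `g` be compositions of the maps of the
system that contract `E` to within `ε` of `x` and of `y`. Then `f ∘ g` and `g ∘ f` have the same
linear part, so `f (g z) - g (f z) ∈ W`, and letting `ε → 0` gives `x - y ∈ W`. As `E` lies in no
hyperplane, `W` is the whole space, so `A L` affinely spans it.

Write `n • E` for the `n`-fold sumset; then `L '' (n • E) + n • A L ⊆ n • E`. Rounding down convex
weights shows that `n • A L` meets every ball of a fixed radius centred in the dilate by `n` of the
convex hull of finitely many points of `A L`, and this dilate contains balls of arbitrarily large
radius. Hence some ball `B` satisfies `B ⊆ L '' B + n • A L`; iterating this inclusion and using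
that `L` contracts yields `B ⊆ n • E`.
-/

section SelfMaps

variable {𝕜 V : Type*} [NontriviallyNormedField 𝕜] [NormedAddCommGroup V] [NormedSpace 𝕜 V]

/-- The translation vectors `t` for which the affine map `x ↦ L x + t` maps `E` into itself.
Affine self-maps are grouped by linear part because differences of translation vectors are
meaningful only between maps with the same linear part. -/
def selfMapTranslations (E : Set V) (L : V →L[𝕜] V) : Set V :=
  {t | ∀ x ∈ E, L x + t ∈ E}

theorem add_map_mem_selfMapTranslations {E : Set V} {L K : V →L[𝕜] V} {t s : V}
    (ht : t ∈ selfMapTranslations E L) (hs : s ∈ selfMapTranslations E K) :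
    t + L s ∈ selfMapTranslations E (L * K) := by
  intro x hx
  have := ht _ (hs x hx)
  rwa [map_add, add_assoc, add_comm (L s)] at this

theorem selfMapTranslations_nonempty_of_mem_closure {E : Set V} {P : Set (V →L[𝕜] V)}
    (hP : ∀ L ∈ P, (selfMapTranslations E L).Nonempty) {L : V →L[𝕜] V}
    (hL : L ∈ Subsemigroup.closure P) : (selfMapTranslations E L).Nonempty := by
  induction hL using Subsemigroup.closure_induction with
  | mem L hL => exact hP L hL
  | mul K L _ _ hK hL => exact ⟨_, add_map_mem_selfMapTranslations hK.some_mem hL.some_mem⟩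

theorem vectorSpan_selfMapTranslations_le_mul {E : Set V} (L : V →L[𝕜] V) {K : V →L[𝕜] V}
    (hK : (selfMapTranslations E K).Nonempty) :
    vectorSpan 𝕜 (selfMapTranslations E L) ≤ vectorSpan 𝕜 (selfMapTranslations E (L * K)) := by
  obtain ⟨s, hs⟩ := hK
  refine Submodule.span_le.2 ?_
  rintro _ ⟨t, ht, t', ht', rfl⟩
  have := vsub_mem_vectorSpan 𝕜 (add_map_mem_selfMapTranslations ht hs)
    (add_map_mem_selfMapTranslations ht' hs)
  rwa [vsub_eq_sub, add_sub_add_right_eq_sub] at this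

theorem exists_forall_vectorSpan_selfMapTranslations_le [FiniteDimensional 𝕜 V] {E : Set V}
    {Z : Subsemigroup (V →L[𝕜] V)} (hZ : (Z : Set (V →L[𝕜] V)).Nonempty)
    (hcomm : ∀ K ∈ Z, ∀ L ∈ Z, K * L = L * K)
    (hne : ∀ L ∈ Z, (selfMapTranslations E L).Nonempty) :
    ∃ L ∈ Z, ∀ K ∈ Z,
      vectorSpan 𝕜 (selfMapTranslations E K) ≤ vectorSpan 𝕜 (selfMapTranslations E L) := by
  obtain ⟨_, ⟨L, hL, rfl⟩, hmax⟩ := WellFoundedGT.exists_maximal inferInstance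
    ((fun L => vectorSpan 𝕜 (selfMapTranslations E L)) '' (Z : Set (V →L[𝕜] V)))
    (hZ.image _)
  refine ⟨L, hL, fun K hK => ?_⟩
  calc vectorSpan 𝕜 (selfMapTranslations E K)
      ≤ vectorSpan 𝕜 (selfMapTranslations E (K * L)) :=
        vectorSpan_selfMapTranslations_le_mul K (hne L hL)
    _ = vectorSpan 𝕜 (selfMapTranslations E (L * K)) := by rw [hcomm K hK L hL]
    _ ≤ vectorSpan 𝕜 (selfMapTranslations E L) :=
        hmax ⟨_, mul_mem hL hK, rfl⟩ (vectorSpan_selfMapTranslations_le_mul L (hne K hK))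

theorem exists_norm_le_pow_map_add_eq {S B : Set V} {P : Set (V →L[𝕜] V)} {c : ℝ}
    (hP : ∀ L ∈ P, ‖L‖ ≤ c)
    (hB : ∀ x ∈ B, ∃ L ∈ P, ∃ t ∈ selfMapTranslations S L, ∃ y ∈ B, L y + t = x)
    (n : ℕ) {x : V} (hx : x ∈ B) :
    ∃ L ∈ Subsemigroup.closure P, ‖L‖ ≤ c ^ (n + 1) ∧
      ∃ t ∈ selfMapTranslations S L, ∃ y ∈ B, L y + t = x := by
  induction n with
  | zero =>
    obtain ⟨L, hL, h⟩ := hB x hx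
    exact ⟨L, Subsemigroup.subset_closure hL, by simpa only [zero_add, pow_one] using hP L hL, h⟩
  | succ n ih =>
    obtain ⟨L, hL, hLn, t, ht, y, hy, rfl⟩ := ih
    obtain ⟨K, hK, s, hs, z, hz, rfl⟩ := hB y hy
    refine ⟨L * K, mul_mem hL (Subsemigroup.subset_closure hK), ?_, t + L s,
      add_map_mem_selfMapTranslations ht hs, z, hz, ?_⟩
    · calc ‖L * K‖ ≤ ‖L‖ * ‖K‖ := norm_mul_le L K
        _ ≤ c ^ (n + 1) * c := by
          gcongr
          · exact (norm_nonneg L).trans hLn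
          · exact hP K hK
        _ = c ^ (n + 1 + 1) := (pow_succ _ _).symm
    · rw [mul_apply_eq_comp, map_add]
      abel

theorem exists_forall_dist_map_add_lt {S B D : Set V} {P : Set (V →L[𝕜] V)} {c : ℝ}
    (hc : c < 1) (hP : ∀ L ∈ P, ‖L‖ ≤ c)
    (hB : ∀ x ∈ B, ∃ L ∈ P, ∃ t ∈ selfMapTranslations S L, ∃ y ∈ B, L y + t = x)
    (hBb : Bornology.IsBounded B) (hDb : Bornology.IsBounded D) {x : V} (hx : x ∈ B)
    {ε : ℝ} (hε : 0 < ε) :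
    ∃ L ∈ Subsemigroup.closure P, ∃ t ∈ selfMapTranslations S L,
      ∀ z ∈ D, dist (L z + t) x < ε := by
  obtain ⟨r, hr⟩ := Metric.isBounded_iff.1 (hDb.union hBb)
  have hc0 : 0 ≤ c := by
    obtain ⟨L, hL, -⟩ := hB x hx
    exact (norm_nonneg L).trans (hP L hL)
  have hlim : Filter.Tendsto (fun n : ℕ => c ^ (n + 1) * r) Filter.atTop (nhds 0) := by
    simpa only [zero_mul] using ((Filter.tendsto_add_atTop_iff_nat 1).2
      (tendsto_pow_atTop_nhds_zero_of_lt_one hc0 hc)).mul_const r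
  obtain ⟨n, hn⟩ := (hlim.eventually_lt_const hε).exists
  obtain ⟨L, hL, hLn, t, ht, y, hy, rfl⟩ := exists_norm_le_pow_map_add_eq hP hB n hx
  refine ⟨L, hL, t, ht, fun z hz => ?_⟩
  calc dist (L z + t) (L y + t) = ‖L (z - y)‖ := by rw [dist_add_right, dist_eq_norm, map_sub]
    _ ≤ c ^ (n + 1) * ‖z - y‖ := L.le_of_opNorm_le hLn _
    _ ≤ c ^ (n + 1) * r := by
      gcongr
      rw [← dist_eq_norm]
      exact hr (Or.inl hz) (Or.inr hy)
    _ < ε := hn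

theorem vectorSpan_le_of_forall_vectorSpan_selfMapTranslations_le {E : Set V}
    {P : Set (V →L[𝕜] V)} {c : ℝ} (hc : c < 1) (hP : ∀ L ∈ P, ‖L‖ ≤ c)
    (hcomm : ∀ K ∈ P, ∀ L ∈ P, K * L = L * K) (hEb : Bornology.IsBounded E)
    (hE : ∀ x ∈ E, ∃ L ∈ P, ∃ t ∈ selfMapTranslations E L, ∃ y ∈ E, L y + t = x)
    {W : Submodule 𝕜 V} (hWc : IsClosed (W : Set V))
    (hW : ∀ L ∈ Subsemigroup.closure P, vectorSpan 𝕜 (selfMapTranslations E L) ≤ W) :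
    vectorSpan 𝕜 E ≤ W := by
  refine Submodule.span_le.2 ?_
  rintro _ ⟨x, hx, y, hy, rfl⟩
  rw [← hWc.closure_eq, Metric.mem_closure_iff]
  intro ε hε
  obtain ⟨L, hL, t, ht, hLx⟩ := exists_forall_dist_map_add_lt hc hP hE hEb hEb hx (half_pos hε)
  obtain ⟨K, hK, s, hs, hKy⟩ := exists_forall_dist_map_add_lt hc hP hE hEb hEb hy (half_pos hε)
  have hLK : L * K = K * L :=
    have := Subsemigroup.isMulCommutative_closure _ hcomm
    setLike_mul_comm hL hK
  have hdiff : L (K x + s) + t - (K (L x + t) + s) ∈ W := by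
    have hmem : t + L s - (s + K t) ∈ W := hW _ (mul_mem hL hK) <|
      vsub_mem_vectorSpan 𝕜 (add_map_mem_selfMapTranslations ht hs)
        (hLK ▸ add_map_mem_selfMapTranslations hs ht)
    have hLKx : L (K x) = K (L x) := congrArg (fun f : V →L[𝕜] V => f x) hLK
    convert hmem using 1
    rw [map_add, map_add, hLKx]
    abel
  refine ⟨_, hdiff, ?_⟩
  calc dist (x - y) (L (K x + s) + t - (K (L x + t) + s))
      ≤ dist x (L (K x + s) + t) + dist y (K (L x + t) + s) := dist_sub_sub_le ..
    _ < ε / 2 + ε / 2 := by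
      rw [dist_comm x, dist_comm y]
      exact add_lt_add (hLx _ (hs x hx)) (hKy _ (ht x hx))
    _ = ε := add_halves ε

theorem exists_vectorSpan_selfMapTranslations_eq_top [CompleteSpace 𝕜] [FiniteDimensional 𝕜 V]
    {E : Set V} {P : Set (V →L[𝕜] V)} {c : ℝ} (hc : c < 1) (hP : ∀ L ∈ P, ‖L‖ ≤ c)
    (hcomm : ∀ K ∈ P, ∀ L ∈ P, K * L = L * K)
    (hPne : ∀ L ∈ P, (selfMapTranslations E L).Nonempty)
    (hne : E.Nonempty) (hEb : Bornology.IsBounded E)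
    (hE : ∀ x ∈ E, ∃ L ∈ P, ∃ t ∈ selfMapTranslations E L, ∃ y ∈ E, L y + t = x)
    (hspan : vectorSpan 𝕜 E = ⊤) :
    ∃ L ∈ Subsemigroup.closure P, vectorSpan 𝕜 (selfMapTranslations E L) = ⊤ := by
  have hZ : (Subsemigroup.closure P : Set (V →L[𝕜] V)).Nonempty := by
    obtain ⟨x, hx⟩ := hne
    obtain ⟨L, hL, -⟩ := hE x hx
    exact ⟨L, Subsemigroup.subset_closure hL⟩
  have := Subsemigroup.isMulCommutative_closure _ hcomm
  obtain ⟨L, hL, hmax⟩ := exists_forall_vectorSpan_selfMapTranslations_le hZ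
    (fun K hK L hL => setLike_mul_comm hK hL)
    (fun L hL => selfMapTranslations_nonempty_of_mem_closure hPne hL)
  exact ⟨L, hL, top_le_iff.1 <| hspan.ge.trans <|
    vectorSpan_le_of_forall_vectorSpan_selfMapTranslations_le hc hP hcomm hEb hE
      (Submodule.closed_of_finiteDimensional _) hmax⟩

end SelfMaps

section Sumsets

open scoped Pointwise

theorem subset_of_subset_image_add {𝕜 V : Type*} [NontriviallyNormedField 𝕜]
    [NormedAddCommGroup V] [NormedSpace 𝕜 V] {L : V →L[𝕜] V} (hL : ‖L‖ < 1) {A B S : Set V}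
    (hS : IsClosed S) (hne : S.Nonempty) (hB : Bornology.IsBounded B) (hSL : L '' S + A ⊆ S)
    (hBL : B ⊆ L '' B + A) : B ⊆ S := by
  intro x hx
  obtain ⟨s, hs⟩ := hne
  rw [← hS.closure_eq, Metric.mem_closure_iff]
  intro ε hε
  have hBL' : ∀ y ∈ B, ∃ K ∈ ({L} : Set (V →L[𝕜] V)), ∃ t ∈ selfMapTranslations S K,
      ∃ z ∈ B, K z + t = y := by
    intro y hy
    obtain ⟨_, ⟨z, hz, rfl⟩, t, ht, rfl⟩ := hBL hy
    exact ⟨L, rfl, t, fun w hw => hSL (add_mem_add (mem_image_of_mem L hw) ht), z, hz, rfl⟩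
  obtain ⟨K, -, t, ht, hK⟩ := exists_forall_dist_map_add_lt hL
    (fun K hK => (congrArg norm (mem_singleton_iff.1 hK)).le) hBL' hB
    Bornology.isBounded_singleton hx hε
  exact ⟨_, ht s hs, by rw [dist_comm]; exact hK s rfl⟩

theorem isCompact_nsmul {M : Type*} [TopologicalSpace M] [AddMonoid M] [ContinuousAdd M]
    {E : Set M} (hE : IsCompact E) (n : ℕ) : IsCompact (n • E) := by
  induction n with
  | zero => rw [zero_nsmul]; exact isCompact_singleton
  | succ n ih => simpa only [succ_nsmul] using ih.add hE

theorem sum_nsmul_mem_nsmul {ι M : Type*} [AddCommMonoid M] {A : Set M} {s : Finset ι} {f : ι → M}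
    (hf : ∀ i ∈ s, f i ∈ A) (m : ι → ℕ) : ∑ i ∈ s, m i • f i ∈ (∑ i ∈ s, m i) • A := by
  rw [← Finset.sum_nsmul_assoc]
  exact Set.finsetSum_mem_finsetSum _ _ _ fun i hi => nsmul_mem_nsmul (hf i hi)

variable {V : Type*} [NormedAddCommGroup V] [NormedSpace ℝ V]

theorem smul_mem_nsmul_add_closedBall_of_mem_convexHull {A : Finset V} {a : V} (ha : a ∈ A)
    (n : ℕ) {x : V} (hx : x ∈ convexHull ℝ (A : Set V)) :
    (n : ℝ) • x ∈ n • (A : Set V) + closedBall 0 (∑ y ∈ A, ‖y - a‖) := by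
  obtain ⟨w, hw0, hw1, rfl⟩ := Finset.mem_convexHull'.1 hx
  let m : V → ℕ := fun y => ⌊n * w y⌋₊
  have hm_le : ∀ y ∈ A, (m y : ℝ) ≤ n * w y := fun y hy =>
    Nat.floor_le (mul_nonneg n.cast_nonneg (hw0 y hy))
  have hsum_w : ∑ y ∈ A, (n : ℝ) * w y = n := by rw [← Finset.mul_sum, hw1, mul_one]
  have hsum_m : ∑ y ∈ A, m y ≤ n := by
    have : ((∑ y ∈ A, m y : ℕ) : ℝ) ≤ n := by
      rw [Nat.cast_sum]
      exact (Finset.sum_le_sum hm_le).trans_eq hsum_w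
    exact_mod_cast this
  obtain ⟨k, hk⟩ := Nat.exists_eq_add_of_le hsum_m
  refine ⟨∑ y ∈ A, m y • y + k • a, ?_, ∑ y ∈ A, (n * w y - m y) • (y - a), ?_, ?_⟩
  · nth_rw 1 [hk]
    rw [add_nsmul]
    exact add_mem_add (sum_nsmul_mem_nsmul (fun _ hy => hy) m) (nsmul_mem_nsmul ha)
  · rw [mem_closedBall_zero_iff]
    refine (norm_sum_le _ _).trans (Finset.sum_le_sum fun y hy => ?_)
    rw [norm_smul, Real.norm_of_nonneg (sub_nonneg.2 (hm_le y hy))]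
    exact mul_le_of_le_one_left (norm_nonneg _)
      (sub_le_iff_le_add'.2 (Nat.lt_floor_add_one _).le)
  · have hk' : ∑ y ∈ A, (n * w y - m y) = k := by
      rw [Finset.sum_sub_distrib, hsum_w, sub_eq_iff_eq_add']
      exact_mod_cast hk
    simp only [smul_sub, Finset.sum_sub_distrib, ← Finset.sum_smul, hk']
    simp only [sub_smul, mul_smul, Finset.sum_sub_distrib, ← Finset.smul_sum,
      Nat.cast_smul_eq_nsmul]
    abel

variable [FiniteDimensional ℝ V]

theorem exists_finset_subset_interior_convexHull_nonempty {A : Set V}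
    (hA : affineSpan ℝ A = ⊤) :
    ∃ F : Finset V, ↑F ⊆ A ∧ (interior (convexHull ℝ (F : Set V))).Nonempty := by
  obtain ⟨F, hFA, hspan, hind⟩ := exists_affineIndependent ℝ V A
  lift F to Finset V using finite_set_of_fin_dim_affineIndependent ℝ hind
  exact ⟨F, hFA, interior_convexHull_nonempty_iff_affineSpan_eq_top.2 (hspan.trans hA)⟩

theorem exists_closedBall_subset_nsmul_add_closedBall {A : Set V} (hA : affineSpan ℝ A = ⊤) :
    ∃ C : ℝ, ∀ R > 0, ∃ n > 0, ∃ z : V, closedBall z R ⊆ n • A + closedBall 0 C := by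
  obtain ⟨F, hFA, z, hz⟩ := exists_finset_subset_interior_convexHull_nonempty hA
  obtain ⟨ρ, hρ, hball⟩ := Metric.nhds_basis_closedBall.mem_iff.1 (mem_interior_iff_mem_nhds.1 hz)
  obtain ⟨a, ha⟩ : F.Nonempty := by
    exact_mod_cast convexHull_nonempty_iff.1 ⟨z, interior_subset hz⟩
  refine ⟨∑ y ∈ F, ‖y - a‖, fun R hR => ?_⟩
  obtain ⟨n, hn⟩ := exists_nat_gt (R / ρ)
  have hn0 : (0 : ℝ) < n := (div_pos hR hρ).trans hn
  refine ⟨n, by exact_mod_cast hn0, (n : ℝ) • z, ?_⟩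
  calc closedBall ((n : ℝ) • z) R ⊆ closedBall ((n : ℝ) • z) (n * ρ) :=
        closedBall_subset_closedBall ((div_lt_iff₀ hρ).1 hn).le
    _ = (n : ℝ) • closedBall z ρ := by
        rw [smul_closedBall' hn0.ne', Real.norm_of_nonneg hn0.le]
    _ ⊆ (n : ℝ) • convexHull ℝ (F : Set V) := smul_set_mono hball
    _ ⊆ n • (F : Set V) + closedBall 0 (∑ y ∈ F, ‖y - a‖) := by
        rintro _ ⟨x, hx, rfl⟩
        exact smul_mem_nsmul_add_closedBall_of_mem_convexHull ha n hx
    _ ⊆ n • A + closedBall 0 (∑ y ∈ F, ‖y - a‖) :=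
        add_subset_add_right (nsmul_subset_nsmul_left hFA)

theorem exists_closedBall_subset_image_add_nsmul {L : V →L[ℝ] V} (hL : IsUnit L) (hL1 : ‖L‖ < 1)
    {A : Set V} (hA : affineSpan ℝ A = ⊤) :
    ∃ n > 0, ∃ x₀ : V, ∃ R > 0, closedBall x₀ R ⊆ L '' closedBall x₀ R + n • A := by
  have := FiniteDimensional.complete ℝ V
  obtain ⟨K, hLK⟩ := hL.exists_right_inv
  obtain ⟨C, hC⟩ := exists_closedBall_subset_nsmul_add_closedBall hA
  let R := max (‖K‖ * C) 1
  have hR : 0 < R := lt_max_of_lt_right one_pos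
  obtain ⟨n, hn, z, hz⟩ := hC R hR
  obtain ⟨x₀, hx₀⟩ : ∃ x₀, x₀ - L x₀ = z :=
    (ContinuousLinearMap.isUnit_iff_bijective.1 (isUnit_one_sub_of_norm_lt_one hL1)).2 z
  refine ⟨n, hn, x₀, R, hR, fun x hx => ?_⟩
  have hxz : x - L x₀ ∈ closedBall z R := by
    rwa [mem_closedBall_iff_norm, ← hx₀, sub_sub_sub_cancel_right, ← mem_closedBall_iff_norm]
  obtain ⟨q, hq, r, hr, (hqr : q + r = x - L x₀)⟩ := hz hxz
  have hKr : x₀ + K r ∈ closedBall x₀ R := by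
    rw [mem_closedBall_iff_norm, add_sub_cancel_left]
    calc ‖K r‖ ≤ ‖K‖ * C := K.le_opNorm_of_le (mem_closedBall_zero_iff.1 hr)
      _ ≤ R := le_max_left _ _
  have hLKr : L (K r) = r := congrArg (fun f : V →L[ℝ] V => f r) hLK
  refine ⟨_, mem_image_of_mem L hKr, q, hq, ?_⟩
  calc L (x₀ + K r) + q = L x₀ + (q + r) := by rw [map_add, hLKr, add_assoc, add_comm r]
    _ = x := by rw [hqr, add_sub_cancel]

theorem exists_interior_nsmul_nonempty_of_affineSpan_eq_top {E A : Set V} (hne : E.Nonempty)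
    (hE : IsCompact E) {L : V →L[ℝ] V} (hL : IsUnit L) (hL1 : ‖L‖ < 1)
    (hA : affineSpan ℝ A = ⊤) (hEA : L '' E + A ⊆ E) :
    ∃ n > 0, (interior (n • E)).Nonempty := by
  obtain ⟨n, hn, x₀, R, hR, hcover⟩ := exists_closedBall_subset_image_add_nsmul hL hL1 hA
  have hself : L '' (n • E) + n • A ⊆ n • E := by
    rw [image_nsmul, ← nsmul_add]
    exact nsmul_subset_nsmul_left hEA
  have hsub : closedBall x₀ R ⊆ n • E :=
    subset_of_subset_image_add hL1 (isCompact_nsmul hE n).isClosed hne.nsmul isBounded_closedBall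
      hself hcover
  exact ⟨n, hn, x₀, interior_mono hsub (ball_subset_interior_closedBall (mem_ball_self hR))⟩

theorem selfAffine_commuting_arithmetically_thick_general {ι : Type*} {T : ι → V →L[ℝ] V}
    {a : ι → V} {c : ℝ} (hc : c < 1) (hinv : ∀ i, IsUnit (T i)) (hnorm : ∀ i, ‖T i‖ ≤ c)
    {E : Set V} (hne : E.Nonempty) (hcomp : IsCompact E)
    (hattr : E = ⋃ i, (fun x => T i x + a i) '' E) (hspan : affineSpan ℝ E = ⊤)
    (hcomm : ∀ i j, T i * T j = T j * T i) :
    ∃ n > 0, (interior (n • E)).Nonempty := by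
  have ha : ∀ i, a i ∈ selfMapTranslations E (T i) := fun i x hx =>
    hattr.ge (mem_iUnion_of_mem i ⟨x, hx, rfl⟩)
  have hE : ∀ x ∈ E, ∃ L ∈ range T, ∃ t ∈ selfMapTranslations E L, ∃ y ∈ E, L y + t = x := by
    intro x hx
    obtain ⟨i, y, hy, hyx⟩ := mem_iUnion.1 (hattr.le hx)
    exact ⟨T i, mem_range_self i, a i, ha i, y, hy, hyx⟩
  obtain ⟨L, hL, hLspan⟩ := exists_vectorSpan_selfMapTranslations_eq_top hc
    (forall_mem_range.2 hnorm) (forall_mem_range.2 fun i => forall_mem_range.2 (hcomm i))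
    (forall_mem_range.2 fun i => ⟨a i, ha i⟩) hne hcomp.isBounded hE
    (AffineSubspace.vectorSpan_eq_top_of_affineSpan_eq_top ℝ V V hspan)
  have hunit : IsUnit L :=
    Subsemigroup.closure_le (S := (IsUnit.submonoid (V →L[ℝ] V)).toSubsemigroup).2
      (range_subset_iff.2 hinv) hL
  have hL1 : L ∈ Subsemigroup.unitBall (V →L[ℝ] V) :=
    Subsemigroup.closure_le.2
      (range_subset_iff.2 fun i => mem_ball_zero_iff.2 ((hnorm i).trans_lt hc)) hL
  have hLne : (selfMapTranslations E L).Nonempty :=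
    selfMapTranslations_nonempty_of_mem_closure (forall_mem_range.2 fun i => ⟨a i, ha i⟩) hL
  refine exists_interior_nsmul_nonempty_of_affineSpan_eq_top hne hcomp hunit
    (mem_ball_zero_iff.1 hL1)
    ((AffineSubspace.affineSpan_eq_top_iff_vectorSpan_eq_top_of_nonempty ℝ V V hLne).2 hLspan) ?_
  rintro _ ⟨_, ⟨x, hx, rfl⟩, t, ht, rfl⟩
  exact ht x hx

theorem nfoldSum_eq_nsmul {d : ℕ} (n : ℕ) (E : Set (EuclideanSpace ℝ (Fin d))) :
    nfoldSum n E = n • E := by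
  have hsum : n • E = ∑ _i : Fin n, E := by rw [Finset.sum_const, Finset.card_fin]
  ext y
  simp only [hsum, nfoldSum, Set.mem_fintype_sum, mem_ofPred_eq, exists_prop, eq_comm]

end Sumsets

theorem affineSpan_eq_top_of_not_exists_inner_eq {V : Type*} [NormedAddCommGroup V]
    [InnerProductSpace ℝ V] [FiniteDimensional ℝ V] {E : Set V} (hne : E.Nonempty)
    (hE : ¬ ∃ (v : V) (c : ℝ), v ≠ 0 ∧ ∀ x ∈ E, ⟪x, v⟫ = c) : affineSpan ℝ E = ⊤ := by
  rw [AffineSubspace.affineSpan_eq_top_iff_vectorSpan_eq_top_of_nonempty ℝ V V hne,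
    ← Submodule.orthogonal_eq_bot_iff, Submodule.eq_bot_iff]
  obtain ⟨p, hp⟩ := hne
  intro v hv
  by_contra hv0
  refine hE ⟨v, ⟪p, v⟫, hv0, fun x hx => ?_⟩
  rw [← sub_eq_zero, ← inner_sub_left]
  exact Submodule.inner_right_of_mem_orthogonal (vsub_mem_vectorSpan ℝ hx hp) hv

/-- The attractor of an affine IFS `{x ↦ T_i x + a_i}` on `ℝ^d`, `d ≥ 2`, with commuting
linear parts, is arithmetically thick provided it is not contained in an affine
hyperplane. -/
theorem selfAffine_commuting_arithmetically_thick {d ℓ : ℕ} (hd : 2 ≤ d) (hl : 0 < ℓ)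
    (T : Fin ℓ → Matrix (Fin d) (Fin d) ℝ) (a : Fin ℓ → EuclideanSpace ℝ (Fin d))
    (hinv : ∀ i, IsUnit (T i))
    (hnorm : ∀ i, ∃ c : ℝ, 0 ≤ c ∧ c < 1 ∧
      ∀ x : EuclideanSpace ℝ (Fin d), ‖Matrix.toEuclideanLin (T i) x‖ ≤ c * ‖x‖)
    (E : Set (EuclideanSpace ℝ (Fin d))) (hne : E.Nonempty) (hcomp : IsCompact E)
    (hattr : E = ⋃ i, (fun x => Matrix.toEuclideanLin (T i) x + a i) '' E)
    (hhyp : ¬ ∃ (v : EuclideanSpace ℝ (Fin d)) (c : ℝ), v ≠ 0 ∧ ∀ x ∈ E, ⟪x, v⟫ = c)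
    (hcomm : ∀ i j, T i * T j = T j * T i) :
    ArithmeticallyThick E := by
  have : Nonempty (Fin ℓ) := Fin.pos_iff_nonempty.1 hl
  have hnorm_lt : ∀ i, ‖Matrix.toEuclideanCLM (𝕜 := ℝ) (T i)‖ < 1 := fun i => by
    obtain ⟨c, hc0, hc1, hc⟩ := hnorm i
    exact (ContinuousLinearMap.opNorm_le_bound _ hc0 hc).trans_lt hc1
  obtain ⟨k, hk⟩ := Finite.exists_max fun i => ‖Matrix.toEuclideanCLM (𝕜 := ℝ) (T i)‖
  simp only [ArithmeticallyThick, nfoldSum_eq_nsmul]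
  exact selfAffine_commuting_arithmetically_thick_general (hnorm_lt k)
    (fun i => (hinv i).map Matrix.toEuclideanCLM) hk hne hcomp hattr
    (affineSpan_eq_top_of_not_exists_inner_eq hne hhyp)
    (fun i j => by rw [← map_mul, ← map_mul, hcomm i j])
end

section
/- Let E be the attractor of an affine iterated function system Φ = {φ_i(x) = T_i x + a_i}_{i=1}^ℓ on ℝ^2, where each T_i is an invertible 2×2 real matrix with operator norm strictly less than 1. If E is not contained in a straight line in ℝ^2, then E is arithmetically thick. -/
open Metric Set
open scoped RealInnerProductSpace

/-!
The proof is a feedback argument. Finitely many players stand at points of `E`. If in round `k`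
every player can move within `E` so that the displacement, rescaled by a fixed contraction `g ^ k`,
is bounded and has a component of definite size in any prescribed direction, then sufficiently many
players can keep the rescaled distance from the sum of their positions to a target bounded, whatever
the target in some ball. As `g ^ k` tends to `0`, compactness of `E` turns every such target into a
sum of points of `E`.

To produce such moves, let `S` be the semigroup of invertible affine contractions that map `E` into
itself. Their fixed points are dense in `E`, so three of them, belonging to `f 0`, `f 1`, `f 2`, are
affinely independent. The linear parts of `S` fall into three cases.

* Some linear part has an eigenvalue strictly dominating the other one, and its eigenline is moved
  by another element of `S`. High powers push all displacements into thin cones around this line, in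
  both directions along it, and the other element turns these into cones around a second line.
* Otherwise, suppose that there is a common eigenvector. Cyclic products of powers of the `f h` have
  triangular linear parts with the same diagonal, and every word in them stays within bounded
  distortion of a power of a single one.
* Otherwise `trace ^ 2 ≤ 4 |det|` throughout `S` and there is no common eigenvector. By compactness
  `‖L‖ ^ 2 ≤ C |det L|` for all linear parts `L`, and cyclic products, which have equal
  determinants, stay within bounded distortion of a power of a scalar.

In the last two cases the images of the fixed points under high cyclic products are close to the
fixed points themselves, and their differences are the vectors along which the players move.
-/

namespace SelfAffine

open Filter Topology

local notation "𝔼" d:max => EuclideanSpace ℝ (Fin d)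

section Steering

variable {d : ℕ} {E : Set (𝔼 d)}

lemma sum_mem_nfoldSum {ι : Type*} [Fintype ι] {y : ι → 𝔼 d} (hy : ∀ i, y i ∈ E) :
    ∑ i, y i ∈ nfoldSum (Fintype.card ι) E :=
  ⟨fun i ↦ y ((Fintype.equivFin ι).symm i), fun _ ↦ hy _,
    ((Fintype.equivFin ι).symm.sum_comp y).symm⟩

lemma sum_mem_nfoldSum_mul {n m : ℕ} {y : Fin n → 𝔼 d} (hy : ∀ i, y i ∈ nfoldSum m E) :
    ∑ i, y i ∈ nfoldSum (n * m) E := by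
  choose z hzE hz using hy
  have h := sum_mem_nfoldSum (y := fun p : Fin n × Fin m ↦ z p.1 p.2) fun p ↦ hzE _ _
  simpa only [Fintype.sum_prod_type, ← hz, Fintype.card_prod, Fintype.card_fin] using h

lemma isCompact_nfoldSum (hE : IsCompact E) (n : ℕ) : IsCompact (nfoldSum n E) := by
  have h : nfoldSum n E = (fun x : Fin n → 𝔼 d ↦ ∑ i, x i) '' univ.pi fun _ ↦ E := by
    ext y
    simp [nfoldSum, eq_comm]
  rw [h]
  exact (isCompact_univ_pi fun _ ↦ hE).image (by fun_prop)

section InnerProductSpace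

variable {H : Type*} [NormedAddCommGroup H] [InnerProductSpace ℝ H] {c C : ℝ}

lemma norm_sub_le_max {e q : H} (hc : 0 < c) (hq : ‖q‖ ≤ C) (hqe : c * ‖e‖ ≤ ⟪q, e⟫) :
    ‖e - q‖ ≤ max (‖e‖ - c / 2) (C ^ 2 / c + c + C) := by
  rcases le_or_gt (C ^ 2 / c + c) ‖e‖ with hfar | hnear
  · refine le_max_of_le_left (abs_le_of_sq_le_sq' ?_ ?_).2
    · have hexp : ‖e - q‖ ^ 2 = ‖e‖ ^ 2 - 2 * ⟪q, e⟫ + ‖q‖ ^ 2 := by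
        rw [norm_sub_sq_real, real_inner_comm]
      have hfar' : C ^ 2 + c * c ≤ c * ‖e‖ := by
        have := mul_le_mul_of_nonneg_left hfar hc.le
        rwa [mul_add, mul_div_cancel₀ _ hc.ne'] at this
      have hq2 : ‖q‖ ^ 2 ≤ C ^ 2 := pow_le_pow_left₀ (norm_nonneg q) hq 2
      nlinarith
    · have : 0 ≤ C ^ 2 / c := by positivity
      linarith
  · exact le_max_of_le_right ((norm_sub_le e q).trans (by linarith))

/- Each summand either shortens the error by `c / 2` or finds it already bounded. -/
lemma exists_norm_sub_sum_le {ι : Type*} (s : Finset ι) {D : ι → Set H} (hc : 0 < c)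
    (hD : ∀ i ∈ s, ∀ e, ∃ q ∈ D i, ‖q‖ ≤ C ∧ c * ‖e‖ ≤ ⟪q, e⟫) (e : H) :
    ∃ q : ι → H, (∀ i ∈ s, q i ∈ D i) ∧
      ‖e - ∑ i ∈ s, q i‖ ≤ max (‖e‖ - s.card * (c / 2)) (C ^ 2 / c + c + C) := by
  classical
  induction s using Finset.induction_on with
  | empty => exact ⟨0, by simp, by simp⟩
  | insert i s hi ih =>
    obtain ⟨q, hqD, hq⟩ := ih fun j hj ↦ hD j (Finset.mem_insert_of_mem hj)
    obtain ⟨r, hrD, hrC, hre⟩ := hD i (Finset.mem_insert_self i s) (e - ∑ j ∈ s, q j)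
    have hne : ∀ j ∈ s, j ≠ i := fun j hj h ↦ hi (h ▸ hj)
    refine ⟨Function.update q i r, fun j hj ↦ ?_, ?_⟩
    · rcases Finset.mem_insert.1 hj with rfl | hj
      · simpa using hrD
      · simpa [hne j hj] using hqD j hj
    · rw [Finset.sum_insert hi, Function.update_self, Finset.card_insert_of_notMem hi, add_comm,
        Finset.sum_congr rfl fun j hj ↦ Function.update_of_ne (hne j hj) r q, ← sub_sub]
      refine (norm_sub_le_max hc hrC hre).trans (max_le ?_ (le_max_right _ _))
      rcases le_max_iff.1 hq with h | h
      · exact le_max_of_le_left (by push_cast; linarith)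
      · exact le_max_of_le_right (by linarith)

end InnerProductSpace

variable {X : Type*} {P : ℕ → Set X} {x : X → 𝔼 d} {g : (𝔼 d →L[ℝ] 𝔼 d)ˣ} {c C : ℝ}

lemma exists_steered (hc : 0 < c) (hP : (P 0).Nonempty)
    (hmove : ∀ k, ∀ s ∈ P k, ∀ e, ∃ s' ∈ P (k + 1), ‖(g ^ k)⁻¹.1 (x s' - x s)‖ ≤ C ∧
      c * ‖e‖ ≤ ⟪(g ^ k)⁻¹.1 (x s' - x s), e⟫) :
    ∃ (n : ℕ) (z₀ : 𝔼 d) (R : ℝ), 0 < n ∧ 0 < R ∧ ∀ z, ‖z - z₀‖ ≤ R → ∀ k,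
      ∃ S : Fin n → X, (∀ j, S j ∈ P k) ∧ ‖(g ^ k)⁻¹.1 (z - ∑ j, x (S j))‖ ≤ R := by
  obtain ⟨s₀, hs₀⟩ := hP
  have hC : 0 ≤ C := by
    obtain ⟨s', -, h, -⟩ := hmove 0 s₀ hs₀ 0
    exact (norm_nonneg _).trans h
  set B := ‖g⁻¹.1‖ + 1
  set R := C ^ 2 / c + c + C
  have hB : 0 < B := by positivity
  have hR : 0 < R := by positivity
  obtain ⟨n, hn⟩ := exists_nat_gt (B * R / (c / 2))
  have hnR : B * R < n * (c / 2) := (div_lt_iff₀ (by positivity)).1 hn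
  have hn0 : 0 < n := by exact_mod_cast (by positivity : 0 < B * R / (c / 2)).trans hn
  refine ⟨n, n • x s₀, B * R, hn0, by positivity, fun z hz k ↦ ?_⟩
  induction k with
  | zero => exact ⟨fun _ ↦ s₀, fun _ ↦ hs₀, by simpa using hz⟩
  | succ k ih =>
    obtain ⟨S, hS, hSz⟩ := ih
    obtain ⟨q, hqD, hq⟩ := exists_norm_sub_sum_le Finset.univ
      (D := fun j ↦ (fun s' ↦ (g ^ k)⁻¹.1 (x s' - x (S j))) '' P (k + 1)) hc
      (fun j _ e ↦ by simpa using hmove k (S j) (hS j) e) ((g ^ k)⁻¹.1 (z - ∑ j, x (S j)))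
    choose! S' hS' hS'q using fun j ↦ hqD j (Finset.mem_univ j)
    refine ⟨S', hS', ?_⟩
    have hpow : (g ^ (k + 1))⁻¹.1 = g⁻¹.1 * (g ^ k)⁻¹.1 := by
      rw [← Units.val_mul, pow_succ, mul_inv_rev]
    have herr : (g ^ k)⁻¹.1 (z - ∑ j, x (S' j)) =
        (g ^ k)⁻¹.1 (z - ∑ j, x (S j)) - ∑ j, q j := by
      simp only [← hS'q, ← map_sum, ← map_sub, Finset.sum_sub_distrib, sub_sub, add_sub_cancel]
    rw [hpow, mul_apply_eq_comp, herr]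
    refine (g⁻¹.1.le_opNorm _).trans (mul_le_mul (by simp [B]) (hq.trans (max_le ?_ le_rfl))
      (norm_nonneg _) hB.le)
    rw [Finset.card_univ, Fintype.card_fin]
    linarith

/- The points of `P k` are the positions in round `k` of a player sitting at a sum of `m` points of
`E`. The copies of this player jointly steer the sum of their positions to any target in a ball. -/
theorem arithmeticallyThick_of_steering (hE : IsCompact E)
    (hg : Tendsto (fun k ↦ g.1 ^ k) atTop (𝓝 0)) {m : ℕ} (hm : 0 < m) (hP : (P 0).Nonempty)
    (hx : ∀ k, ∀ s ∈ P k, x s ∈ nfoldSum m E) (hc : 0 < c)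
    (hmove : ∀ k, ∀ s ∈ P k, ∀ e, ∃ s' ∈ P (k + 1), ‖(g ^ k)⁻¹.1 (x s' - x s)‖ ≤ C ∧
      c * ‖e‖ ≤ ⟪(g ^ k)⁻¹.1 (x s' - x s), e⟫) :
    ArithmeticallyThick E := by
  obtain ⟨n, z₀, R, hn, hR, hsteer⟩ := exists_steered hc hP hmove
  refine ⟨n * m, by positivity, z₀,
    mem_interior.2 ⟨ball z₀ R, fun z hz ↦ ?_, isOpen_ball, mem_ball_self hR⟩⟩
  choose S hSP hS using hsteer z (mem_ball_iff_norm.1 hz).le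
  refine (isCompact_nfoldSum hE (n * m)).isClosed.mem_of_tendsto (b := atTop)
    (f := fun k ↦ ∑ j, x (S k j)) ?_ (.of_forall fun k ↦
      sum_mem_nfoldSum_mul fun j ↦ hx k _ (hSP k j))
  have hbound : ∀ k, ‖z - ∑ j, x (S k j)‖ ≤ ‖g.1 ^ k‖ * R := fun k ↦ by
    have hz : z - ∑ j, x (S k j) = (g.1 ^ k) ((g ^ k)⁻¹.1 (z - ∑ j, x (S k j))) := by
      rw [← mul_apply_eq_comp, ← Units.val_pow_eq_pow_val, Units.mul_inv, one_apply_eq_self]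
    rw [hz]
    exact (g.1 ^ k).le_opNorm_of_le (hS k)
  refine tendsto_iff_norm_sub_tendsto_zero.2 (squeeze_zero (fun _ ↦ norm_nonneg _)
    (fun k ↦ (norm_sub_rev _ _).trans_le (hbound k)) ?_)
  simpa using hg.norm.mul_const R

theorem arithmeticallyThick_of_steering_const (hE : IsCompact E) {κ : ℝ} (hκ : 0 < κ) (hκ1 : κ < 1)
    {m : ℕ} (hm : 0 < m) (hP : (P 0).Nonempty) (hx : ∀ k, ∀ s ∈ P k, x s ∈ nfoldSum m E)
    (hc : 0 < c) (hmove : ∀ k, ∀ s ∈ P k, ∀ e, ∃ s' ∈ P (k + 1), ‖x s' - x s‖ ≤ C * κ ^ k ∧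
      c * κ ^ k * ‖e‖ ≤ ⟪x s' - x s, e⟫) : ArithmeticallyThick E := by
  let g : (𝔼 d →L[ℝ] 𝔼 d)ˣ := Units.map (algebraMap ℝ (𝔼 d →L[ℝ] 𝔼 d)) (Units.mk0 κ hκ.ne')
  have hginv (k : ℕ) (v : 𝔼 d) : (g ^ k)⁻¹.1 v = (κ ^ k)⁻¹ • v := by
    rw [← map_pow, ← map_inv, Units.coe_map, MonoidHom.coe_coe, Algebra.algebraMap_eq_smul_one]
    simp
  have hg (k : ℕ) : g.1 ^ k = κ ^ k • 1 := by
    rw [Units.coe_map, MonoidHom.coe_coe, Units.val_mk0, ← map_pow, Algebra.algebraMap_eq_smul_one]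
  have hlim : Tendsto (fun k ↦ g.1 ^ k) atTop (𝓝 0) := by
    simp only [hg]
    rw [← zero_smul ℝ (1 : 𝔼 d →L[ℝ] 𝔼 d)]
    exact (tendsto_pow_atTop_nhds_zero_of_lt_one hκ.le hκ1).smul_const (1 : 𝔼 d →L[ℝ] 𝔼 d)
  refine arithmeticallyThick_of_steering (C := C) hE hlim hm hP hx hc fun k s hs e ↦ ?_
  obtain ⟨s', hs', hle, hge⟩ := hmove k s hs e
  refine ⟨s', hs', ?_, ?_⟩
  · rw [hginv, norm_smul, Real.norm_of_nonneg (by positivity), inv_mul_le_iff₀ (by positivity),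
      mul_comm]
    exact hle
  · rw [hginv, real_inner_smul_left, le_inv_mul_iff₀ (by positivity)]
    linarith

end Steering

section PositivelySpanning

variable {ι H : Type*} [NormedAddCommGroup H] [InnerProductSpace ℝ H] {q : ι → H}

/-- A family of vectors is positively spanning if every vector has a uniformly large component
along one of them; for finite families in finite dimension this says that their nonnegative
combinations exhaust the space. -/
def PositivelySpanning (q : ι → H) : Prop :=
  ∃ c > 0, ∀ u, ∃ i, c * ‖u‖ ≤ ⟪q i, u⟫

lemma PositivelySpanning.eventually [Finite ι] {α : Type*} {l : Filter α} {u : α → ι → H}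
    (hq : PositivelySpanning q) (hu : Tendsto u l (𝓝 q)) :
    ∀ᶠ a in l, PositivelySpanning (u a) := by
  cases nonempty_fintype ι
  obtain ⟨c, hc, hq⟩ := hq
  filter_upwards [hu.eventually (ball_mem_nhds q (half_pos hc))] with a ha
  refine ⟨c / 2, half_pos hc, fun v ↦ ?_⟩
  obtain ⟨i, hi⟩ := hq v
  have hdist : ‖q i - u a i‖ ≤ c / 2 := by
    rw [← dist_eq_norm, dist_comm]
    exact (dist_le_pi_dist _ _ i).trans ha.le
  have hinner : ⟪q i - u a i, v⟫ ≤ c / 2 * ‖v‖ :=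
    (real_inner_le_norm _ _).trans (by gcongr)
  rw [inner_sub_left] at hinner
  exact ⟨i, by linarith⟩

variable [FiniteDimensional ℝ H]

lemma exists_le_abs_inner_of_span_eq_top [Finite ι] [Nonempty ι]
    (hq : Submodule.span ℝ (range q) = ⊤) : ∃ c > 0, ∀ u, ∃ i, c * ‖u‖ ≤ |⟪q i, u⟫| := by
  cases nonempty_fintype ι
  let f : H →ₗ[ℝ] ι → ℝ := LinearMap.pi fun i ↦ innerₗ H (q i)
  have hf : f.ker = ⊥ := by
    refine LinearMap.ker_eq_bot'.2 fun u hu ↦ ?_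
    have hzero : (innerₗ H).flip u = 0 := LinearMap.ext_on_range hq fun i ↦ congrFun hu i
    exact inner_self_eq_zero.1 (LinearMap.congr_fun hzero u)
  obtain ⟨K, hK, hanti⟩ := f.exists_antilipschitzWith hf
  refine ⟨(K : ℝ)⁻¹, by positivity, fun u ↦ ?_⟩
  obtain ⟨i, hi⟩ := Finite.exists_max fun i ↦ |⟪q i, u⟫|
  refine ⟨i, (inv_mul_le_iff₀ (by positivity)).2 (((hanti.le_mul_norm (map_zero f) u)).trans ?_)⟩
  gcongr
  exact (pi_norm_le_iff_of_nonneg (abs_nonneg _)).2 hi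

variable [Fintype ι]

lemma positivelySpanning_of_sum_eq_zero [Nonempty ι]
    (hq : Submodule.span ℝ (range q) = ⊤) (hsum : ∑ i, q i = 0) : PositivelySpanning q := by
  obtain ⟨c, hc, hq⟩ := exists_le_abs_inner_of_span_eq_top hq
  refine ⟨c / Fintype.card ι, by positivity, fun u ↦ ?_⟩
  rcases eq_or_ne u 0 with rfl | hu
  · simp
  by_contra! hlt
  have ht : 0 < c / Fintype.card ι * ‖u‖ := by positivity
  obtain ⟨i, hi⟩ := hq u
  have hsum' : ∑ j, (c / Fintype.card ι * ‖u‖ - ⟪q j, u⟫) = c * ‖u‖ := by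
    rw [Finset.sum_sub_distrib, ← sum_inner, hsum, inner_zero_left]
    rw [Finset.sum_const, Finset.card_univ, nsmul_eq_mul, sub_zero]
    field_simp
  have hle : c / Fintype.card ι * ‖u‖ - ⟪q i, u⟫ ≤ c * ‖u‖ :=
    hsum' ▸ Finset.single_le_sum (f := fun j ↦ c / Fintype.card ι * ‖u‖ - ⟪q j, u⟫)
      (fun j _ ↦ (sub_pos.2 (hlt j)).le) (Finset.mem_univ i)
  have hsmall : c / Fintype.card ι * ‖u‖ ≤ c * ‖u‖ := by
    gcongr
    exact div_le_self hc.le (by exact_mod_cast Fintype.card_pos (α := ι))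
  have hlti := hlt i
  rcases abs_cases ⟪q i, u⟫ with h | h <;> linarith

lemma positivelySpanning_sum_sub {p : ι → H} (hp : AffineIndependent ℝ p)
    (hcard : Fintype.card ι = Module.finrank ℝ H + 1) :
    PositivelySpanning fun i ↦ ∑ j, (p i - p j) := by
  have : Nonempty ι := Fintype.card_pos_iff.1 (by lia)
  refine positivelySpanning_of_sum_eq_zero (top_le_iff.1 ?_) ?_
  · obtain ⟨k⟩ := ‹Nonempty ι›
    rw [← hp.vectorSpan_eq_top_of_card_eq_finrank_add_one hcard,
      vectorSpan_range_eq_span_range_vsub_right ℝ p k, Submodule.span_le]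
    rintro _ ⟨i, rfl⟩
    have hdiff : p i - p k = (Fintype.card ι : ℝ)⁻¹ • (∑ j, (p i - p j) - ∑ j, (p k - p j)) := by
      simp [Finset.sum_sub_distrib, ← smul_sub, ← Nat.cast_smul_eq_nsmul ℝ]
    simp only [vsub_eq_sub, SetLike.mem_coe, hdiff]
    exact Submodule.smul_mem _ _ (Submodule.sub_mem _ (Submodule.subset_span ⟨i, rfl⟩)
      (Submodule.subset_span ⟨k, rfl⟩))
  · simp only [Finset.sum_sub_distrib]
    rw [Finset.sum_comm]
    exact sub_self _

end PositivelySpanning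

section Synchronized

variable {ι R : Type*} [NormedRing R]

/-- Units `A i` are synchronized with `g` if every word in the `A i` agrees with the power of `g` of
the same length up to a factor that is bounded together with its inverse. -/
def IsSynchronized (g : Rˣ) (A : ι → Rˣ) : Prop :=
  ∃ C : ℝ, ∀ w : List ι, ‖((g ^ w.length)⁻¹ * (w.map A).prod).1‖ ≤ C ∧
    ‖((g ^ w.length)⁻¹ * (w.map A).prod)⁻¹.1‖ ≤ C

lemma isSynchronized_const (g : Rˣ) : IsSynchronized g fun _ : ι ↦ g :=
  ⟨‖(1 : R)‖, fun w ↦ by simp⟩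

section Triangular

variable [NormedAlgebra ℝ R] {g : Rˣ} {A : ι → Rˣ} {U : R} {a c : ℝ} {b : ι → ℝ}

lemma mul_pow_eq_smul_of_mul_eq_smul {g U : R} {c : ℝ} (h : U * g = c • U) (n : ℕ) :
    U * g ^ n = c ^ n • U := by
  induction n with
  | zero => simp
  | succ n ih => rw [pow_succ, ← mul_assoc, ih, smul_mul_assoc, h, smul_smul, pow_succ]

lemma pow_mul_eq_smul_of_mul_eq_smul {g U : R} {a : ℝ} (h : g * U = a • U) (n : ℕ) :
    g ^ n * U = a ^ n • U := by
  induction n with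
  | zero => simp
  | succ n ih => rw [pow_succ', mul_assoc, ih, mul_smul_comm, h, smul_smul, pow_succ]

lemma exists_prod_eq_pow_add_smul (hA : ∀ i, (A i).1 = g + b i • U) (hgU : g * U = a • U)
    (hUg : U * g = c • U) (hUU : U * U = 0) (hc : 0 < c) (hca : c < a) {M : ℝ}
    (hM : ∀ i, |b i| ≤ M) (w : List ι) :
    ∃ β : ℝ, |β| ≤ M / (a - c) * (a ^ w.length - c ^ w.length) ∧
      (w.map A).prod.1 = g ^ w.length + β • U := by
  induction w with
  | nil => exact ⟨0, by simp⟩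
  | cons i w ih =>
    obtain ⟨β, hβ, hw⟩ := ih
    have ha : 0 < a := hc.trans hca
    refine ⟨a * β + b i * c ^ w.length, ?_, ?_⟩
    · have hd : 0 < a - c := sub_pos.2 hca
      have hi : |b i * c ^ w.length| ≤ M * c ^ w.length := by
        rw [abs_mul, abs_of_pos (pow_pos hc _)]
        gcongr
        exact hM i
      calc |a * β + b i * c ^ w.length|
          ≤ a * (M / (a - c) * (a ^ w.length - c ^ w.length)) + M * c ^ w.length := by
            refine (abs_add_le _ _).trans (add_le_add ?_ hi)
            rw [abs_mul, abs_of_pos ha]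
            gcongr
        _ = M / (a - c) * (a ^ (i :: w).length - c ^ (i :: w).length) := by
            rw [List.length_cons, pow_succ, pow_succ]
            field_simp
            ring
    · rw [List.map_cons, List.prod_cons, Units.val_mul, hA, hw, List.length_cons, pow_succ' g.1,
        add_mul, mul_add, mul_add, mul_smul_comm, hgU, smul_mul_assoc,
        mul_pow_eq_smul_of_mul_eq_smul hUg, smul_mul_smul_comm, hUU]
      module

/- The off-diagonal entry of a word of length `k` satisfies `|β| ≤ B (a ^ k - c ^ k)`, so it is at
most `B a ^ k`; this is where `c < a` enters. -/
lemma isSynchronized_of_triangular [Finite ι] (hA : ∀ i, (A i).1 = g + b i • U)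
    (hgU : g * U = a • U) (hUg : U * g = c • U) (hUU : U * U = 0) (hc : 0 < c) (hca : c < a) :
    IsSynchronized g A := by
  obtain ⟨M, hM⟩ := (Set.finite_range fun i ↦ |b i|).bddAbove
  rw [mem_upperBounds, forall_mem_range] at hM
  have ha : 0 < a := hc.trans hca
  have hgUinv (n : ℕ) : ((g ^ n)⁻¹).1 * U = (a ^ n)⁻¹ • U := by
    rw [Units.inv_mul_eq_iff_eq_mul, mul_smul_comm, Units.val_pow_eq_pow_val,
      pow_mul_eq_smul_of_mul_eq_smul hgU, inv_smul_smul₀ (by positivity)]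
  refine ⟨‖(1 : R)‖ + |M| / (a - c) * ‖U‖, fun w ↦ ?_⟩
  obtain ⟨β, hβ, hw⟩ := exists_prod_eq_pow_add_smul hA hgU hUg hUU hc hca
    (fun i ↦ (hM i).trans (le_abs_self M)) w
  set r : ℝ := β * (a ^ w.length)⁻¹ with hr
  have hrM : |r| ≤ |M| / (a - c) := by
    rw [hr, abs_mul, abs_inv, abs_of_pos (pow_pos ha _), ← div_eq_mul_inv,
      div_le_iff₀ (pow_pos ha _)]
    refine hβ.trans ?_
    gcongr
    exact sub_le_self _ (by positivity)
  have hval : ((g ^ w.length)⁻¹ * (w.map A).prod).1 = 1 + r • U := by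
    rw [Units.val_mul, hw, mul_add, mul_smul_comm, hgUinv, smul_smul, ← hr,
      ← Units.val_pow_eq_pow_val, Units.inv_mul]
  have hinv : ((g ^ w.length)⁻¹ * (w.map A).prod)⁻¹.1 = 1 + (-r) • U := by
    refine Units.inv_eq_of_mul_eq_one_right ?_
    rw [hval, mul_add, add_mul, add_mul, smul_mul_smul_comm, hUU]
    simp
  have hbound (t : ℝ) (ht : |t| ≤ |M| / (a - c)) :
      ‖1 + t • U‖ ≤ ‖(1 : R)‖ + |M| / (a - c) * ‖U‖ := by
    refine (norm_add_le _ _).trans ?_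
    rw [norm_smul, Real.norm_eq_abs]
    gcongr
  rw [hval, hinv]
  exact ⟨hbound r hrM, hbound (-r) (by rwa [abs_neg])⟩

end Triangular

section Determinant

variable {V : Type*} [NormedAddCommGroup V] [NormedSpace ℝ V]

lemma det_mul (L M : V →L[ℝ] V) : (L * M).det = L.det * M.det :=
  map_mul LinearMap.det L.toLinearMap M.toLinearMap

lemma det_one : (1 : V →L[ℝ] V).det = 1 :=
  map_one LinearMap.det

lemma det_pow (L : V →L[ℝ] V) (n : ℕ) : (L ^ n).det = L.det ^ n := by
  induction n with
  | zero => simp [det_one]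
  | succ n ih => rw [pow_succ, det_mul, ih, pow_succ]

lemma det_smul (c : ℝ) (L : V →L[ℝ] V) : (c • L).det = c ^ Module.finrank ℝ V * L.det :=
  LinearMap.det_smul c L.toLinearMap

lemma abs_det_prod {s : ℝ} {A : ι → (V →L[ℝ] V)ˣ}
    (hdet : ∀ i, |(A i).1.det| = s ^ Module.finrank ℝ V) (w : List ι) :
    |(w.map A).prod.1.det| = (s ^ w.length) ^ Module.finrank ℝ V := by
  induction w with
  | nil => simp [det_one]
  | cons i w ih =>
    rw [List.map_cons, List.prod_cons, Units.val_mul, det_mul, abs_mul, hdet, ih,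
      List.length_cons, pow_succ', mul_pow]

variable [FiniteDimensional ℝ V]

lemma isUnit_iff_det_ne_zero {L : V →L[ℝ] V} : IsUnit L ↔ L.det ≠ 0 := by
  rw [← isUnit_iff_ne_zero, ContinuousLinearMap.det, ← LinearMap.isUnit_iff_isUnit_det]
  exact (MulEquiv.isUnit_map (Module.End.toContinuousLinearMap (𝕜 := ℝ) V) (x := L.toLinearMap))

lemma exists_norm_inv_le_of_abs_det_eq_one (C : ℝ) :
    ∃ C', ∀ u : (V →L[ℝ] V)ˣ, ‖u.1‖ ≤ C → |u.1.det| = 1 → ‖u⁻¹.1‖ ≤ C' := by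
  have hK : IsCompact {L : V →L[ℝ] V | ‖L‖ ≤ C ∧ |L.det| = 1} := by
    refine (isCompact_closedBall 0 C).of_isClosed_subset ?_ fun L hL ↦ by simpa using hL.1
    have := ContinuousLinearMap.continuous_det (𝕜 := ℝ) (E := V)
    exact (isClosed_le continuous_norm continuous_const).inter
      (isClosed_eq this.abs continuous_const)
  obtain ⟨C', hC'⟩ := hK.exists_bound_of_continuousOn (f := Ring.inverse) fun L hL ↦ by
    obtain ⟨u, rfl⟩ := isUnit_iff_det_ne_zero.2 fun h : L.det = 0 ↦ by simp [h] at hL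
    exact (NormedRing.inverse_continuousAt u).continuousWithinAt
  exact ⟨C', fun u hu hdet ↦ by simpa using hC' u ⟨hu, hdet⟩⟩

lemma isSynchronized_of_norm_le_of_abs_det_eq {s C : ℝ} (hs : 0 < s) {g : (V →L[ℝ] V)ˣ}
    (hg : g.1 = s • 1) {A : ι → (V →L[ℝ] V)ˣ}
    (hdet : ∀ i, |(A i).1.det| = s ^ Module.finrank ℝ V)
    (hC : ∀ w : List ι, ‖(w.map A).prod.1‖ ≤ C * s ^ w.length) : IsSynchronized g A := by
  obtain ⟨C', hC'⟩ := exists_norm_inv_le_of_abs_det_eq_one (V := V) C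
  have hginv (n : ℕ) : (g ^ n)⁻¹.1 = (s ^ n)⁻¹ • 1 := by
    refine Units.inv_eq_of_mul_eq_one_right ?_
    simp [hg, smul_pow, smul_smul, hs.ne']
  have hdetg (n : ℕ) : (g ^ n)⁻¹.1.det = ((s ^ n) ^ Module.finrank ℝ V)⁻¹ := by
    rw [hginv, det_smul, det_one, mul_one, inv_pow]
  refine ⟨max C C', fun w ↦ ?_⟩
  have hnorm : ‖((g ^ w.length)⁻¹ * (w.map A).prod).1‖ ≤ C := by
    rw [Units.val_mul, hginv, smul_mul_assoc, one_mul, norm_smul, norm_inv,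
      Real.norm_of_nonneg (by positivity), inv_mul_le_iff₀ (by positivity), mul_comm]
    exact hC w
  refine ⟨hnorm.trans (le_max_left _ _), (hC' _ hnorm ?_).trans (le_max_right _ _)⟩
  rw [Units.val_mul, det_mul, abs_mul, abs_det_prod hdet, hdetg, abs_of_pos (by positivity),
    inv_mul_cancel₀ (by positivity)]

lemma prod_map_mem {M : Type*} [Monoid M] {S : Subsemigroup M} {a : ι → M} (ha : ∀ i, a i ∈ S) :
    ∀ {w : List ι}, w ≠ [] → (w.map a).prod ∈ S
  | [i], _ => by simpa using ha i
  | i :: j :: w, _ => mul_mem (ha i) (prod_map_mem ha (List.cons_ne_nil j w))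

lemma isSynchronized_of_norm_pow_finrank_le [Nontrivial V] {S : Subsemigroup (V →L[ℝ] V)}
    {C s : ℝ} (hC : ∀ L ∈ S, ‖L‖ ^ Module.finrank ℝ V ≤ C * |L.det|) (hs : 0 < s) {g : (V →L[ℝ] V)ˣ}
    (hg : g.1 = s • 1) {A : ι → (V →L[ℝ] V)ˣ} (hA : ∀ i, (A i).1 ∈ S)
    (hdet : ∀ i, |(A i).1.det| = s ^ Module.finrank ℝ V) : IsSynchronized g A := by
  refine isSynchronized_of_norm_le_of_abs_det_eq (C := max C 1) hs hg hdet fun w ↦ ?_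
  obtain rfl | hw := eq_or_ne w []
  · simp
  have hn : Module.finrank ℝ V ≠ 0 := Module.finrank_pos.ne'
  have hmem : (w.map A).prod.1 ∈ S := by
    rw [← Units.coeHom_apply, map_list_prod, List.map_map]
    exact prod_map_mem hA hw
  refine le_of_pow_le_pow_left₀ hn (by positivity) ?_
  calc ‖(w.map A).prod.1‖ ^ Module.finrank ℝ V
      ≤ C * (s ^ w.length) ^ Module.finrank ℝ V := abs_det_prod hdet w ▸ hC _ hmem
    _ ≤ max C 1 ^ Module.finrank ℝ V * (s ^ w.length) ^ Module.finrank ℝ V := by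
        gcongr
        exact (le_max_left C 1).trans (le_self_pow₀ (le_max_right C 1) hn)
    _ = (max C 1 * s ^ w.length) ^ Module.finrank ℝ V := (mul_pow _ _ _).symm

end Determinant

end Synchronized

section AffineMaps

variable {V : Type*} [NormedAddCommGroup V] [NormedSpace ℝ V] [FiniteDimensional ℝ V]

/-- The linear part of an affine self-map, as a continuous linear map. -/
noncomputable def linPart : (V →ᵃ[ℝ] V) →* (V →L[ℝ] V) :=
  (Module.End.toContinuousLinearMap (𝕜 := ℝ) V : Module.End ℝ V →* (V →L[ℝ] V)).comp
    AffineMap.linearHom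

lemma map_sub_map (f : V →ᵃ[ℝ] V) (x y : V) : f x - f y = linPart f (x - y) :=
  (f.linearMap_vsub x y).symm

/-- The affine maps that send `E` into itself. -/
def selfMaps (E : Set V) : Submonoid (V →ᵃ[ℝ] V) where
  carrier := {f | MapsTo f E E}
  mul_mem' hf hg := hf.comp hg
  one_mem' := mapsTo_id E

end AffineMaps

variable {d : ℕ} {E : Set (𝔼 d)}

lemma norm_le_norm_inv_mul_norm_adjoint {H : Type*} [NormedAddCommGroup H] [InnerProductSpace ℝ H]
    [CompleteSpace H] (u : (H →L[ℝ] H)ˣ) (e : H) : ‖e‖ ≤ ‖u⁻¹.1‖ * ‖u.1.adjoint e‖ := by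
  have he : u⁻¹.1.adjoint (u.1.adjoint e) = e := by
    rw [← ContinuousLinearMap.star_eq_adjoint, ← ContinuousLinearMap.star_eq_adjoint,
      ← mul_apply_eq_comp, ← star_mul, Units.mul_inv, star_one, one_apply_eq_self]
  conv_lhs => rw [← he]
  exact (u⁻¹.1.adjoint.le_opNorm _).trans_eq (by rw [LinearIsometryEquiv.norm_map])

/- The states are the words of length `k` in the `f i`, applied simultaneously to all the `y j`;
appending the letter `i` displaces the position by the linear part of the word applied to the `i`-th
of the positively spanning vectors. -/
theorem arithmeticallyThick_of_isSynchronized (hE : IsCompact E) {ι κ : Type*} [Finite ι]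
    [Fintype κ] [Nonempty κ] {g : (𝔼 d →L[ℝ] 𝔼 d)ˣ}
    (hg : Tendsto (fun k ↦ g.1 ^ k) atTop (𝓝 0)) {f : ι → 𝔼 d →ᵃ[ℝ] 𝔼 d}
    (hf : ∀ i, f i ∈ selfMaps E) {A : ι → (𝔼 d →L[ℝ] 𝔼 d)ˣ} (hA : ∀ i, linPart (f i) = A i)
    (hsync : IsSynchronized g A) {y : κ → 𝔼 d} (hy : ∀ j, y j ∈ E)
    (hspan : PositivelySpanning fun i ↦ ∑ j, (f i (y j) - y j)) : ArithmeticallyThick E := by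
  obtain ⟨C, hC⟩ := hsync
  obtain ⟨c, hc, hspan⟩ := hspan
  obtain ⟨M, hM⟩ := (Set.finite_range fun i ↦ ‖∑ j, (f i (y j) - y j)‖).bddAbove
  rw [mem_upperBounds, forall_mem_range] at hM
  have hC0 : 0 ≤ C := (norm_nonneg _).trans (hC []).1
  have hlin (w : List ι) : linPart (w.map f).prod = (w.map A).prod.1 := by
    simp only [map_list_prod, List.map_map, ← Units.coeHom_apply]
    exact congrArg List.prod (List.map_congr_left fun i _ ↦ hA i)
  refine arithmeticallyThick_of_steering hE hg (m := Fintype.card κ) Fintype.card_pos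
    (P := fun k ↦ {w : List ι | w.length = k}) (x := fun w ↦ ∑ j, (w.map f).prod (y j))
    ⟨[], rfl⟩ (fun k w _ ↦ sum_mem_nfoldSum fun j ↦ ?_) (c := c / (C + 1)) (C := C * M)
    (by positivity) ?_
  · exact (selfMaps E).list_prod_mem (by simpa using fun i _ ↦ hf i) (hy j)
  · rintro k w rfl e
    set u := (g ^ w.length)⁻¹ * (w.map A).prod with hu
    obtain ⟨i, hi⟩ := hspan (u.1.adjoint e)
    refine ⟨w ++ [i], by simp, ?_⟩
    have hdisp : (g ^ w.length)⁻¹.1 (∑ j, ((w ++ [i]).map f).prod (y j) -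
        ∑ j, (w.map f).prod (y j)) = u.1 (∑ j, (f i (y j) - y j)) := by
      rw [← Finset.sum_sub_distrib, hu, Units.val_mul, mul_apply_eq_comp, ← hlin, map_sum]
      simp only [List.map_append, List.map_singleton, List.prod_append, List.prod_singleton,
        AffineMap.coe_mul, Function.comp_apply, map_sub_map, map_sum]
    have he : ‖e‖ ≤ (C + 1) * ‖u.1.adjoint e‖ := by
      refine (norm_le_norm_inv_mul_norm_adjoint u e).trans ?_
      gcongr
      exact (hC w).2.trans (lt_add_one C).le
    simp only [hdisp]
    refine ⟨(u.1.le_opNorm _).trans (mul_le_mul (hC w).1 (hM i) (norm_nonneg _) hC0), ?_⟩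
    rw [← ContinuousLinearMap.adjoint_inner_right]
    refine le_trans ?_ hi
    rw [div_mul_eq_mul_div, div_le_iff₀ (by positivity)]
    nlinarith

lemma tendsto_clm_apply {V W α : Type*} [NormedAddCommGroup V] [NormedSpace ℝ V]
    [NormedAddCommGroup W] [NormedSpace ℝ W] {l : Filter α} {L : α → V →L[ℝ] W} {u : α → V}
    {L₀ : V →L[ℝ] W} {v : V} (hL : Tendsto L l (𝓝 L₀)) (hu : Tendsto u l (𝓝 v)) :
    Tendsto (fun a ↦ L a (u a)) l (𝓝 (L₀ v)) :=
  (isBoundedBilinearMap_apply.continuous.tendsto (L₀, v)).comp (hL.prodMk_nhds hu)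

section Contractions

variable {V : Type*} [NormedAddCommGroup V] [NormedSpace ℝ V] [FiniteDimensional ℝ V]

/-- The invertible affine contractions that send `E` into itself. -/
def contractingSelfMaps (E : Set V) : Subsemigroup (V →ᵃ[ℝ] V) where
  carrier := {f | f ∈ selfMaps E ∧ IsUnit (linPart f) ∧ ‖linPart f‖ < 1}
  mul_mem' := by
    rintro f g ⟨hf, hfu, hf1⟩ ⟨hg, hgu, hg1⟩
    refine ⟨mul_mem hf hg, ?_, ?_⟩
    · rw [map_mul]
      exact hfu.mul hgu
    · rw [map_mul]
      exact (norm_mul_le _ _).trans_lt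
        (mul_lt_one_of_nonneg_of_lt_one_left (norm_nonneg _) hf1 hg1.le)

variable {E : Set V} {f : V →ᵃ[ℝ] V} {p : V}

lemma pow_mem_contractingSelfMaps (hf : f ∈ contractingSelfMaps E) {n : ℕ} (hn : n ≠ 0) :
    f ^ n ∈ contractingSelfMaps E := by
  induction n, Nat.one_le_iff_ne_zero.2 hn using Nat.le_induction with
  | base => simpa using hf
  | succ n hn ih => exact pow_succ f n ▸ mul_mem (ih (by lia)) hf

lemma pow_apply_sub (hp : f p = p) (n : ℕ) (x : V) : (f ^ n) x - p = (linPart f ^ n) (x - p) := by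
  have hpn : (f ^ n) p = p := by
    induction n with
    | zero => rfl
    | succ n ih => rw [pow_succ, AffineMap.coe_mul, Function.comp_apply, hp, ih]
  rw [← map_pow, ← map_sub_map, hpn]

lemma exists_fixedPoint (hf : ‖linPart f‖ < 1) : ∃ p, f p = p := by
  obtain ⟨B, hB⟩ := (isUnit_one_sub_of_norm_lt_one hf).exists_right_inv
  refine ⟨B (f 0), ?_⟩
  have h : (1 - linPart f) (B (f 0)) = f 0 := DFunLike.congr_fun hB (f 0)
  have h0 := map_sub_map f (B (f 0)) 0
  rw [sub_apply, one_apply_eq_self, sub_eq_iff_eq_add] at h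
  rw [sub_zero, sub_eq_iff_eq_add, add_comm, ← h] at h0
  exact h0

lemma tendsto_pow_apply (hf : ‖linPart f‖ < 1) (hp : f p = p) {α : Type*} {l : Filter α}
    {k : α → ℕ} (hk : Tendsto k l atTop) {u : α → V} {z : V} (hu : Tendsto u l (𝓝 z)) :
    Tendsto (fun a ↦ (f ^ k a) (u a)) l (𝓝 p) := by
  rw [← tendsto_sub_nhds_zero_iff]
  simp only [pow_apply_sub hp]
  simpa using tendsto_clm_apply ((tendsto_pow_atTop_nhds_zero_of_norm_lt_one hf).comp hk)
    (hu.sub_const p)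

lemma fixedPoint_mem (hE : IsClosed E) (hne : E.Nonempty) (hf : f ∈ selfMaps E)
    (hf1 : ‖linPart f‖ < 1) (hp : f p = p) : p ∈ E := by
  obtain ⟨x, hx⟩ := hne
  exact hE.mem_of_tendsto (tendsto_pow_apply hf1 hp tendsto_id tendsto_const_nhds)
    (.of_forall fun n ↦ pow_mem hf n hx)

end Contractions

theorem arithmeticallyThick_of_tendsto (hE : IsCompact E) {ι : Type*} [Fintype ι] {p : ι → 𝔼 d}
    (hp : AffineIndependent ℝ p) (hcard : Fintype.card ι = d + 1) (hpE : ∀ i, p i ∈ E)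
    {f : ℕ → ι → 𝔼 d →ᵃ[ℝ] 𝔼 d} (hf : ∀ᶠ n in atTop, ∀ i, f n i ∈ selfMaps E)
    (hlim : ∀ i j, Tendsto (fun n ↦ f n i (p j)) atTop (𝓝 (p i)))
    (hsync : ∀ᶠ n in atTop, ∃ (g : (𝔼 d →L[ℝ] 𝔼 d)ˣ) (A : ι → (𝔼 d →L[ℝ] 𝔼 d)ˣ),
      Tendsto (fun k ↦ g.1 ^ k) atTop (𝓝 0) ∧ (∀ i, linPart (f n i) = A i) ∧
        IsSynchronized g A) :
    ArithmeticallyThick E := by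
  have hspan : ∀ᶠ n in atTop, PositivelySpanning fun i ↦ ∑ j, (f n i (p j) - p j) :=
    (positivelySpanning_sum_sub hp (by simpa using hcard)).eventually <|
      tendsto_pi_nhds.2 fun i ↦ tendsto_finsetSum _ fun j _ ↦ (hlim i j).sub_const _
  obtain ⟨n, hfn, ⟨g, A, hg, hA, hgA⟩, hn⟩ := (hf.and (hsync.and hspan)).exists
  have : Nonempty ι := Fintype.card_pos_iff.1 (by lia)
  exact arithmeticallyThick_of_isSynchronized hE hg hfn hA hgA hpE hn

section Cyclic

/-- The products `a h ^ n * a (h + 1) ^ n * a (h + 2) ^ n`: three elements that have the same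
image under every homomorphism to a commutative monoid. -/
def cyc {M : Type*} [Monoid M] (a : Fin 3 → M) (n : ℕ) (h : Fin 3) : M :=
  a h ^ n * a (h + 1) ^ n * a (h + 2) ^ n

lemma cyc_pos {a : Fin 3 → ℝ} (ha : ∀ h, 0 < a h) (n : ℕ) (h : Fin 3) : 0 < cyc a n h :=
  mul_pos (mul_pos (pow_pos (ha _) n) (pow_pos (ha _) n)) (pow_pos (ha _) n)

lemma map_cyc {M N : Type*} [Monoid M] [Monoid N] (φ : M →* N) (a : Fin 3 → M) (n : ℕ)
    (h : Fin 3) : φ (cyc a n h) = cyc (φ ∘ a) n h := by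
  simp [cyc]

lemma cyc_eq_of_commute {M : Type*} [Monoid M] {a : Fin 3 → M} (ha : ∀ h k, Commute (a h) (a k))
    (n : ℕ) (h : Fin 3) : cyc a n h = cyc a n 0 := by
  have hpow (h k : Fin 3) : Commute (a h ^ n) (a k ^ n) := (ha h k).pow_pow n n
  fin_cases h
  · rfl
  · calc a 1 ^ n * a 2 ^ n * a 0 ^ n = a 0 ^ n * (a 1 ^ n * a 2 ^ n) :=
          ((hpow 1 0).mul_left (hpow 2 0)).eq
      _ = a 0 ^ n * a 1 ^ n * a 2 ^ n := (mul_assoc _ _ _).symm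
  · calc a 2 ^ n * a 0 ^ n * a 1 ^ n = a 2 ^ n * (a 0 ^ n * a 1 ^ n) := mul_assoc _ _ _
      _ = a 0 ^ n * a 1 ^ n * a 2 ^ n := ((hpow 2 0).mul_right (hpow 2 1)).eq

variable {V : Type*} [NormedAddCommGroup V] [NormedSpace ℝ V]

lemma det_cyc (u : Fin 3 → (V →L[ℝ] V)ˣ) (n : ℕ) (h : Fin 3) :
    (cyc u n h).1.det = cyc (fun h ↦ (u h).1.det) n 0 := by
  let φ : (V →L[ℝ] V)ˣ →* ℝ := (LinearMap.det.comp
    (ContinuousLinearMap.toLinearMapRingHom.toMonoidHom)).comp (Units.coeHom (V →L[ℝ] V))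
  exact (map_cyc φ u n h).trans (cyc_eq_of_commute (fun _ _ ↦ Commute.all _ _) n h)

variable [FiniteDimensional ℝ V] {E : Set V} {f : Fin 3 → V →ᵃ[ℝ] V} {p : Fin 3 → V}

lemma linPart_cyc {u : Fin 3 → (V →L[ℝ] V)ˣ} (hu : ∀ h, linPart (f h) = u h) (n : ℕ) (h : Fin 3) :
    linPart (cyc f n h) = cyc u n h := by
  simp [cyc, hu]

lemma cyc_mem_contractingSelfMaps (hf : ∀ h, f h ∈ contractingSelfMaps E) {n : ℕ} (hn : n ≠ 0)
    (h : Fin 3) : cyc f n h ∈ contractingSelfMaps E :=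
  mul_mem (mul_mem (pow_mem_contractingSelfMaps (hf _) hn) (pow_mem_contractingSelfMaps (hf _) hn))
    (pow_mem_contractingSelfMaps (hf _) hn)

lemma tendsto_cyc_apply (hf : ∀ h, ‖linPart (f h)‖ < 1) (hp : ∀ h, f h (p h) = p h) (h : Fin 3)
    {α : Type*} {l : Filter α} {k : α → ℕ} (hk : Tendsto k l atTop) {u : α → V} {z : V}
    (hu : Tendsto u l (𝓝 z)) : Tendsto (fun a ↦ cyc f (k a) h (u a)) l (𝓝 (p h)) :=
  tendsto_pow_apply (hf h) (hp h) hk <| tendsto_pow_apply (hf _) (hp _) hk <|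
    tendsto_pow_apply (hf _) (hp _) hk hu

lemma tendsto_cyc_cyc_apply (hf : ∀ h, ‖linPart (f h)‖ < 1) (hp : ∀ h, f h (p h) = p h)
    (h : Fin 3) {α : Type*} {l : Filter α} {k : α → ℕ} (hk : Tendsto k l atTop) (x : V) :
    Tendsto (fun a ↦ cyc (cyc f (k a)) 1 h x) l (𝓝 (p h)) := by
  simpa [cyc] using tendsto_cyc_apply hf hp h hk <| tendsto_cyc_apply hf hp (h + 1) hk <|
    tendsto_cyc_apply hf hp (h + 2) hk (tendsto_const_nhds (x := x))

end Cyclic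

section Cones

variable {V : Type*} [NormedAddCommGroup V] [NormedSpace ℝ V] {ξ : V →L[ℝ] ℝ} {e : V} {ε : ℝ}

/-- The cone of aperture `ε` around the ray through `e`, where `ξ` measures the component along
`e`. -/
def narrowCone (ξ : V →L[ℝ] ℝ) (e : V) (ε : ℝ) : ConvexCone ℝ V where
  carrier := {v | ‖v - ξ v • e‖ ≤ ε * ξ v}
  smul_mem' a ha v hv := by
    have h : a • v - ξ (a • v) • e = a • (v - ξ v • e) := by
      rw [map_smul, smul_sub, smul_eq_mul, mul_smul]
    rw [mem_ofPred_eq] at hv ⊢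
    rw [h, norm_smul, Real.norm_of_nonneg ha.le, map_smul, smul_eq_mul, mul_left_comm]
    gcongr
  add_mem' v hv w hw := by
    have h : v + w - ξ (v + w) • e = (v - ξ v • e) + (w - ξ w • e) := by
      rw [map_add, add_smul]
      abel
    rw [mem_ofPred_eq] at hv hw ⊢
    rw [h, map_add, mul_add]
    exact norm_add_le_of_le hv hw

lemma mem_narrowCone {v : V} : v ∈ narrowCone ξ e ε ↔ ‖v - ξ v • e‖ ≤ ε * ξ v := Iff.rfl

lemma mem_narrowCone_neg {v : V} : v ∈ narrowCone (-ξ) (-e) ε ↔ -v ∈ narrowCone ξ e ε := by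
  simp only [mem_narrowCone, neg_apply, map_neg, smul_neg, neg_smul, neg_neg]
  rw [← norm_neg, neg_sub']

lemma nonneg_of_mem_narrowCone (hε : 0 < ε) {v : V} (hv : v ∈ narrowCone ξ e ε) : 0 ≤ ξ v :=
  nonneg_of_mul_nonneg_right ((norm_nonneg _).trans hv) hε

lemma norm_map_sub_le_of_mem_narrowCone {W : Type*} [NormedAddCommGroup W] [NormedSpace ℝ W]
    (L : V →L[ℝ] W) {v : V} (hv : v ∈ narrowCone ξ e ε) :
    ‖L v - ξ v • L e‖ ≤ ‖L‖ * ε * ξ v := by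
  rw [← map_smul, ← map_sub, mul_assoc]
  exact L.le_opNorm_of_le hv

lemma norm_map_le_of_mem_narrowCone {W : Type*} [NormedAddCommGroup W] [NormedSpace ℝ W]
    (L : V →L[ℝ] W) (hε : 0 < ε) {v : V} (hv : v ∈ narrowCone ξ e ε) :
    ‖L v‖ ≤ ‖L‖ * (‖e‖ + ε) * ξ v := by
  have hξv := nonneg_of_mem_narrowCone hε hv
  have hLe : ‖ξ v • L e‖ ≤ ‖L‖ * ‖e‖ * ξ v := by
    rw [norm_smul, Real.norm_of_nonneg hξv, mul_comm]
    gcongr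
    exact L.le_opNorm e
  linarith [norm_le_norm_sub_add (L v) (ξ v • L e), norm_map_sub_le_of_mem_narrowCone L hv]

lemma eventually_mem_narrowCone (hε : 0 < ε) (hξe : ξ e = 1) {x : ℝ} (hx : 0 < x) {α : Type*}
    {l : Filter α} {a : α → ℝ} (ha : ∀ m, 0 < a m) {u : α → V}
    (hu : Tendsto (fun m ↦ (a m)⁻¹ • u m) l (𝓝 (x • e))) :
    ∀ᶠ m in l, u m ∈ narrowCone ξ e ε ∧ 0 < ξ (u m) := by
  have hξu : Tendsto (fun m ↦ ξ ((a m)⁻¹ • u m)) l (𝓝 x) := by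
    simpa [hξe, Function.comp_def] using (ξ.continuous.tendsto _).comp hu
  have hdist : Tendsto (fun m ↦ ‖(a m)⁻¹ • u m - ξ ((a m)⁻¹ • u m) • e‖) l (𝓝 0) := by
    simpa using (hu.sub (hξu.smul_const e)).norm
  filter_upwards [hdist.eventually_lt (hξu.const_mul ε) (by positivity),
    hξu.eventually_const_lt hx] with m hm hm'
  have hmem := (narrowCone ξ e ε).smul_mem (ha m) (mem_narrowCone.2 hm.le)
  rw [smul_inv_smul₀ (ha m).ne'] at hmem
  rw [map_smul, smul_eq_mul] at hm'
  exact ⟨hmem, (mul_pos_iff_of_pos_left (inv_pos.2 (ha m))).1 hm'⟩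

lemma sub_smul_mem_narrowCone {G : V →L[ℝ] V} {κ τ : ℝ} (hε : 0 < ε) (hξe : ξ e = 1) (hκ : 0 ≤ κ)
    (hG : ‖G - τ • ξ.smulRight e‖ * ((1 + ‖ξ‖ * ‖e‖ + ε * ‖ξ‖) * (‖e‖ + ε)) ≤ ε * (τ - 2 * κ))
    {v : V} (hv : v ∈ narrowCone ξ e ε) : G v - κ • v ∈ narrowCone ξ e ε := by
  set D := G - τ • ξ.smulRight e
  have hξv := nonneg_of_mem_narrowCone hε hv
  have hDv : ‖D v‖ ≤ ‖D‖ * (‖e‖ + ε) * ξ v := norm_map_le_of_mem_narrowCone D hε hv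
  have hξD : |ξ (D v)| ≤ ‖ξ‖ * ‖D v‖ := ξ.le_opNorm _
  have hGv : G v = D v + (τ * ξ v) • e := by simp [D, smul_smul]
  have hξG : ξ (G v - κ • v) = ξ (D v) + (τ - κ) * ξ v := by
    simp only [hGv, map_sub, map_add, map_smul, hξe, smul_eq_mul]
    ring
  have hperp : G v - κ • v - ξ (G v - κ • v) • e = D v - ξ (D v) • e - κ • (v - ξ v • e) := by
    rw [hξG, hGv]
    module
  rw [mem_narrowCone, hperp, hξG]
  calc ‖D v - ξ (D v) • e - κ • (v - ξ v • e)‖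
    _ ≤ ‖D v‖ + ‖ξ‖ * ‖D v‖ * ‖e‖ + κ * (ε * ξ v) := by
      refine norm_sub_le_of_le (norm_sub_le_of_le le_rfl ?_) ?_
      · rw [norm_smul]
        gcongr
        exact hξD
      · rw [norm_smul, Real.norm_of_nonneg hκ]
        gcongr
        exact hv
    _ = (1 + ‖ξ‖ * ‖e‖ + ε * ‖ξ‖) * ‖D v‖ - ε * (‖ξ‖ * ‖D v‖) + κ * (ε * ξ v) := by ring
    _ ≤ (1 + ‖ξ‖ * ‖e‖ + ε * ‖ξ‖) * (‖D‖ * (‖e‖ + ε) * ξ v) - ε * (‖ξ‖ * ‖D v‖)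
        + κ * (ε * ξ v) := by gcongr
    _ = ‖D‖ * ((1 + ‖ξ‖ * ‖e‖ + ε * ‖ξ‖) * (‖e‖ + ε)) * ξ v - ε * (‖ξ‖ * ‖D v‖)
        + κ * (ε * ξ v) := by ring
    _ ≤ ε * (τ - 2 * κ) * ξ v - ε * (‖ξ‖ * ‖D v‖) + κ * (ε * ξ v) := by gcongr
    _ = ε * (-(‖ξ‖ * ‖D v‖) + (τ - κ) * ξ v) := by ring
    _ ≤ ε * (ξ (D v) + (τ - κ) * ξ v) := by
      gcongr
      linarith [neg_abs_le (ξ (D v))]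

lemma eventually_sub_smul_mem_narrowCone (hε : 0 < ε) (hξe : ξ e = 1) {κ τ : ℝ} (hκ : 0 ≤ κ)
    (hκτ : 2 * κ < τ) {α : Type*} {l : Filter α} {G : α → V →L[ℝ] V}
    (hG : Tendsto G l (𝓝 (τ • ξ.smulRight e))) :
    ∀ᶠ m in l, ∀ v ∈ narrowCone ξ e ε, G m v - κ • v ∈ narrowCone ξ e ε := by
  have hlim := (tendsto_iff_norm_sub_tendsto_zero.1 hG).mul_const
    ((1 + ‖ξ‖ * ‖e‖ + ε * ‖ξ‖) * (‖e‖ + ε))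
  rw [zero_mul] at hlim
  have hpos : 0 < ε * (τ - 2 * κ) := mul_pos hε (sub_pos.2 hκτ)
  filter_upwards [hlim.eventually_lt_const hpos] with m hm v hv
  exact sub_smul_mem_narrowCone hε hξe hκ hm.le hv

end Cones

section ConeGame

variable {V : Type*} [NormedAddCommGroup V] [NormedSpace ℝ V] [FiniteDimensional ℝ V]

/-- The affine maps that send `E` into itself and whose linear part is at least `κ` for the order
on `V` defined by the cone `K`. -/
def coneSelfMaps (E : Set V) (K : ConvexCone ℝ V) (κ : ℝ) : Set (V →ᵃ[ℝ] V) :=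
  {f | f ∈ selfMaps E ∧ ∀ v ∈ K, linPart f v - κ • v ∈ K}

variable {E : Set V} {K : ConvexCone ℝ V} {ξ : V →L[ℝ] ℝ} {κ ρ : ℝ} {f φ : V →ᵃ[ℝ] V} {q w : V}

lemma coneSelfMaps_narrowCone_neg {e : V} {ε : ℝ} :
    coneSelfMaps E (narrowCone (-ξ) (-e) ε) κ = coneSelfMaps E (narrowCone ξ e ε) κ := by
  ext f
  refine and_congr_right fun _ ↦ ⟨fun h v hv ↦ ?_, fun h v hv ↦ ?_⟩
  · have hmem := mem_narrowCone_neg.1 (h (-v) (mem_narrowCone_neg.2 (by rwa [neg_neg])))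
    rwa [map_neg, smul_neg, neg_sub_neg, neg_sub] at hmem
  · rw [mem_narrowCone_neg, neg_sub', ← map_neg, ← smul_neg]
    exact h (-v) (mem_narrowCone_neg.1 hv)

lemma mapsTo_of_mem_coneSelfMaps (hκ : 0 < κ) (hf : f ∈ coneSelfMaps E K κ) :
    MapsTo (linPart f) K K := fun v hv ↦ by
  simpa using K.add_mem (hf.2 v hv) (K.smul_mem hκ hv)

lemma mul_le_of_mem_coneSelfMaps (hξ : ∀ v ∈ K, 0 ≤ ξ v) (hf : f ∈ coneSelfMaps E K κ)
    (hφ : MapsTo (linPart φ) K K) (hw : w ∈ K) :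
    κ * ξ (linPart φ w) ≤ ξ (linPart (φ * f) w) := by
  have h := hξ _ (hφ (hf.2 w hw))
  rwa [map_sub, map_sub, map_smul, map_smul, smul_eq_mul, sub_nonneg, ← mul_apply_eq_comp,
    ← map_mul] at h

/-- The affine maps that send `E` and (linearly) `K` into themselves and shrink `w` to scale `ρ`,
up to a factor `κ`. -/
def scaledSelfMaps (E : Set V) (K : ConvexCone ℝ V) (ξ : V →L[ℝ] ℝ) (w : V) (κ ρ : ℝ) :
    Set (V →ᵃ[ℝ] V) :=
  {φ | φ ∈ selfMaps E ∧ MapsTo (linPart φ) K K ∧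
    κ * ρ ≤ ξ (linPart φ w) ∧ ξ (linPart φ w) ≤ ρ}

lemma exists_mem_scaledSelfMaps (hξ : ∀ v ∈ K, 0 ≤ ξ v) (hκ : 0 < κ)
    (hf : f ∈ coneSelfMaps E K κ) (hf1 : ‖linPart f‖ < 1) (hq : f q = q) (hw : w ∈ K)
    (hφ : φ ∈ selfMaps E) (hφK : MapsTo (linPart φ) K K) (hρ : 0 < ρ)
    (hφw : κ * ρ ≤ ξ (linPart φ w)) : ∃ ψ ∈ scaledSelfMaps E K ξ w κ ρ, ψ q = φ q := by
  have hpowK (n : ℕ) : MapsTo (linPart (φ * f ^ n)) K K := by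
    induction n with
    | zero => simpa using hφK
    | succ n ih =>
      rw [pow_succ, ← mul_assoc, map_mul]
      exact ih.comp (mapsTo_of_mem_coneSelfMaps hκ hf)
  have hsmall : ∃ n, ξ (linPart (φ * f ^ n) w) ≤ ρ := by
    have hlim : Tendsto (fun n ↦ (ξ ∘L linPart φ) ((linPart f ^ n) w)) atTop (𝓝 0) := by
      have hpow := tendsto_pow_atTop_nhds_zero_of_norm_lt_one hf1
      simpa [Function.comp_def] using ((ξ ∘L linPart φ).continuous.tendsto _).comp
        (tendsto_clm_apply hpow (tendsto_const_nhds (x := w)))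
    obtain ⟨n, hn⟩ := (hlim.eventually_lt_const hρ).exists
    exact ⟨n, by simpa using hn.le⟩
  classical
  refine ⟨φ * f ^ Nat.find hsmall, ⟨mul_mem hφ (pow_mem hf.1 _), hpowK _, ?_, Nat.find_spec hsmall⟩,
    ?_⟩
  · rcases hn : Nat.find hsmall with _ | n
    · simpa using hφw
    · have hbig : ρ < ξ (linPart (φ * f ^ n) w) := not_le.1 (Nat.find_min hsmall (by omega))
      calc κ * ρ ≤ κ * ξ (linPart (φ * f ^ n) w) := by gcongr
        _ ≤ ξ (linPart (φ * f ^ (n + 1)) w) := by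
          rw [pow_succ, ← mul_assoc]
          exact mul_le_of_mem_coneSelfMaps hξ hf (hpowK n) hw
  · have h := pow_apply_sub hq (Nat.find hsmall) q
    rw [sub_self, map_zero, sub_eq_zero] at h
    rw [AffineMap.coe_mul, Function.comp_apply, h]

lemma exists_mem_scaledSelfMaps_apply_eq (hξ : ∀ v ∈ K, 0 ≤ ξ v) (hκ : 0 < κ)
    (hf : f ∈ coneSelfMaps E K κ) (hf1 : ‖linPart f‖ < 1) (hq : f q = q) (hw : w ∈ K)
    {h : V →ᵃ[ℝ] V} (hh : h ∈ coneSelfMaps E K κ) (hρ : 0 < ρ)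
    (hφ : φ ∈ scaledSelfMaps E K ξ w κ ρ) :
    ∃ ψ ∈ scaledSelfMaps E K ξ w κ (κ * ρ), ψ q = φ (h q) := by
  refine exists_mem_scaledSelfMaps hξ hκ hf hf1 hq hw (mul_mem hφ.1 hh.1) ?_ (mul_pos hκ hρ) ?_
  · rw [map_mul]
    exact hφ.2.1.comp (mapsTo_of_mem_coneSelfMaps hκ hh)
  · calc κ * (κ * ρ) ≤ κ * ξ (linPart φ w) := by
          gcongr
          exact hφ.2.2.1
      _ ≤ _ := mul_le_of_mem_coneSelfMaps hξ hh hφ.2.1 hw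

lemma exists_mem_scaledSelfMaps_sum_sub_sum_eq {J : Type*} [Fintype J] {K : J → ConvexCone ℝ V}
    {ξ : J → V →L[ℝ] ℝ} (hξ : ∀ j, ∀ v ∈ K j, 0 ≤ ξ j v) (hκ : 0 < κ) {f h : J → V →ᵃ[ℝ] V}
    (hf : ∀ j, f j ∈ coneSelfMaps E (K j) κ) (hf1 : ∀ j, ‖linPart (f j)‖ < 1)
    (hh : ∀ j, h j ∈ coneSelfMaps E (K j) κ) {q : J → V} (hq : ∀ j, f j (q j) = q j) {w : J → V}
    (hw : ∀ j, w j ∈ K j) (R : J → V →ᵃ[ℝ] V) (hρ : 0 < ρ) {φ : J → V →ᵃ[ℝ] V}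
    (hφ : ∀ j, φ j ∈ scaledSelfMaps E (K j) (ξ j) (w j) κ ρ) (j : J) :
    ∃ ψ : J → V →ᵃ[ℝ] V, (∀ i, ψ i ∈ scaledSelfMaps E (K i) (ξ i) (w i) κ (κ * ρ)) ∧
      ∑ i, R i (ψ i (q i)) - ∑ i, R i (φ i (q i)) =
        linPart (R j) (linPart (φ j) (h j (q j) - q j)) := by
  classical
  have hstep (i) {a} (ha : a ∈ coneSelfMaps E (K i) κ) :=
    exists_mem_scaledSelfMaps_apply_eq (hξ i) hκ (hf i) (hf1 i) (hq i) (hw i) ha hρ (hφ i)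
  choose ψ hψ hψq using fun i ↦ hstep i (hf i)
  obtain ⟨χ, hχ, hχq⟩ := hstep j (hh j)
  refine ⟨Function.update ψ j χ, fun i ↦ ?_, ?_⟩
  · rcases eq_or_ne i j with rfl | hi
    · simpa using hχ
    · simpa [hi] using hψ i
  · rw [← Finset.sum_sub_distrib, Finset.sum_eq_single j]
    · rw [Function.update_self, hχq, map_sub_map, map_sub_map]
    · intro i _ hi
      rw [Function.update_of_ne hi, hψq, hq, sub_self]
    · simp

end ConeGame

/- Each player `j` moves inside the cone `K j` and is seen through the chart `R j`: composing with
`f j` leaves the player at the image of the fixed point `q j`, composing with `h j` shifts it. -/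
theorem arithmeticallyThick_of_cones (hE : IsCompact E) {J : Type*} [Finite J] [Nonempty J]
    {K : J → ConvexCone ℝ (𝔼 d)} {ξ : J → 𝔼 d →L[ℝ] ℝ} {κ : ℝ} (hκ : 0 < κ) (hκ1 : κ < 1)
    {f h : J → 𝔼 d →ᵃ[ℝ] 𝔼 d} (hf : ∀ j, f j ∈ coneSelfMaps E (K j) κ)
    (hf1 : ∀ j, ‖linPart (f j)‖ < 1) (hh : ∀ j, h j ∈ coneSelfMaps E (K j) κ)
    {q : J → 𝔼 d} (hqE : ∀ j, q j ∈ E) (hq : ∀ j, f j (q j) = q j)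
    (hw : ∀ j, h j (q j) - q j ∈ K j ∧ 0 < ξ j (h j (q j) - q j))
    {R : J → 𝔼 d →ᵃ[ℝ] 𝔼 d} (hR : ∀ j, R j ∈ selfMaps E) {M : ℝ} (hM : 0 < M)
    (hKM : ∀ j, ∀ v ∈ K j, ‖linPart (R j) v‖ ≤ M * ξ j v) {c : ℝ} (hc : 0 < c)
    (hspread : ∀ u, ∃ j, ∀ v ∈ K j, c * ξ j v * ‖u‖ ≤ ⟪linPart (R j) v, u⟫) :
    ArithmeticallyThick E := by
  cases nonempty_fintype J
  have hξ (j) : ∀ v ∈ K j, 0 ≤ ξ j v := fun v hv ↦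
    nonneg_of_mul_nonneg_right ((norm_nonneg _).trans (hKM j v hv)) hM
  set w : J → 𝔼 d := fun j ↦ h j (q j) - q j
  obtain ⟨j₀, hj₀⟩ := Finite.exists_min fun j ↦ ξ j (w j)
  set ρ := ξ j₀ (w j₀)
  have hρ : 0 < ρ := (hw j₀).2
  refine arithmeticallyThick_of_steering_const hE hκ hκ1 (m := Fintype.card J) Fintype.card_pos
    (P := fun k ↦ {φ : J → 𝔼 d →ᵃ[ℝ] 𝔼 d |
      ∀ j, φ j ∈ scaledSelfMaps E (K j) (ξ j) (w j) κ (κ ^ k * ρ)})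
    (x := fun φ ↦ ∑ j, R j (φ j (q j))) (c := c * κ * ρ) (C := M * ρ) ?_
    (fun k φ hφ ↦ sum_mem_nfoldSum fun j ↦ hR j ((hφ j).1 (hqE j))) (by positivity) ?_
  · have hinit (j) : ∃ φ ∈ scaledSelfMaps E (K j) (ξ j) (w j) κ (κ ^ 0 * ρ), φ (q j) = q j :=
      exists_mem_scaledSelfMaps (hξ j) hκ (hf j) (hf1 j) (hq j) (hw j).1 (φ := 1) (one_mem _)
        (by simpa using mapsTo_id _) (by simpa using hρ)
        (by simpa using (mul_le_of_le_one_left hρ.le hκ1.le).trans (hj₀ j))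
    choose φ hφ _ using hinit
    exact ⟨φ, hφ⟩
  · intro k φ hφ u
    obtain ⟨j, hj⟩ := hspread u
    obtain ⟨ψ, hψ, hdisp⟩ := exists_mem_scaledSelfMaps_sum_sub_sum_eq hξ hκ hf hf1 hh hq
      (fun i ↦ (hw i).1) R (by positivity : 0 < κ ^ k * ρ) hφ j
    have hzK : linPart (φ j) (w j) ∈ K j := (hφ j).2.1 (hw j).1
    refine ⟨ψ, fun i ↦ ?_, ?_, ?_⟩
    · rw [pow_succ', mul_assoc]
      exact hψ i
    · rw [hdisp]
      calc ‖linPart (R j) (linPart (φ j) (w j))‖ ≤ M * ξ j (linPart (φ j) (w j)) := hKM j _ hzK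
        _ ≤ M * (κ ^ k * ρ) := by
          gcongr
          exact (hφ j).2.2.2
        _ = _ := by ring
    · rw [hdisp]
      calc c * κ * ρ * κ ^ k * ‖u‖ = c * (κ * (κ ^ k * ρ)) * ‖u‖ := by ring
        _ ≤ c * ξ j (linPart (φ j) (w j)) * ‖u‖ := by
          gcongr
          exact (hφ j).2.2.1
        _ ≤ _ := hj _ hzK

section Proximal

variable {V : Type*} [NormedAddCommGroup V] [NormedSpace ℝ V] {A : V →L[ℝ] V} {α : ℝ}
  {ξ : V →L[ℝ] ℝ} {e : V}

/-- `A` is proximal with leading eigenvalue `α`, which is positive and strictly dominates the rest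
of the spectrum, and eigenprojection `v ↦ ξ v • e`. -/
structure IsProximal (A : V →L[ℝ] V) (α : ℝ) (ξ : V →L[ℝ] ℝ) (e : V) : Prop where
  pos : 0 < α
  apply_eq_one : ξ e = 1
  tendsto : Tendsto (fun m : ℕ ↦ (α ^ m)⁻¹ • A ^ m) atTop (𝓝 (ξ.smulRight e))

lemma IsProximal.neg (h : IsProximal A α ξ e) : IsProximal A α (-ξ) (-e) where
  pos := h.pos
  apply_eq_one := by simpa using h.apply_eq_one
  tendsto := by
    have hneg : (-ξ).smulRight (-e) = ξ.smulRight e := by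
      ext
      simp
    exact hneg ▸ h.tendsto

lemma IsProximal.apply_eq (h : IsProximal A α ξ e) : A e = α • e := by
  have hlim : Tendsto (fun m : ℕ ↦ ((α ^ m)⁻¹ • A ^ m) e) atTop (𝓝 e) := by
    simpa [h.apply_eq_one] using tendsto_clm_apply h.tendsto (tendsto_const_nhds (x := e))
  have hshift (m : ℕ) : α • ((α ^ (m + 1))⁻¹ • A ^ (m + 1)) e = A (((α ^ m)⁻¹ • A ^ m) e) := by
    rw [smul_apply, smul_smul, pow_succ', mul_inv, mul_inv_cancel_left₀ h.pos.ne', pow_succ',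
      mul_apply_eq_comp, smul_apply, map_smul]
  refine tendsto_nhds_unique ((A.continuous.tendsto e).comp hlim) ?_
  exact ((hlim.comp (tendsto_add_atTop_nat 1)).const_smul α).congr hshift

lemma IsProximal.lt_one (h : IsProximal A α ξ e) (hA : ‖A‖ < 1) : α < 1 := by
  have he : 0 < ‖e‖ := norm_pos_iff.2 fun he ↦ by simpa [he] using h.apply_eq_one
  have hle := A.le_opNorm e
  rw [h.apply_eq, norm_smul, Real.norm_of_nonneg h.pos.le] at hle
  exact (le_of_mul_le_mul_right hle he).trans_lt hA

lemma IsProximal.tendsto_conj (h : IsProximal A α ξ e) (U : V →L[ℝ] V) :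
    Tendsto (fun m : ℕ ↦ ((α ^ m) ^ 2)⁻¹ • (A ^ m * U * A ^ m)) atTop
      (𝓝 (ξ (U e) • ξ.smulRight e)) := by
  have hlim : ξ.smulRight e * U * ξ.smulRight e = ξ (U e) • ξ.smulRight e := by
    ext v
    simp [smul_smul, mul_comm]
  rw [← hlim]
  refine ((h.tendsto.mul_const U).mul h.tendsto).congr fun m ↦ ?_
  simp only [smul_mul_assoc, mul_smul_comm, smul_smul]
  ring_nf

variable [FiniteDimensional ℝ V] {E : Set V} {f T : V →ᵃ[ℝ] V} {ε : ℝ} {p : V}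

lemma eventually_norm_linPart_conj_lt_one (hf : ‖linPart f‖ < 1) (T : V →ᵃ[ℝ] V) :
    ∀ᶠ m in atTop, ‖linPart (f ^ m * T * f ^ m)‖ < 1 := by
  have hpow := tendsto_pow_atTop_nhds_zero_of_norm_lt_one hf
  have hlim : Tendsto (fun m ↦ ‖linPart (f ^ m * T * f ^ m)‖) atTop (𝓝 0) := by
    simpa using ((hpow.mul_const (linPart T)).mul hpow).norm
  exact hlim.eventually_lt_const one_pos

lemma IsProximal.eventually_mem_coneSelfMaps (h : IsProximal (linPart f) α ξ e)
    (hf : f ∈ selfMaps E) (hT : T ∈ selfMaps E) (hε : 0 < ε) {κ : ℝ} (hκ : 0 ≤ κ)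
    (hκT : 2 * κ < ξ (linPart T e)) :
    ∀ᶠ m in atTop, f ^ m * T * f ^ m ∈ coneSelfMaps E (narrowCone ξ e ε) ((α ^ m) ^ 2 * κ) := by
  filter_upwards [eventually_sub_smul_mem_narrowCone hε h.apply_eq_one hκ hκT
    (h.tendsto_conj (linPart T))] with m hm
  refine ⟨mul_mem (mul_mem (pow_mem hf m) hT) (pow_mem hf m), fun v hv ↦ ?_⟩
  have hα : 0 < (α ^ m) ^ 2 := pow_pos (pow_pos h.pos m) 2
  have hmem := (narrowCone ξ e ε).smul_mem hα (hm v hv)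
  rwa [smul_sub, smul_apply, smul_inv_smul₀ hα.ne', smul_smul, ← map_pow, ← map_mul, ← map_mul]
    at hmem

lemma IsProximal.tendsto_conj_fixedPoint_sub (h : IsProximal (linPart f) α ξ e)
    (hf : ‖linPart f‖ < 1) (hp : f p = p) (T : V →ᵃ[ℝ] V) {z : ℕ → V} {C : ℝ}
    (hzC : ∀ᶠ m in atTop, ‖z m - p‖ ≤ C)
    (hz : ∀ᶠ m in atTop, (f ^ m * T * f ^ m) (z m) = z m) :
    Tendsto (fun m ↦ (α ^ m)⁻¹ • (z m - p)) atTop (𝓝 (ξ (T p - p) • e)) := by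
  have hinner : Tendsto (fun m ↦ (f ^ m) (z m)) atTop (𝓝 p) := by
    rw [← tendsto_sub_nhds_zero_iff]
    have hbound : Tendsto (fun m ↦ ‖linPart f ^ m‖ * C) atTop (𝓝 0) := by
      simpa using (tendsto_pow_atTop_nhds_zero_of_norm_lt_one hf).norm.mul_const C
    refine squeeze_zero_norm' (hzC.mono fun m hm ↦ ?_) hbound
    rw [pow_apply_sub hp]
    exact (linPart f ^ m).le_opNorm_of_le hm
  refine (tendsto_clm_apply h.tendsto
    (((T.continuous_of_finiteDimensional.tendsto p).comp hinner).sub_const p)).congr' ?_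
  filter_upwards [hz] with m hm
  rw [smul_apply, ← pow_apply_sub hp]
  exact congrArg (fun y ↦ (α ^ m)⁻¹ • (y - p)) hm

lemma IsProximal.eventually_conj_fixedPoint_sub_mem (h : IsProximal (linPart f) α ξ e)
    (hp : f p = p) (hTp : 0 < ξ (T p - p)) (hε : 0 < ε) :
    ∀ᶠ m in atTop, (f ^ m * T * f ^ m) p - p ∈ narrowCone ξ e ε ∧
      0 < ξ ((f ^ m * T * f ^ m) p - p) := by
  refine eventually_mem_narrowCone hε h.apply_eq_one hTp (fun m ↦ pow_pos h.pos m) ?_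
  refine (tendsto_clm_apply h.tendsto (tendsto_const_nhds (x := T p - p))).congr fun m ↦ ?_
  have hfp : (f ^ m) p = p := by
    simpa [sub_eq_zero] using pow_apply_sub hp m p
  rw [smul_apply, ← pow_apply_sub hp, AffineMap.coe_mul, AffineMap.coe_mul, Function.comp_apply,
    Function.comp_apply, hfp]

lemma IsProximal.eventually_sub_conj_fixedPoint_mem (h : IsProximal (linPart f) α ξ e)
    (hf : ‖linPart f‖ < 1) (hp : f p = p) (hTp : 0 < ξ (T p - p)) (hε : 0 < ε) {z : ℕ → V} {C : ℝ}
    (hzC : ∀ᶠ m in atTop, ‖z m - p‖ ≤ C)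
    (hz : ∀ᶠ m in atTop, (f ^ m * T * f ^ m) (z m) = z m) :
    ∀ᶠ m in atTop, (f ^ m * 1 * f ^ m) (z m) - z m ∈ narrowCone (-ξ) (-e) ε ∧
      0 < (-ξ) ((f ^ m * 1 * f ^ m) (z m) - z m) := by
  refine eventually_mem_narrowCone hε h.neg.apply_eq_one hTp (fun m ↦ pow_pos h.pos m) ?_
  have hpow := tendsto_pow_atTop_nhds_zero_of_norm_lt_one hf
  have hlim := h.tendsto_conj_fixedPoint_sub hf hp T hzC hz
  have hsub := (tendsto_clm_apply (hpow.mul hpow) hlim).sub hlim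
  rw [mul_zero, zero_apply, zero_sub, ← smul_neg] at hsub
  refine hsub.congr fun m ↦ ?_
  have hpp : (f ^ m * 1 * f ^ m) (z m) - p = (linPart f ^ m * linPart f ^ m) (z m - p) := by
    rw [mul_one, AffineMap.coe_mul, Function.comp_apply, pow_apply_sub hp, pow_apply_sub hp,
      mul_apply_eq_comp]
  rw [map_smul, ← hpp, ← smul_sub, sub_sub_sub_cancel_right]

lemma exists_fixedPoint_conj_mem (hE : IsClosed E) (hne : E.Nonempty) (hf : f ∈ selfMaps E)
    (hf1 : ‖linPart f‖ < 1) (hT : T ∈ selfMaps E) :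
    ∃ z : ℕ → V, ∀ᶠ m in atTop, z m ∈ E ∧ (f ^ m * T * f ^ m) (z m) = z m := by
  have hfixed (m) :
      ∃ z, ‖linPart (f ^ m * T * f ^ m)‖ < 1 → (f ^ m * T * f ^ m) z = z := by
    by_cases h : ‖linPart (f ^ m * T * f ^ m)‖ < 1
    · exact (exists_fixedPoint h).imp fun _ hz _ ↦ hz
    · exact ⟨0, fun h' ↦ absurd h' h⟩
  choose z hz using hfixed
  refine ⟨z, (eventually_norm_linPart_conj_lt_one hf1 T).mono fun m hm ↦ ⟨?_, hz m hm⟩⟩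
  exact fixedPoint_mem hE hne (mul_mem (mul_mem (pow_mem hf m) hT) (pow_mem hf m)) hm (hz m hm)

end Proximal

section Spreading

variable {H : Type*} [NormedAddCommGroup H] [InnerProductSpace ℝ H] {ξ : H →L[ℝ] ℝ} {e : H}

lemma le_inner_of_mem_narrowCone {ε c : ℝ} (hε : 0 < ε) {L : H →L[ℝ] H} (hL : ‖L‖ * ε ≤ c) {u v : H}
    (hu : 2 * c * ‖u‖ ≤ ⟪L e, u⟫) (hv : v ∈ narrowCone ξ e ε) : c * ξ v * ‖u‖ ≤ ⟪L v, u⟫ := by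
  have hξv := nonneg_of_mem_narrowCone hε hv
  have hsub : ⟪ξ v • L e - L v, u⟫ ≤ c * ξ v * ‖u‖ := by
    refine (real_inner_le_norm _ _).trans ?_
    rw [norm_sub_rev]
    gcongr
    exact (norm_map_sub_le_of_mem_narrowCone L hv).trans (by gcongr)
  have hmain : ξ v * (2 * c * ‖u‖) ≤ ξ v * ⟪L e, u⟫ := by gcongr
  rw [inner_sub_left, real_inner_smul_left] at hsub
  linarith

lemma exists_narrowCone_le_inner [FiniteDimensional ℝ H] {ι : Type*} [Finite ι] [Nonempty ι]
    {L : ι → H →L[ℝ] H} (hspan : Submodule.span ℝ (range fun i ↦ L i e) = ⊤) (ξ : H →L[ℝ] ℝ) :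
    ∃ ε > 0, ∃ c > 0, ∀ u, ∃ i, (∀ v ∈ narrowCone ξ e ε, c * ξ v * ‖u‖ ≤ ⟪L i v, u⟫) ∨
      ∀ v ∈ narrowCone (-ξ) (-e) ε, c * (-ξ) v * ‖u‖ ≤ ⟪L i v, u⟫ := by
  obtain ⟨c, hc, hspan⟩ := exists_le_abs_inner_of_span_eq_top hspan
  obtain ⟨i₀, hi₀⟩ := Finite.exists_max fun i ↦ ‖L i‖
  set ε := c / 2 / (‖L i₀‖ + 1)
  have hε : 0 < ε := by positivity
  have hLε (i) : ‖L i‖ * ε ≤ c / 2 :=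
    calc ‖L i‖ * ε ≤ (‖L i₀‖ + 1) * ε := by
          gcongr
          linarith [hi₀ i]
      _ = c / 2 := mul_div_cancel₀ _ (by positivity)
  refine ⟨ε, hε, c / 2, by positivity, fun u ↦ ?_⟩
  obtain ⟨i, hi⟩ := hspan u
  rw [← mul_div_cancel₀ c two_ne_zero] at hi
  refine ⟨i, (le_abs.1 hi).imp (fun h v ↦ ?_) fun h v ↦ ?_⟩
  · exact le_inner_of_mem_narrowCone hε (hLε i) h
  · exact le_inner_of_mem_narrowCone hε (hLε i) (by rwa [map_neg, inner_neg_left])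

end Spreading

section ProximalSystems

variable {a b f T : 𝔼 d →ᵃ[ℝ] 𝔼 d} {α : ℝ} {ξ : 𝔼 d →L[ℝ] ℝ} {e p q : 𝔼 d} {ι : Type*}
  [Finite ι] {R : ι → 𝔼 d →ᵃ[ℝ] 𝔼 d}

/- One set of players starts at `p` and moves by `b` along `e`, the other one starts at `q` and
moves by `a` along `-e`; the charts `R i` turn these displacements into a positively spanning
family. -/
lemma arithmeticallyThick_of_opposite_cones (hE : IsCompact E) {ε κ : ℝ} (hε : 0 < ε) (hκ : 0 < κ)
    (hκ1 : κ < 1) (ha : a ∈ coneSelfMaps E (narrowCone ξ e ε) κ) (ha1 : ‖linPart a‖ < 1)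
    (hb : b ∈ coneSelfMaps E (narrowCone ξ e ε) κ) (hb1 : ‖linPart b‖ < 1) (hpE : p ∈ E)
    (hp : a p = p) (hqE : q ∈ E) (hq : b q = q)
    (hbp : b p - p ∈ narrowCone ξ e ε ∧ 0 < ξ (b p - p))
    (haq : a q - q ∈ narrowCone (-ξ) (-e) ε ∧ 0 < (-ξ) (a q - q)) (hR : ∀ i, R i ∈ selfMaps E)
    {c : ℝ} (hc : 0 < c)
    (hspread : ∀ u, ∃ i, (∀ v ∈ narrowCone ξ e ε, c * ξ v * ‖u‖ ≤ ⟪linPart (R i) v, u⟫) ∨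
      ∀ v ∈ narrowCone (-ξ) (-e) ε, c * (-ξ) v * ‖u‖ ≤ ⟪linPart (R i) v, u⟫) :
    ArithmeticallyThick E := by
  have : Nonempty ι := ⟨(hspread 0).choose⟩
  have ha' : a ∈ coneSelfMaps E (narrowCone (-ξ) (-e) ε) κ := by rwa [coneSelfMaps_narrowCone_neg]
  have hb' : b ∈ coneSelfMaps E (narrowCone (-ξ) (-e) ε) κ := by rwa [coneSelfMaps_narrowCone_neg]
  obtain ⟨i₀, hi₀⟩ := Finite.exists_max fun i ↦ ‖linPart (R i)‖
  set M := (‖linPart (R i₀)‖ + 1) * (‖e‖ + ε)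
  have hM (i) : ‖linPart (R i)‖ * (‖e‖ + ε) ≤ M :=
    mul_le_mul_of_nonneg_right (by linarith [hi₀ i]) (by positivity)
  have hbound {ζ : 𝔼 d →L[ℝ] ℝ} {x v : 𝔼 d} (hx : ‖x‖ = ‖e‖) (hv : v ∈ narrowCone ζ x ε) (i) :
      ‖linPart (R i) v‖ ≤ M * ζ v := by
    refine (norm_map_le_of_mem_narrowCone (linPart (R i)) hε hv).trans ?_
    rw [hx]
    exact mul_le_mul_of_nonneg_right (hM i) (nonneg_of_mem_narrowCone hε hv)
  refine arithmeticallyThick_of_cones hE (J := ι ⊕ ι) hκ hκ1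
    (K := Sum.elim (fun _ ↦ narrowCone ξ e ε) fun _ ↦ narrowCone (-ξ) (-e) ε)
    (ξ := Sum.elim (fun _ ↦ ξ) fun _ ↦ -ξ) (f := Sum.elim (fun _ ↦ a) fun _ ↦ b)
    (h := Sum.elim (fun _ ↦ b) fun _ ↦ a) (q := Sum.elim (fun _ ↦ p) fun _ ↦ q) (R := Sum.elim R R)
    (Sum.forall.2 ⟨fun _ ↦ ha, fun _ ↦ hb'⟩)
    (Sum.forall.2 ⟨fun _ ↦ ha1, fun _ ↦ hb1⟩)
    (Sum.forall.2 ⟨fun _ ↦ hb, fun _ ↦ ha'⟩)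
    (Sum.forall.2 ⟨fun _ ↦ hpE, fun _ ↦ hqE⟩) (Sum.forall.2 ⟨fun _ ↦ hp, fun _ ↦ hq⟩)
    (Sum.forall.2 ⟨fun _ ↦ hbp, fun _ ↦ haq⟩) (Sum.forall.2 ⟨hR, hR⟩) (M := M) (by positivity)
    (Sum.forall.2 ⟨fun i v hv ↦ hbound rfl hv i, fun i v hv ↦ hbound (norm_neg e) hv i⟩) hc
    fun u ↦ ?_
  obtain ⟨i, hi | hi⟩ := hspread u
  exacts [⟨.inl i, hi⟩, ⟨.inr i, hi⟩]

lemma arithmeticallyThick_of_proximal_of_shift [Nonempty ι] (hE : IsCompact E) (hpE : p ∈ E)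
    (hf : f ∈ selfMaps E) (hf1 : ‖linPart f‖ < 1) (hp : f p = p)
    (hprox : IsProximal (linPart f) α ξ e) (hT : T ∈ selfMaps E) (hTe : 0 < ξ (linPart T e))
    (hTp : 0 < ξ (T p - p)) (hR : ∀ i, R i ∈ selfMaps E)
    (hspan : Submodule.span ℝ (range fun i ↦ linPart (R i) e) = ⊤) : ArithmeticallyThick E := by
  obtain ⟨ε, hε, c, hc, hspread⟩ := exists_narrowCone_le_inner hspan ξ
  obtain ⟨z, hz⟩ := exists_fixedPoint_conj_mem hE.isClosed ⟨p, hpE⟩ hf hf1 hT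
  obtain ⟨C, hC⟩ := isBounded_iff.1 hE.isBounded
  have hzC : ∀ᶠ m in atTop, ‖z m - p‖ ≤ C := hz.mono fun m hm ↦
    (dist_eq_norm (z m) p).symm.trans_le (hC hm.1 hpE)
  obtain ⟨κ, hκ, hκ1, hκT⟩ : ∃ κ > 0, 2 * κ < ξ (linPart 1 e) ∧ 2 * κ < ξ (linPart T e) := by
    refine ⟨min 1 (ξ (linPart T e)) / 4, by positivity, ?_, ?_⟩
    · simp only [map_one, one_apply_eq_self, hprox.apply_eq_one]
      linarith [min_le_left 1 (ξ (linPart T e))]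
    · linarith [min_le_right 1 (ξ (linPart T e))]
  obtain ⟨m, ⟨hzE, hzm⟩, h1, hT1, h1K, hTK, hTp, h1z⟩ := (hz.and <|
    (eventually_norm_linPart_conj_lt_one hf1 1).and <|
    (eventually_norm_linPart_conj_lt_one hf1 T).and <|
    (hprox.eventually_mem_coneSelfMaps hf (one_mem _) hε hκ.le hκ1).and <|
    (hprox.eventually_mem_coneSelfMaps hf hT hε hκ.le hκT).and <|
    (hprox.eventually_conj_fixedPoint_sub_mem hp hTp hε).and <|
    hprox.eventually_sub_conj_fixedPoint_mem hf1 hp hTp hε hzC (hz.mono fun _ ↦ And.right)).exists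
  have hαm : 0 < α ^ m := pow_pos hprox.pos m
  have hκm : (α ^ m) ^ 2 * κ < 1 := by
    have hαm1 : (α ^ m) ^ 2 ≤ 1 :=
      pow_le_one₀ hαm.le (pow_le_one₀ hprox.pos.le (hprox.lt_one hf1).le)
    simp only [map_one, one_apply_eq_self, hprox.apply_eq_one] at hκ1
    nlinarith
  have hfp : (f ^ m * 1 * f ^ m) p = p := by
    simpa [sub_eq_zero, ← pow_add] using pow_apply_sub hp (m + m) p
  exact arithmeticallyThick_of_opposite_cones hE hε (by positivity) hκm h1K h1 hTK hT1 hpE hfp hzE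
    hzm hTp h1z hR hc hspread

lemma exists_mem_selfMaps_apply_ne (hR : ∀ i, R i ∈ selfMaps E)
    (hspan : Submodule.span ℝ (range fun i ↦ linPart (R i) e) = ⊤) (hξ : ξ ≠ 0)
    {g : 𝔼 d →ᵃ[ℝ] 𝔼 d} (hg : g ∈ contractingSelfMaps E) {z : 𝔼 d} (hz : g z = z)
    (hξz : ξ z ≠ ξ p) : ∃ T ∈ selfMaps E, ξ (linPart T e) ≠ 0 ∧ ξ (T p - p) ≠ 0 := by
  have hlim (i) : Tendsto (fun n ↦ ξ ((g ^ n) (R i p) - p)) atTop (𝓝 (ξ (z - p))) :=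
    (ξ.continuous.tendsto _).comp <|
      (tendsto_pow_apply hg.2.2 hz tendsto_id tendsto_const_nhds).sub_const p
  have hzp : ξ (z - p) ≠ 0 := by rwa [map_sub, sub_ne_zero]
  obtain ⟨n, hn⟩ := (eventually_all.2 fun i ↦ (hlim i).eventually_ne hzp).exists
  by_contra! hT
  have hgn : (g ^ n) ∈ selfMaps E := pow_mem hg.1 n
  have hvanish (i) : (ξ ∘L linPart (g ^ n)).toLinearMap (linPart (R i) e) =
      (0 : 𝔼 d →ₗ[ℝ] ℝ) (linPart (R i) e) := by
    by_contra h
    refine hn i (hT (g ^ n * R i) (mul_mem hgn (hR i)) ?_)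
    rwa [map_mul, mul_apply_eq_comp]
  have hzero := LinearMap.ext_on_range hspan hvanish
  obtain ⟨B, hB⟩ := (map_pow linPart g n ▸ hg.2.1.pow n).exists_right_inv
  refine hξ (ContinuousLinearMap.ext fun v ↦ ?_)
  have hBv : linPart (g ^ n) (B v) = v := DFunLike.congr_fun hB v
  rw [← hBv]
  exact DFunLike.congr_fun hzero (B v)

lemma IsProximal.exists_mem_selfMaps_apply_pos (hprox : IsProximal (linPart f) α ξ e)
    (hf : f ∈ selfMaps E) (hf1 : ‖linPart f‖ < 1) (hp : f p = p) (hT : T ∈ selfMaps E)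
    (hTe : ξ (linPart T e) ≠ 0) (hTp : ξ (T p - p) ≠ 0) :
    ∃ S ∈ selfMaps E, 0 < ξ (linPart S e) ∧ ξ (S p - p) ≠ 0 := by
  have hlin : Tendsto (fun m ↦ (α ^ m)⁻¹ * ξ (linPart (T * f ^ m * T) e)) atTop
      (𝓝 (ξ (linPart T e) ^ 2)) := by
    have h := ((ξ ∘L linPart T).continuous.tendsto _).comp
      (tendsto_clm_apply hprox.tendsto (tendsto_const_nhds (x := linPart T e)))
    simpa only [Function.comp_def, smul_apply, map_smul, ContinuousLinearMap.smulRight_apply,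
      ContinuousLinearMap.comp_apply, smul_eq_mul, map_mul, map_pow, mul_apply_eq_comp,
      ← sq] using h
  have hshift : Tendsto (fun m ↦ ξ ((T * f ^ m * T) p - p)) atTop (𝓝 (ξ (T p - p))) :=
    (ξ.continuous.tendsto _).comp <|
      ((T.continuous_of_finiteDimensional.tendsto p).comp <|
        tendsto_pow_apply hf1 hp tendsto_id tendsto_const_nhds).sub_const p
  obtain ⟨m, hm, hm'⟩ :=
    ((hlin.eventually_const_lt (by positivity)).and (hshift.eventually_ne hTp)).exists
  exact ⟨T * f ^ m * T, mul_mem (mul_mem hT (pow_mem hf m)) hT,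
    (mul_pos_iff_of_pos_left (inv_pos.2 (pow_pos hprox.pos m))).1 hm, hm'⟩

theorem arithmeticallyThick_of_proximal [Nonempty ι] (hE : IsCompact E) (hpE : p ∈ E)
    (hf : f ∈ selfMaps E) (hf1 : ‖linPart f‖ < 1) (hp : f p = p)
    (hprox : IsProximal (linPart f) α ξ e) (hR : ∀ i, R i ∈ selfMaps E)
    (hspan : Submodule.span ℝ (range fun i ↦ linPart (R i) e) = ⊤)
    {g : 𝔼 d →ᵃ[ℝ] 𝔼 d} (hg : g ∈ contractingSelfMaps E) {z : 𝔼 d} (hz : g z = z)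
    (hξz : ξ z ≠ ξ p) : ArithmeticallyThick E := by
  have hξ : ξ ≠ 0 := fun h ↦ by simpa [h] using hprox.apply_eq_one
  obtain ⟨T, hT, hTe, hTp⟩ := exists_mem_selfMaps_apply_ne hR hspan hξ hg hz hξz
  obtain ⟨S, hS, hSe, hSp⟩ := hprox.exists_mem_selfMaps_apply_pos hf hf1 hp hT hTe hTp
  rcases hSp.lt_or_gt with hneg | hpos
  · have hspan' : Submodule.span ℝ (range fun i ↦ linPart (R i) (-e)) = ⊤ := by
      simp only [map_neg]
      rwa [← Submodule.span_neg, neg_range'] at hspan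
    exact arithmeticallyThick_of_proximal_of_shift hE hpE hf hf1 hp hprox.neg hS
      (by simpa using hSe) (neg_pos.2 hneg) hR hspan'
  · exact arithmeticallyThick_of_proximal_of_shift hE hpE hf hf1 hp hprox hS hSe hpos hR hspan

end ProximalSystems

section Plane

open Module

lemma isProximal_of_basis {V ι : Type*} [NormedAddCommGroup V] [NormedSpace ℝ V] [Finite ι]
    (b : Basis ι ℝ V) {A : V →L[ℝ] V} {a : ι → ℝ} (hA : ∀ i, A (b i) = a i • b i) {i₀ : ι}
    (h0 : 0 < a i₀) (hlt : ∀ i ≠ i₀, |a i| < a i₀) :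
    ∃ ξ, IsProximal A (a i₀) ξ (b i₀) := by
  classical
  cases nonempty_fintype ι
  have := b.finiteDimensional_of_finite
  let ξ (i : ι) : V →L[ℝ] ℝ := (b.coord i).toContinuousLinearMap
  have hpow (m : ℕ) (i : ι) : (A ^ m) (b i) = a i ^ m • b i := by
    induction m with
    | zero => simp
    | succ m ih => rw [pow_succ, mul_apply_eq_comp, hA, map_smul, ih, smul_smul, pow_succ']
  have hsum (m : ℕ) :
      (a i₀ ^ m)⁻¹ • A ^ m = ∑ i, (a i / a i₀) ^ m • (ξ i).smulRight (b i) := by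
    refine ContinuousLinearMap.coe_injective (b.ext fun j ↦ ?_)
    simp only [ContinuousLinearMap.coe_coe, smul_apply, hpow, sum_apply,
      ContinuousLinearMap.smulRight_apply, ξ, LinearMap.coe_toContinuousLinearMap', b.coord_apply,
      b.repr_self, Finsupp.single_apply]
    simp [smul_smul, div_eq_inv_mul, mul_pow]
  have hterm (i : ι) : Tendsto (fun m : ℕ ↦ (a i / a i₀) ^ m • (ξ i).smulRight (b i)) atTop
      (𝓝 (if i = i₀ then (ξ i).smulRight (b i) else 0)) := by
    obtain rfl | hi := eq_or_ne i i₀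
    · simp [h0.ne']
    · rw [if_neg hi, ← zero_smul ℝ ((ξ i).smulRight (b i))]
      refine (tendsto_pow_atTop_nhds_zero_of_abs_lt_one ?_).smul_const _
      rw [abs_div, abs_of_pos h0]
      exact (div_lt_one h0).2 (hlt i hi)
  refine ⟨ξ i₀, h0, by simp [ξ], ?_⟩
  simp only [hsum]
  simpa using tendsto_finsetSum Finset.univ fun i _ ↦ hterm i

lemma exists_apply_ne_of_affineIndependent {V ι : Type*} [AddCommGroup V] [Module ℝ V]
    [FiniteDimensional ℝ V] [Fintype ι] {p : ι → V} (hp : AffineIndependent ℝ p)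
    (hcard : Fintype.card ι = finrank ℝ V + 1) {ξ : V →ₗ[ℝ] ℝ} (hξ : ξ ≠ 0) (c : ℝ) :
    ∃ i, ξ (p i) ≠ c := by
  by_contra! h
  have htop : vectorSpan ℝ (range p) = ⊤ := hp.vectorSpan_eq_top_of_card_eq_finrank_add_one hcard
  have hker : vectorSpan ℝ (range p) ≤ LinearMap.ker ξ := by
    refine Submodule.span_le.2 ?_
    rintro _ ⟨_, ⟨i, rfl⟩, _, ⟨j, rfl⟩, rfl⟩
    simp [h]
  rw [htop, top_le_iff, LinearMap.ker_eq_top] at hker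
  exact hξ hker

variable {V : Type*} [NormedAddCommGroup V] [NormedSpace ℝ V] {A : V →L[ℝ] V} {x y e : V}

lemma exists_basis_of_finrank_eq_two (hV : finrank ℝ V = 2) (hx : x ≠ 0) (hy : ∀ r : ℝ, y ≠ r • x) :
    ∃ b : Basis (Fin 2) ℝ V, b 0 = x ∧ b 1 = y := by
  have hli : LinearIndependent ℝ ![x, y] :=
    (LinearIndependent.pair_iff' hx).2 fun r ↦ (hy r).symm
  refine ⟨basisOfLinearIndependentOfCardEqFinrank hli (by simp [hV]), ?_, ?_⟩ <;> simp

lemma exists_basis_zero_eq (hV : finrank ℝ V = 2) (hx : x ≠ 0) :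
    ∃ b : Basis (Fin 2) ℝ V, b 0 = x := by
  obtain ⟨y, hy⟩ : ∃ y, ∀ r : ℝ, y ≠ r • x := by
    by_contra! h
    have := (finrank_eq_one_iff_of_nonzero' x hx).2 fun y ↦ (h y).imp fun r hr ↦ hr.symm
    lia
  exact (exists_basis_of_finrank_eq_two hV hx hy).imp fun b hb ↦ hb.1

/-- `e` spans the eigenline of the planar map `A` for an eigenvalue that is strictly larger in
absolute value than the other one. -/
def IsDominantEigenvector (A : V →L[ℝ] V) (e : V) : Prop :=
  ∃ α β : ℝ, |β| < |α| ∧ A e = α • e ∧ ∃ e', A e' = β • e' ∧ LinearIndependent ℝ ![e, e']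

lemma IsDominantEigenvector.ne_zero (h : IsDominantEigenvector A e) : e ≠ 0 := by
  obtain ⟨_, _, _, _, _, _, hli⟩ := h
  exact hli.ne_zero 0

lemma IsDominantEigenvector.exists_isProximal_sq (hV : finrank ℝ V = 2)
    (h : IsDominantEigenvector A e) : ∃ α ξ, IsProximal (A ^ 2) α ξ e := by
  obtain ⟨α, β, hlt, he, e', he', hli⟩ := h
  let b := basisOfLinearIndependentOfCardEqFinrank hli (by simp [hV])
  have hα : 0 < α ^ 2 := by
    have := (abs_nonneg β).trans_lt hlt
    exact sq_pos_of_ne_zero (abs_pos.1 this)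
  obtain ⟨ξ, hξ⟩ := isProximal_of_basis b (A := A ^ 2) (a := ![α ^ 2, β ^ 2]) (i₀ := 0)
    (by simp [b, Fin.forall_fin_two, pow_two, he, he', smul_smul])
    hα (by simpa [Fin.forall_fin_two] using sq_lt_sq.2 hlt)
  exact ⟨α ^ 2, ξ, by simpa [b] using hξ⟩

theorem arithmeticallyThick_of_isDominantEigenvector {E : Set (𝔼 2)} (hE : IsCompact E)
    (hne : E.Nonempty) {p : Fin 3 → 𝔼 2} (hp : AffineIndependent ℝ p)
    {f : Fin 3 → 𝔼 2 →ᵃ[ℝ] 𝔼 2} (hf : ∀ h, f h ∈ contractingSelfMaps E)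
    (hfp : ∀ h, f h (p h) = p h) {F G : 𝔼 2 →ᵃ[ℝ] 𝔼 2} (hF : F ∈ contractingSelfMaps E)
    (hG : G ∈ selfMaps E) {e : 𝔼 2} (he : IsDominantEigenvector (linPart F) e)
    (hGe : ∀ r : ℝ, linPart G e ≠ r • e) : ArithmeticallyThick E := by
  have hV : finrank ℝ (𝔼 2) = 2 := by simp
  have hF2 := pow_mem_contractingSelfMaps hF two_ne_zero
  obtain ⟨α, ξ, hprox⟩ := he.exists_isProximal_sq hV
  rw [← map_pow] at hprox
  obtain ⟨q, hq⟩ := exists_fixedPoint hF2.2.2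
  have hξ : ξ.toLinearMap ≠ 0 := fun h ↦ by
    simpa [hprox.apply_eq_one] using DFunLike.congr_fun h e
  obtain ⟨h, hh⟩ := exists_apply_ne_of_affineIndependent hp (by simp) hξ (ξ q)
  have hspan : Submodule.span ℝ (range fun i ↦ linPart (![1, G] i) e) = ⊤ := by
    obtain ⟨b, hb0, hb1⟩ := exists_basis_of_finrank_eq_two hV he.ne_zero hGe
    rw [← b.span_eq]
    congr 2
    ext i : 1
    fin_cases i <;> simp [hb0, hb1]
  exact arithmeticallyThick_of_proximal hE (fixedPoint_mem hE.isClosed hne hF2.1 hF2.2.2 hq) hF2.1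
    hF2.2.2 hq hprox (R := ![1, G]) (by simp [Fin.forall_fin_two, hG, one_mem]) hspan (hf h)
    (hfp h) hh

end Plane

section Distortion

open Module

section

variable {V : Type*} [NormedAddCommGroup V] [NormedSpace ℝ V] [FiniteDimensional ℝ V]

lemma exists_norm_pow_finrank_le [Nontrivial V] {S : Set (V →L[ℝ] V)}
    (hS : ∀ B ∈ closure {B | ∃ r : ℝ, ∃ L ∈ S, B = r • L}, B.det = 0 → B = 0) :
    ∃ C, ∀ L ∈ S, ‖L‖ ^ finrank ℝ V ≤ C * |L.det| := by
  have hproper : ProperSpace (V →L[ℝ] V) := FiniteDimensional.proper ℝ _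
  have hdet := ContinuousLinearMap.continuous_det (𝕜 := ℝ) (E := V)
  have hK : IsCompact (closure {B : V →L[ℝ] V | ∃ r : ℝ, ∃ L ∈ S, B = r • L} ∩ sphere 0 1) :=
    (isCompact_sphere 0 1).inter_left isClosed_closure
  obtain ⟨C, hC⟩ := hK.exists_bound_of_continuousOn (f := fun B ↦ B.det⁻¹) <|
    hdet.continuousOn.inv₀ fun B hB h ↦ ne_of_mem_sphere hB.2 one_ne_zero (hS B hB.1 h)
  refine ⟨C, fun L hL ↦ ?_⟩
  obtain rfl | hL0 := eq_or_ne L 0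
  · simp [ContinuousLinearMap.det, (finrank_pos (R := ℝ) (M := V)).ne']
  have hdet0 : L.det ≠ 0 := fun h ↦ hL0 <| hS L (subset_closure ⟨1, L, hL, by simp⟩) h
  have hLC := hC (‖L‖⁻¹ • L) ⟨subset_closure ⟨_, L, hL, rfl⟩, by simp [norm_smul, hL0]⟩
  rwa [det_smul, norm_inv, norm_mul, norm_pow, norm_inv, norm_norm, mul_inv, inv_pow, inv_inv,
    ← div_eq_mul_inv, div_le_iff₀ (norm_pos_iff.2 hdet0)] at hLC

lemma continuous_trace : Continuous fun L : V →L[ℝ] V ↦ LinearMap.trace ℝ V L :=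
  (LinearMap.trace ℝ V ∘ₗ ContinuousLinearMap.coeLM ℝ).continuous_of_finiteDimensional

end

variable {V : Type*} [NormedAddCommGroup V] [NormedSpace ℝ V] {A B : V →L[ℝ] V} {x : V}

lemma det_sub_smul_one (hV : finrank ℝ V = 2) (A : V →L[ℝ] V) (t : ℝ) :
    (A - t • 1).det = t ^ 2 - LinearMap.trace ℝ V A * t + A.det := by
  have : FiniteDimensional ℝ V := .of_finrank_pos (by lia)
  let b := finBasisOfFinrankEq ℝ V hV
  have hone : LinearMap.toMatrix b b (A - t • 1 : V →L[ℝ] V) =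
      LinearMap.toMatrix b b A - t • 1 := by
    rw [ContinuousLinearMap.toLinearMap_sub, ContinuousLinearMap.toLinearMap_smul, map_sub,
      map_smul, ContinuousLinearMap.toLinearMap_one, LinearMap.toMatrix_one]
  rw [ContinuousLinearMap.det, ContinuousLinearMap.det, ← LinearMap.det_toMatrix b,
    ← LinearMap.det_toMatrix b, LinearMap.trace_eq_matrix_trace ℝ b, hone, Matrix.trace_fin_two,
    Matrix.det_fin_two, Matrix.det_fin_two]
  simp only [Matrix.sub_apply, Matrix.smul_apply, Matrix.one_apply_eq, smul_eq_mul,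
    Matrix.one_apply_ne zero_ne_one, Matrix.one_apply_ne one_ne_zero]
  ring

lemma exists_apply_eq_smul (hV : finrank ℝ V = 2) {t : ℝ}
    (ht : t ^ 2 - LinearMap.trace ℝ V A * t + A.det = 0) : ∃ v, v ≠ 0 ∧ A v = t • v := by
  have : FiniteDimensional ℝ V := .of_finrank_pos (by lia)
  rw [← det_sub_smul_one hV] at ht
  obtain ⟨v, hv, hv0⟩ := (Submodule.ne_bot_iff _).1 (LinearMap.bot_lt_ker_of_det_eq_zero ht).ne'
  exact ⟨v, hv0, sub_eq_zero.1 hv⟩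

lemma exists_isDominantEigenvector (hV : finrank ℝ V = 2)
    (h : 4 * |A.det| < LinearMap.trace ℝ V A ^ 2) : ∃ e, IsDominantEigenvector A e := by
  set τ := LinearMap.trace ℝ V A
  have hdisc : 0 < τ ^ 2 - 4 * A.det := by linarith [le_abs_self A.det]
  set s := √(τ ^ 2 - 4 * A.det)
  have hs0 : 0 < s := Real.sqrt_pos.2 hdisc
  have hs2 : s ^ 2 = τ ^ 2 - 4 * A.det := Real.sq_sqrt hdisc.le
  obtain ⟨α, β, hlt, hα, hβ⟩ : ∃ α β : ℝ, |β| < |α| ∧ α ^ 2 - τ * α + A.det = 0 ∧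
      β ^ 2 - τ * β + A.det = 0 := by
    have hτ0 : τ ≠ 0 := fun h0 ↦ by nlinarith [abs_nonneg A.det]
    obtain hneg | hpos := hτ0.lt_or_gt
    · refine ⟨(τ - s) / 2, (τ + s) / 2, sq_lt_sq.1 ?_, ?_, ?_⟩ <;> nlinarith
    · refine ⟨(τ + s) / 2, (τ - s) / 2, sq_lt_sq.1 ?_, ?_, ?_⟩ <;> nlinarith
  obtain ⟨e, he0, he⟩ := exists_apply_eq_smul hV hα
  obtain ⟨e', he'0, he'⟩ := exists_apply_eq_smul hV hβ
  refine ⟨e, α, β, hlt, he, e', he', (LinearIndependent.pair_iff' he0).2 fun r hr ↦ ?_⟩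
  have hαβ : α • e' = β • e' := by rw [← he', ← hr, map_smul, he, smul_comm]
  exact hlt.ne' (congrArg _ (smul_left_injective ℝ he'0 hαβ))

lemma exists_eq_smulRight_of_det_eq_zero (hV : finrank ℝ V = 2) (hB : B.det = 0) :
    ∃ (ζ : V →L[ℝ] ℝ) (x : V), B = ζ.smulRight x := by
  have : FiniteDimensional ℝ V := .of_finrank_pos (by lia)
  obtain ⟨v, hv, hv0⟩ := (Submodule.ne_bot_iff _).1 (LinearMap.bot_lt_ker_of_det_eq_zero hB).ne'
  obtain ⟨b, hb⟩ := exists_basis_zero_eq hV hv0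
  refine ⟨(b.coord 1).toContinuousLinearMap, B (b 1),
    ContinuousLinearMap.coe_injective (b.ext fun i ↦ ?_)⟩
  fin_cases i
  · simpa [← hb] using hv
  · simp

section Irreducible

variable {S : Subsemigroup (V →L[ℝ] V)}

lemma trace_mul_eq_zero_of_mem_closure (hV : finrank ℝ V = 2)
    (hS : ∀ L ∈ S, LinearMap.trace ℝ V L ^ 2 ≤ 4 * |L.det|)
    (hB : B ∈ closure {B | ∃ r : ℝ, ∃ L ∈ S, B = r • L}) (hdet : B.det = 0) {M : V →L[ℝ] V}
    (hM : ∀ L ∈ S, L * M ∈ S) : LinearMap.trace ℝ V (B * M : V →L[ℝ] V) = 0 := by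
  have : FiniteDimensional ℝ V := .of_finrank_pos (by lia)
  let T : Set (V →L[ℝ] V) :=
    {B | LinearMap.trace ℝ V (B * M : V →L[ℝ] V) ^ 2 ≤ 4 * |(B * M).det|}
  have hT : IsClosed T := by
    have hmul : Continuous fun B : V →L[ℝ] V ↦ B * M := continuous_mul_const M
    exact isClosed_le ((continuous_trace.comp hmul).pow 2)
      (((ContinuousLinearMap.continuous_det (𝕜 := ℝ)).comp hmul).abs.const_mul 4)
  have hBT : B ∈ T := by
    refine closure_minimal ?_ hT hB
    rintro _ ⟨r, L, hL, rfl⟩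
    have hLM := hS _ (hM L hL)
    simp only [T, mem_ofPred_eq, smul_mul_assoc, det_smul, hV, ContinuousLinearMap.toLinearMap_smul,
      map_smul, smul_eq_mul, mul_pow, abs_mul, abs_pow, sq_abs]
    nlinarith [sq_nonneg r]
  simpa [T, det_mul, hdet] using hBT

/- If distortion were unbounded, a limit `ζ.smulRight x` of normalized maps in `S` would satisfy
`ζ x = ζ (M x) = 0` for all `M` in `S`, by the trace bound; so `x` would be a common
eigenvector. -/
lemma exists_norm_sq_le (hV : finrank ℝ V = 2)
    (hS : ∀ L ∈ S, LinearMap.trace ℝ V L ^ 2 ≤ 4 * |L.det|)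
    (hirr : ∀ x ≠ 0, ∃ M ∈ S, ∀ r : ℝ, M x ≠ r • x) :
    ∃ C, ∀ L ∈ S, ‖L‖ ^ 2 ≤ C * |L.det| := by
  have : FiniteDimensional ℝ V := .of_finrank_pos (by lia)
  have : Nontrivial V := nontrivial_of_finrank_pos (R := ℝ) (by lia)
  rw [← hV]
  refine exists_norm_pow_finrank_le (S := (S : Set (V →L[ℝ] V))) fun B hB hdet ↦ ?_
  obtain ⟨ζ, x, rfl⟩ := exists_eq_smulRight_of_det_eq_zero hV hdet
  by_contra hB0
  have hx : x ≠ 0 := fun hx ↦ hB0 (by ext; simp [hx])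
  have hζ {M : V →L[ℝ] V} (hM : ∀ L ∈ S, L * M ∈ S) : ζ (M x) = 0 := by
    have htr := trace_mul_eq_zero_of_mem_closure hV hS hB hdet hM
    have hmul : (ζ.smulRight x * M : V →L[ℝ] V).toLinearMap =
        (ζ.comp M).toLinearMap.smulRight x := rfl
    rwa [hmul, LinearMap.trace_smulRight] at htr
  obtain ⟨M, hMS, hM⟩ := hirr x hx
  obtain ⟨b, hb0, hb1⟩ := exists_basis_of_finrank_eq_two hV hx hM
  have hζ0 : ζ = 0 := ContinuousLinearMap.coe_injective <| b.ext <| Fin.forall_fin_two.2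
    ⟨by simpa [hb0] using hζ (M := 1) (by simp), by simpa [hb1] using hζ fun L hL ↦ mul_mem hL hMS⟩
  exact hB0 (by ext; simp [hζ0])

end Irreducible

end Distortion

section FixedPoints

open Module

lemma abs_det_lt_one {V : Type*} [NormedAddCommGroup V] [NormedSpace ℝ V] [FiniteDimensional ℝ V]
    [Nontrivial V] {L : V →L[ℝ] V} (hL : ‖L‖ < 1) : |L.det| < 1 := by
  have hlim := ((ContinuousLinearMap.continuous_det (𝕜 := ℝ)).tendsto 0).comp
    (tendsto_pow_atTop_nhds_zero_of_norm_lt_one hL)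
  rw [← tendsto_pow_atTop_nhds_zero_iff]
  simpa [Function.comp_def, det_pow, ContinuousLinearMap.det,
    (finrank_pos (R := ℝ) (M := V)).ne'] using hlim

variable {E : Set (𝔼 2)} {p : Fin 3 → 𝔼 2} {f : Fin 3 → 𝔼 2 →ᵃ[ℝ] 𝔼 2}

lemma exists_units_of_mem_contractingSelfMaps {V ι : Type*} [NormedAddCommGroup V]
    [NormedSpace ℝ V] [FiniteDimensional ℝ V] {E : Set V} {f : ι → V →ᵃ[ℝ] V}
    (hf : ∀ h, f h ∈ contractingSelfMaps E) :
    ∃ u : ι → (V →L[ℝ] V)ˣ, ∀ h, linPart (f h) = u h :=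
  ⟨fun h ↦ (hf h).2.1.unit, fun _ ↦ rfl⟩

theorem arithmeticallyThick_of_norm_sq_le (hE : IsCompact E) (hne : E.Nonempty)
    (hp : AffineIndependent ℝ p) (hf : ∀ h, f h ∈ contractingSelfMaps E)
    (hfp : ∀ h, f h (p h) = p h) {C : ℝ}
    (hC : ∀ F ∈ contractingSelfMaps E, ‖linPart F‖ ^ 2 ≤ C * |(linPart F).det|) :
    ArithmeticallyThick E := by
  have hf1 (h : Fin 3) := (hf h).2.2
  have hpE (h : Fin 3) : p h ∈ E := fixedPoint_mem hE.isClosed hne (hf h).1 (hf1 h) (hfp h)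
  obtain ⟨u, hu⟩ := exists_units_of_mem_contractingSelfMaps hf
  refine arithmeticallyThick_of_tendsto hE hp (by simp) hpE (f := cyc f)
    ((eventually_ne_atTop 0).mono fun n hn h ↦ (cyc_mem_contractingSelfMaps hf hn h).1)
    (fun h _ ↦ tendsto_cyc_apply hf1 hfp h tendsto_id tendsto_const_nhds) ?_
  filter_upwards [eventually_ne_atTop 0] with n hn
  have hmem (h : Fin 3) := cyc_mem_contractingSelfMaps hf hn h
  set δ := |(cyc u n 0).1.det| with hδ
  have hδ0 : 0 < δ := abs_pos.2 (isUnit_iff_det_ne_zero.1 (cyc u n 0).isUnit)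
  have hδ1 : δ < 1 := abs_det_lt_one (linPart_cyc hu n 0 ▸ (hmem 0).2.2)
  let g : (𝔼 2 →L[ℝ] 𝔼 2)ˣ :=
    Units.map (algebraMap ℝ _).toMonoidHom (Units.mk0 √δ (Real.sqrt_pos.2 hδ0).ne')
  have hg : g.1 = √δ • 1 := Algebra.algebraMap_eq_smul_one _
  refine ⟨g, cyc u n, ?_, linPart_cyc hu n, ?_⟩
  · refine tendsto_pow_atTop_nhds_zero_of_norm_lt_one ?_
    rw [hg, norm_smul, norm_one, mul_one, Real.norm_of_nonneg (Real.sqrt_nonneg _)]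
    exact (Real.sqrt_lt' one_pos).2 (by simpa using hδ1)
  · refine isSynchronized_of_norm_pow_finrank_le (S := (contractingSelfMaps E).map linPart.toMulHom)
      (C := C) ?_ (Real.sqrt_pos.2 hδ0) hg (fun h ↦ ⟨_, hmem h, linPart_cyc hu n h⟩) fun h ↦ ?_
    · rintro _ ⟨F, hF, rfl⟩
      simpa [finrank_euclideanSpace] using hC F hF
    · simp [hδ, det_cyc, Real.sq_sqrt]

end FixedPoints

section CommonEigenvector

open Module

variable {V : Type*} [NormedAddCommGroup V] [NormedSpace ℝ V] {A : V →L[ℝ] V} {x : V} {a c : ℝ}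

lemma det_eq_mul_of_apply_eq (b : Basis (Fin 2) ℝ V) {β : ℝ} (hA0 : A (b 0) = a • b 0)
    (hA1 : A (b 1) = β • b 0 + c • b 1) : A.det = a * c := by
  rw [ContinuousLinearMap.det, ← LinearMap.det_toMatrix b, Matrix.det_fin_two]
  simp [LinearMap.toMatrix_apply, hA0, hA1]

lemma exists_apply_eq_smul_add_smul (b : Basis (Fin 2) ℝ V) (hA : A (b 0) = a • b 0) (ha : a ≠ 0)
    (hdet : A.det = a * c) : ∃ β : ℝ, A (b 1) = β • b 0 + c • b 1 := by
  have hsum : A (b 1) = b.repr (A (b 1)) 0 • b 0 + b.repr (A (b 1)) 1 • b 1 := by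
    rw [← Fin.sum_univ_two fun i ↦ b.repr (A (b 1)) i • b i, b.sum_repr]
  have hc : b.repr (A (b 1)) 1 = c :=
    mul_left_cancel₀ ha ((det_eq_mul_of_apply_eq b hA hsum).symm.trans hdet)
  exact ⟨_, hc ▸ hsum⟩

lemma cyc_apply_of_apply_eq_smul {A : Fin 3 → (V →L[ℝ] V)ˣ} {r : Fin 3 → ℝ}
    (hA : ∀ h, (A h).1 x = r h • x) (n : ℕ) (h : Fin 3) : (cyc A n h).1 x = cyc r n 0 • x := by
  have hpow (h : Fin 3) : ((A h).1 ^ n) x = r h ^ n • x := by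
    induction n with
    | zero => simp
    | succ n ih => rw [pow_succ, mul_apply_eq_comp, hA, map_smul, ih, smul_smul, pow_succ']
  rw [← cyc_eq_of_commute (fun _ _ ↦ Commute.all _ _) n h]
  simp only [cyc, Units.val_mul, Units.val_pow_eq_pow_val, mul_apply_eq_comp, hpow, map_smul,
    smul_smul]
  ring_nf

section Units

variable [FiniteDimensional ℝ V] {ι : Type*} {A : ι → (V →L[ℝ] V)ˣ}

lemma exists_eq_add_smul (hV : finrank ℝ V = 2) (hx : x ≠ 0) (ha : a ≠ 0)
    (hA : ∀ i, (A i).1 x = a • x) (hdet : ∀ i, (A i).1.det = a * c) :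
    ∃ U : V →L[ℝ] V, U * U = 0 ∧ ∀ i, (A i).1 * U = a • U ∧ U * (A i).1 = c • U ∧
      ∀ j, ∃ β : ℝ, (A i).1 = A j + β • U := by
  obtain ⟨b, rfl⟩ := exists_basis_zero_eq hV hx
  choose β hβ using fun i ↦ exists_apply_eq_smul_add_smul b (hA i) ha (hdet i)
  have hext {L M : V →L[ℝ] V} (h0 : L (b 0) = M (b 0)) (h1 : L (b 1) = M (b 1)) : L = M :=
    ContinuousLinearMap.coe_injective (b.ext (Fin.forall_fin_two.2 ⟨h0, h1⟩))
  refine ⟨(b.coord 1).toContinuousLinearMap.smulRight (b 0), hext (by simp) (by simp), fun i ↦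
    ⟨hext (by simp) (by simp [hA]), hext (by simp [hA]) (by simp [hβ]), fun j ↦
      ⟨β i - β j, hext (by simp [hA]) ?_⟩⟩⟩
  simp only [hβ, add_apply, smul_apply, ContinuousLinearMap.smulRight_apply,
    LinearMap.coe_toContinuousLinearMap', Basis.coord_apply, Basis.repr_self,
    Finsupp.single_eq_same, one_smul]
  module

lemma isSynchronized_of_forall_apply_eq_smul [Finite ι] (hV : finrank ℝ V = 2) (hx : x ≠ 0)
    (hA : ∀ i, (A i).1 x = a • x) (hdet : ∀ i, (A i).1.det = a * c) (hc : 0 < c) (hca : c < a)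
    (i₀ : ι) : IsSynchronized (A i₀) A := by
  obtain ⟨U, hUU, hU⟩ := exists_eq_add_smul hV hx (hc.trans hca).ne' hA hdet
  choose β hβ using fun i ↦ (hU i).2.2 i₀
  exact isSynchronized_of_triangular hβ (hU i₀).1 (hU i₀).2.1 hUU hc hca

lemma commute_of_forall_apply_eq_smul (hV : finrank ℝ V = 2) (hx : x ≠ 0) (ha : a ≠ 0)
    (hA : ∀ i, (A i).1 x = a • x) (hdet : ∀ i, (A i).1.det = a * a) (i j : ι) :
    Commute (A i) (A j) := by
  obtain ⟨U, -, hU⟩ := exists_eq_add_smul hV hx ha hA hdet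
  obtain ⟨β, hβ⟩ := (hU i).2.2 j
  refine Units.ext ?_
  rw [Units.val_mul, Units.val_mul, hβ, add_mul, mul_add, smul_mul_assoc, mul_smul_comm, (hU j).1,
    (hU j).2.1]

lemma isSynchronized_cyc {A : Fin 3 → (V →L[ℝ] V)ˣ} (hV : finrank ℝ V = 2) (hx : x ≠ 0)
    (hA : ∀ h, (A h).1 x = a • x) (hdet : ∀ h, (A h).1.det = a * c) (ha : 0 < a) (hc : 0 < c)
    (hdom : a < c → ∃ e, e ≠ 0 ∧ ∀ h, (A h).1 e = c • e) :
    IsSynchronized (cyc A 1 0) (cyc A 1) := by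
  have main {a c : ℝ} {x : V} (hx : x ≠ 0) (hA : ∀ h, (A h).1 x = a • x)
      (hdet : ∀ h, (A h).1.det = a * c) (hc : 0 < c) (hca : c < a) :
      IsSynchronized (cyc A 1 0) (cyc A 1) := by
    refine isSynchronized_of_forall_apply_eq_smul hV hx (cyc_apply_of_apply_eq_smul hA 1)
      (c := c ^ 3) (fun h ↦ ?_) (by positivity) ?_ 0
    · rw [det_cyc]
      simp only [cyc, hdet]
      ring
    · calc c ^ 3 < a ^ 3 := by gcongr
        _ = cyc (fun _ ↦ a) 1 0 := by
          simp only [cyc]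
          ring
  obtain hlt | rfl | hlt := lt_trichotomy a c
  · obtain ⟨e, he, hAe⟩ := hdom hlt
    exact main he hAe (fun h ↦ (hdet h).trans (mul_comm a c)) ha hlt
  · have hcyc : cyc A 1 = fun _ ↦ cyc A 1 0 := funext <|
      cyc_eq_of_commute (commute_of_forall_apply_eq_smul hV hx ha.ne' hA hdet) 1
    rw [hcyc]
    exact isSynchronized_const _
  · exact main hx hA hdet hc hlt

end Units

lemma exists_isDominantEigenvector_of_lt (hV : finrank ℝ V = 2) (hx : x ≠ 0) (hA : A x = a • x)
    (ha : 0 < a) (hac : a < c) (hdet : A.det = a * c) :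
    ∃ e, A e = c • e ∧ (∀ r : ℝ, e ≠ r • x) ∧ IsDominantEigenvector A e := by
  obtain ⟨b, rfl⟩ := exists_basis_zero_eq hV hx
  obtain ⟨β, hβ⟩ := exists_apply_eq_smul_add_smul b hA ha.ne' hdet
  set e := β • b 0 + (c - a) • b 1
  have hAe : A e = c • e := by
    simp only [e, map_add, map_smul, hA, hβ]
    module
  have he (r : ℝ) : e ≠ r • b 0 := fun h ↦ by
    have := congrArg (fun v ↦ b.repr v 1) h
    simp [e, sub_eq_zero, hac.ne'] at this
  refine ⟨e, hAe, he, c, a, by rwa [abs_of_pos ha, abs_of_pos (ha.trans hac)], hAe, b 0, hA, ?_⟩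
  exact LinearIndependent.pair_symm_iff.1 <|
    (LinearIndependent.pair_iff' hx).2 fun r ↦ (he r).symm

end CommonEigenvector

section Dichotomy

open Module

variable {E : Set (𝔼 2)} {p : Fin 3 → 𝔼 2} {f : Fin 3 → 𝔼 2 →ᵃ[ℝ] 𝔼 2}

lemma exists_common_eigenvector_of_lt {V ι : Type*} [NormedAddCommGroup V] [NormedSpace ℝ V]
    {A : ι → V →L[ℝ] V} {x : V} {a c : ℝ} (hV : finrank ℝ V = 2) (hx : x ≠ 0)
    (hA : ∀ i, A i x = a • x) (hdet : ∀ i, (A i).det = a * c) (ha : 0 < a) (hac : a < c) (i₀ : ι)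
    (hdom : ∀ e, IsDominantEigenvector (A i₀) e → ∀ i, ∃ r : ℝ, A i e = r • e) :
    ∃ e, e ≠ 0 ∧ ∀ i, A i e = c • e := by
  obtain ⟨e, -, hex, he⟩ := exists_isDominantEigenvector_of_lt hV hx (hA i₀) ha hac (hdet i₀)
  obtain ⟨b, rfl, rfl⟩ := exists_basis_of_finrank_eq_two hV hx hex
  refine ⟨b 1, b.ne_zero 1, fun i ↦ ?_⟩
  obtain ⟨r, hr⟩ := hdom _ he i
  have hdetr : (A i).det = a * r := det_eq_mul_of_apply_eq b (β := 0) (hA i) (by simpa using hr)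
  rw [hr, mul_left_cancel₀ ha.ne' (hdetr.symm.trans (hdet i))]

theorem arithmeticallyThick_of_common_eigenvector_of_pos (hE : IsCompact E) (hne : E.Nonempty)
    (hp : AffineIndependent ℝ p) (hf : ∀ h, f h ∈ contractingSelfMaps E)
    (hfp : ∀ h, f h (p h) = p h) (hdet : ∀ h, 0 < (linPart (f h)).det)
    (hdom : ∀ F ∈ contractingSelfMaps E, ∀ e, IsDominantEigenvector (linPart F) e →
      ∀ G ∈ contractingSelfMaps E, ∃ r : ℝ, linPart G e = r • e)
    {x : 𝔼 2} (hx : x ≠ 0) {r : Fin 3 → ℝ} (hr0 : ∀ h, 0 < r h)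
    (hr : ∀ h, linPart (f h) x = r h • x) : ArithmeticallyThick E := by
  have hV : finrank ℝ (𝔼 2) = 2 := by simp
  have hf1 (h : Fin 3) := (hf h).2.2
  obtain ⟨u, hu⟩ := exists_units_of_mem_contractingSelfMaps hf
  refine arithmeticallyThick_of_tendsto hE hp (by simp)
    (fun h ↦ fixedPoint_mem hE.isClosed hne (hf h).1 (hf1 h) (hfp h))
    (f := fun n ↦ cyc (cyc f n) 1) ((eventually_ne_atTop 0).mono fun n hn h ↦
      (cyc_mem_contractingSelfMaps (cyc_mem_contractingSelfMaps hf hn) one_ne_zero h).1)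
    (fun h _ ↦ tendsto_cyc_cyc_apply hf1 hfp h tendsto_id _) ?_
  filter_upwards [eventually_ne_atTop 0] with n hn
  have hmem := cyc_mem_contractingSelfMaps hf hn
  have hlin := linPart_cyc hu n
  refine ⟨cyc (cyc u n) 1 0, cyc (cyc u n) 1, ?_, linPart_cyc hlin 1, ?_⟩
  · refine tendsto_pow_atTop_nhds_zero_of_norm_lt_one ?_
    rw [← linPart_cyc hlin]
    exact (cyc_mem_contractingSelfMaps hmem one_ne_zero 0).2.2
  have hx' (h : Fin 3) : (cyc u n h).1 x = cyc r n 0 • x :=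
    cyc_apply_of_apply_eq_smul (fun h ↦ hu h ▸ hr h) n h
  have ha : 0 < cyc r n 0 := cyc_pos hr0 n 0
  have hdet' (h : Fin 3) := (det_cyc u n h).trans (mul_div_cancel₀ _ ha.ne').symm
  refine isSynchronized_cyc hV hx hx' hdet' ha
    (div_pos (cyc_pos (fun h ↦ hu h ▸ hdet h) n 0) ha) fun hlt ↦
      exists_common_eigenvector_of_lt hV hx hx' hdet' ha hlt 0 fun e he h ↦ ?_
  rw [← hlin] at he ⊢
  exact hdom _ (hmem 0) e he _ (hmem h)

theorem arithmeticallyThick_of_common_eigenvector (hE : IsCompact E) (hne : E.Nonempty)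
    (hp : AffineIndependent ℝ p) (hf : ∀ h, f h ∈ contractingSelfMaps E)
    (hfp : ∀ h, f h (p h) = p h)
    (hdom : ∀ F ∈ contractingSelfMaps E, ∀ e, IsDominantEigenvector (linPart F) e →
      ∀ G ∈ contractingSelfMaps E, ∃ r : ℝ, linPart G e = r • e)
    {x : 𝔼 2} (hx : x ≠ 0) {r : Fin 3 → ℝ} (hr : ∀ h, linPart (f h) x = r h • x) :
    ArithmeticallyThick E := by
  have hr0 (h : Fin 3) : r h ≠ 0 := fun h0 ↦ by
    obtain ⟨B, hB⟩ := (hf h).2.1.exists_left_inv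
    refine hx ?_
    calc x = (B * linPart (f h)) x := by rw [hB, one_apply_eq_self]
      _ = 0 := by rw [mul_apply_eq_comp, hr, h0, zero_smul, map_zero]
  refine arithmeticallyThick_of_common_eigenvector_of_pos hE hne hp
    (fun h ↦ pow_mem_contractingSelfMaps (hf h) two_ne_zero) (fun h ↦ ?_) (fun h ↦ ?_) hdom hx
    (fun h ↦ sq_pos_of_ne_zero (hr0 h)) fun h ↦ ?_
  · rw [pow_two, AffineMap.coe_mul, Function.comp_apply, hfp, hfp]
  · rw [map_pow, det_pow]
    exact sq_pos_of_ne_zero (isUnit_iff_det_ne_zero.1 (hf h).2.1)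
  · rw [map_pow, pow_two, mul_apply_eq_comp, hr, map_smul, hr, smul_smul, pow_two]

theorem arithmeticallyThick_of_fixedPoints (hE : IsCompact E) (hne : E.Nonempty)
    (hp : AffineIndependent ℝ p) (hf : ∀ h, f h ∈ contractingSelfMaps E)
    (hfp : ∀ h, f h (p h) = p h) : ArithmeticallyThick E := by
  have hV : finrank ℝ (𝔼 2) = 2 := by simp
  by_cases hdom : ∀ F ∈ contractingSelfMaps E, ∀ e, IsDominantEigenvector (linPart F) e →
      ∀ G ∈ contractingSelfMaps E, ∃ r : ℝ, linPart G e = r • e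
  swap
  · push Not at hdom
    obtain ⟨F, hF, e, he, G, hG, hGe⟩ := hdom
    exact arithmeticallyThick_of_isDominantEigenvector hE hne hp hf hfp hF hG.1 he hGe
  by_cases hx : ∃ x ≠ 0, ∀ F ∈ contractingSelfMaps E, ∃ r : ℝ, linPart F x = r • x
  · obtain ⟨x, hx, hr⟩ := hx
    choose r hr using fun h ↦ hr (f h) (hf h)
    exact arithmeticallyThick_of_common_eigenvector hE hne hp hf hfp hdom hx hr
  push Not at hx
  have htr (F) (hF : F ∈ contractingSelfMaps E) :
      LinearMap.trace ℝ (𝔼 2) (linPart F) ^ 2 ≤ 4 * |(linPart F).det| := by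
    by_contra! hlt
    obtain ⟨e, he⟩ := exists_isDominantEigenvector hV hlt
    obtain ⟨G, hG, hGe⟩ := hx e he.ne_zero
    exact (hdom F hF e he G hG).elim hGe
  obtain ⟨C, hC⟩ := exists_norm_sq_le (S := (contractingSelfMaps E).map linPart.toMulHom) hV
    (forall_mem_image.2 htr)
    fun x hx0 ↦ (hx x hx0).imp' linPart fun F hF ↦ ⟨⟨F, hF.1, rfl⟩, hF.2⟩
  exact arithmeticallyThick_of_norm_sq_le hE hne hp hf hfp fun F hF ↦ hC _ ⟨F, hF, rfl⟩

end Dichotomy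

section Attractors

lemma exists_affineIndependent_mem_of_forall_mem_closure {V ι : Type*} [NormedAddCommGroup V]
    [NormedSpace ℝ V] [Finite ι] {D : Set V} {p : ι → V} (hp : AffineIndependent ℝ p)
    (hpD : ∀ i, p i ∈ closure D) : ∃ q : ι → V, AffineIndependent ℝ q ∧ ∀ i, q i ∈ D := by
  have hmem : p ∈ closure (univ.pi fun _ ↦ D) := by
    rw [closure_pi_set]
    exact fun i _ ↦ hpD i
  obtain ⟨q, hq, hqD⟩ := mem_closure_iff.1 hmem _ isOpen_setOfPred_affineIndependent hp
  exact ⟨q, hq, fun i ↦ hqD i (mem_univ i)⟩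

lemma exists_affineIndependent_of_not_subset_hyperplane {H : Type*} [NormedAddCommGroup H]
    [InnerProductSpace ℝ H] [FiniteDimensional ℝ H] {n : ℕ} (hn : Module.finrank ℝ H = n)
    {E : Set H} (hne : E.Nonempty) (hE : ¬ ∃ (v : H) (c : ℝ), v ≠ 0 ∧ ∀ x ∈ E, ⟪x, v⟫ = c) :
    ∃ p : Fin (n + 1) → H, AffineIndependent ℝ p ∧ ∀ i, p i ∈ E := by
  have hspan : vectorSpan ℝ E = ⊤ := by
    by_contra hspan
    obtain ⟨v, hv, hv0⟩ :=
      (Submodule.ne_bot_iff _).1 (mt (Submodule.orthogonal_eq_bot_iff).1 hspan)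
    obtain ⟨y, hy⟩ := hne
    refine hE ⟨v, ⟪y, v⟫, hv0, fun x hx ↦ ?_⟩
    rw [← sub_eq_zero, ← inner_sub_left]
    exact hv _ (vsub_mem_vectorSpan ℝ hx hy)
  obtain ⟨t, htE, htspan, ht⟩ := exists_affineIndependent ℝ H E
  have := finite_of_fin_dim_affineIndependent ℝ ht
  have := Fintype.ofFinite t
  have hcard : Fintype.card t = n + 1 := by
    rw [← hn, ← ht.affineSpan_eq_top_iff_card_eq_finrank_add_one, Subtype.range_coe, htspan,
      AffineSubspace.affineSpan_eq_top_iff_vectorSpan_eq_top_of_nonempty ℝ H H hne, hspan]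
  let e := (Fintype.equivFinOfCardEq hcard).symm
  exact ⟨fun i ↦ e i, ht.comp_embedding e.toEmbedding, fun i ↦ htE (e i).2⟩

variable {V ι : Type*} [NormedAddCommGroup V] [NormedSpace ℝ V] [FiniteDimensional ℝ V]
  {E : Set V} {φ : ι → V →ᵃ[ℝ] V} {c : ℝ}

lemma exists_mem_selfMaps_of_cover (hφE : ∀ i, φ i ∈ selfMaps E)
    (hφu : ∀ i, IsUnit (linPart (φ i))) (hφc : ∀ i, ‖linPart (φ i)‖ ≤ c)
    (hcov : E ⊆ ⋃ i, φ i '' E) (n : ℕ) {x : V} (hx : x ∈ E) :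
    ∃ F ∈ selfMaps E, IsUnit (linPart F) ∧ ‖linPart F‖ ≤ c ^ n ∧ x ∈ F '' E := by
  induction n generalizing x with
  | zero =>
    refine ⟨1, one_mem _, ?_, ?_, x, hx, rfl⟩
    · rw [map_one]
      exact isUnit_one
    · rw [map_one, pow_zero]
      exact ContinuousLinearMap.norm_id_le
  | succ n ih =>
    obtain ⟨i, x', hx', rfl⟩ := mem_iUnion.1 (hcov hx)
    obtain ⟨F, hF, hFu, hFc, y, hy, rfl⟩ := ih hx'
    refine ⟨φ i * F, mul_mem (hφE i) hF, ?_, ?_, y, hy, rfl⟩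
    · rw [map_mul]
      exact (hφu i).mul hFu
    · rw [map_mul, pow_succ']
      exact (norm_mul_le _ _).trans
        (mul_le_mul (hφc i) hFc (norm_nonneg _) ((norm_nonneg _).trans (hφc i)))

lemma subset_closure_fixedPoints (hE : IsCompact E) (hφE : ∀ i, φ i ∈ selfMaps E)
    (hφu : ∀ i, IsUnit (linPart (φ i))) (hc0 : 0 ≤ c) (hc1 : c < 1)
    (hφc : ∀ i, ‖linPart (φ i)‖ ≤ c) (hcov : E ⊆ ⋃ i, φ i '' E) :
    E ⊆ closure {p | ∃ F ∈ contractingSelfMaps E, F p = p} := by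
  intro x hx
  rw [Metric.mem_closure_iff]
  intro r hr
  have hlim : Tendsto (fun n : ℕ ↦ c ^ n * diam E) atTop (𝓝 0) := by
    simpa using (tendsto_pow_atTop_nhds_zero_of_lt_one hc0 hc1).mul_const (diam E)
  obtain ⟨n, hn, hn0⟩ := ((hlim.eventually_lt_const hr).and (eventually_ne_atTop 0)).exists
  obtain ⟨F, hF, hFu, hFc, y, hy, rfl⟩ := exists_mem_selfMaps_of_cover hφE hφu hφc hcov n hx
  have hF1 : ‖linPart F‖ < 1 := hFc.trans_lt (pow_lt_one₀ hc0 hc1 hn0)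
  obtain ⟨p, hp⟩ := exists_fixedPoint hF1
  refine ⟨p, ⟨F, ⟨hF, hFu, hF1⟩, hp⟩, ?_⟩
  calc dist (F y) p = ‖linPart F (y - p)‖ := by rw [← map_sub_map, hp, dist_eq_norm]
    _ ≤ ‖linPart F‖ * dist y p := dist_eq_norm y p ▸ (linPart F).le_opNorm _
    _ ≤ c ^ n * diam E := by
        gcongr
        exact dist_le_diam_of_mem hE.isBounded hy (fixedPoint_mem hE.isClosed ⟨y, hy⟩ hF hF1 hp)
    _ < r := hn

end Attractors

theorem arithmeticallyThick_of_cover {E : Set (𝔼 2)} (hE : IsCompact E) (hne : E.Nonempty)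
    {ι : Type*} [Finite ι] {φ : ι → 𝔼 2 →ᵃ[ℝ] 𝔼 2} (hφ : ∀ i, φ i ∈ contractingSelfMaps E)
    (hcov : E ⊆ ⋃ i, φ i '' E)
    (hline : ¬ ∃ (v : 𝔼 2) (c : ℝ), v ≠ 0 ∧ ∀ x ∈ E, ⟪x, v⟫ = c) : ArithmeticallyThick E := by
  obtain ⟨i, -⟩ := mem_iUnion.1 (hcov hne.some_mem)
  have : Nonempty ι := ⟨i⟩
  obtain ⟨i₀, hi₀⟩ := Finite.exists_max fun i ↦ ‖linPart (φ i)‖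
  obtain ⟨p, hp, hpE⟩ :=
    exists_affineIndependent_of_not_subset_hyperplane finrank_euclideanSpace_fin hne hline
  have hdense := subset_closure_fixedPoints hE (fun i ↦ (hφ i).1) (fun i ↦ (hφ i).2.1)
    (norm_nonneg _) (hφ i₀).2.2 hi₀ hcov
  obtain ⟨q, hq, hfix⟩ :=
    exists_affineIndependent_mem_of_forall_mem_closure hp fun i ↦ hdense (hpE i)
  choose f hf hfq using hfix
  exact arithmeticallyThick_of_fixedPoints hE hne (p := q) hq hf hfq

end SelfAffine


/-- The attractor of a planar affine IFS `{x ↦ T_i x + a_i}` not contained in a straight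
line is arithmetically thick. -/
theorem planar_selfAffine_arithmetically_thick {ℓ : ℕ} (hl : 0 < ℓ)
    (T : Fin ℓ → Matrix (Fin 2) (Fin 2) ℝ) (a : Fin ℓ → EuclideanSpace ℝ (Fin 2))
    (hinv : ∀ i, IsUnit (T i))
    (hnorm : ∀ i, ∃ c : ℝ, 0 ≤ c ∧ c < 1 ∧
      ∀ x : EuclideanSpace ℝ (Fin 2), ‖Matrix.toEuclideanLin (T i) x‖ ≤ c * ‖x‖)
    (E : Set (EuclideanSpace ℝ (Fin 2))) (hne : E.Nonempty) (hcomp : IsCompact E)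
    (hattr : E = ⋃ i, (fun x => Matrix.toEuclideanLin (T i) x + a i) '' E)
    (hline : ¬ ∃ (v : EuclideanSpace ℝ (Fin 2)) (c : ℝ), v ≠ 0 ∧ ∀ x ∈ E, ⟪x, v⟫ = c) :
    ArithmeticallyThick E := by
  let φ (i : Fin ℓ) : EuclideanSpace ℝ (Fin 2) →ᵃ[ℝ] EuclideanSpace ℝ (Fin 2) :=
    (Matrix.toEuclideanLin (T i)).toAffineMap + AffineMap.const ℝ _ (a i)
  have hlin (i : Fin ℓ) : SelfAffine.linPart (φ i) = Matrix.toEuclideanCLM (𝕜 := ℝ) (T i) := by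
    ext1 x
    change (φ i).linear x = Matrix.toEuclideanLin (T i) x
    simp [φ]
  refine SelfAffine.arithmeticallyThick_of_cover hcomp hne (φ := φ) (fun i ↦ ⟨?_, ?_, ?_⟩)
    hattr.subset hline
  · intro x hx
    rw [hattr]
    exact mem_iUnion.2 ⟨i, x, hx, rfl⟩
  · rw [hlin]
    exact (hinv i).map (Matrix.toEuclideanCLM (n := Fin 2) (𝕜 := ℝ))
  · obtain ⟨c, hc0, hc1, hc⟩ := hnorm i
    rw [hlin]
    exact (ContinuousLinearMap.opNorm_le_bound _ hc0 hc).trans_lt hc1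
end

section
/- Let A = {a_1, …, a_n} be a finite subset of ℝ^d with n points and let ε ∈ [0, 1/n]. Then conv(A) + conv(εA) = conv(A) + εA, where εA = {εa : a ∈ A} and the sums are Minkowski sums. -/
open Metric Set
open scoped Pointwise

/-!
By convexity `conv s + ε conv s = (1 + ε) conv s`, so a point of the left-hand side is a combination
of points of `s` with positive weights of total mass `1 + ε`. By Carathéodory's theorem at most
`dim s + 1` points are needed, so if `ε dim s ≤ 1` one of them carries mass at least
`(1 + ε) / (dim s + 1) ≥ ε`. Splitting the mass `ε` off that point leaves a convex combination
of `s`.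
-/

theorem exists_le_one_add_mul_of_card_le {R ι : Type*} [CommRing R] [LinearOrder R]
    [IsStrictOrderedRing R] [Fintype ι] {m : ℕ} {w : ι → R} {ε : R}
    (hw : ∑ i, w i = 1) (hcard : Fintype.card ι ≤ m + 1) (hε : 0 ≤ ε) (hm : ε * m ≤ 1) :
    ∃ i, ε ≤ (1 + ε) * w i := by
  have : Nonempty ι := by
    by_contra! _
    simp at hw
  have mass_le : ∑ _i : ι, ε ≤ ∑ i, (1 + ε) * w i :=
    calc ∑ _i : ι, ε = Fintype.card ι * ε := by simp
      _ ≤ (m + 1 : ℕ) * ε := by gcongr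
      _ ≤ 1 + ε := by push_cast; linarith
      _ = ∑ i, (1 + ε) * w i := by rw [← Finset.mul_sum, hw, mul_one]
  obtain ⟨i, -, hi⟩ := Finset.exists_le_of_sum_le Finset.univ_nonempty mass_le
  exact ⟨i, hi⟩

section

variable {𝕜 E : Type*} [Field 𝕜] [LinearOrder 𝕜] [IsStrictOrderedRing 𝕜]
  [AddCommGroup E] [Module 𝕜 E]

theorem sum_smul_mem_convexHull_add_smul {ι : Type*} [Fintype ι] {s : Set E} {ε : 𝕜}
    {w : ι → 𝕜} {z : ι → E} (hw : ∀ j, 0 ≤ w j) (hsum : ∑ j, w j = 1 + ε) (hz : ∀ j, z j ∈ s)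
    {i : ι} (hi : ε ≤ w i) :
    ∑ j, w j • z j ∈ convexHull 𝕜 s + ε • s := by
  classical
  set v : ι → 𝕜 := w - Pi.single i ε with hv
  have v_nonneg (j : ι) : 0 ≤ v j := by
    obtain rfl | hj := eq_or_ne j i
    · simpa [hv] using hi
    · simpa [hv, hj] using hw j
  have sum_v : ∑ j, v j = 1 := by simp [hv, hsum]
  have mem_hull : ∑ j, v j • z j ∈ convexHull 𝕜 s :=
    (convex_convexHull 𝕜 s).sum_mem (fun j _ ↦ v_nonneg j) sum_v
      fun j _ ↦ subset_convexHull 𝕜 s (hz j)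
  have sum_v_add : ∑ j, v j • z j + ε • z i = ∑ j, w j • z j := by
    simp [hv, sub_smul, Finset.sum_sub_distrib, Pi.single_apply, ite_smul]
  exact sum_v_add ▸ add_mem_add mem_hull (smul_mem_smul_set (hz i))

theorem one_add_smul_convexHull_subset {s : Set E} [FiniteDimensional 𝕜 (vectorSpan 𝕜 s)] {ε : 𝕜}
    (hε : 0 ≤ ε) (hdim : ε * Module.finrank 𝕜 (vectorSpan 𝕜 s) ≤ 1) :
    (1 + ε) • convexHull 𝕜 s ⊆ convexHull 𝕜 s + ε • s := by
  rintro _ ⟨x, hx, rfl⟩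
  obtain ⟨ι, _, z, w, hzs, hz, hw, hw_sum, rfl⟩ := eq_pos_convex_span_of_mem_convexHull hx
  have card_le : Fintype.card ι ≤ Module.finrank 𝕜 (vectorSpan 𝕜 s) + 1 :=
    hz.card_le_finrank_succ.trans <|
      Nat.succ_le_succ (Submodule.finrank_mono (vectorSpan_mono 𝕜 hzs))
  obtain ⟨i, hi⟩ := exists_le_one_add_mul_of_card_le hw_sum card_le hε hdim
  simp only [Finset.smul_sum, smul_smul]
  refine sum_smul_mem_convexHull_add_smul (fun j ↦ ?_) ?_ (range_subset_iff.1 hzs) hi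
  · exact mul_nonneg (by positivity) (hw j).le
  · rw [← Finset.mul_sum, hw_sum, mul_one]

theorem convexHull_add_smul_convexHull_general (s : Set E) [FiniteDimensional 𝕜 (vectorSpan 𝕜 s)]
    {ε : 𝕜} (hε : 0 ≤ ε) (hdim : ε * Module.finrank 𝕜 (vectorSpan 𝕜 s) ≤ 1) :
    convexHull 𝕜 s + convexHull 𝕜 (ε • s) = convexHull 𝕜 s + ε • s := by
  refine Subset.antisymm ?_ (add_subset_add_left (subset_convexHull 𝕜 _))
  calc convexHull 𝕜 s + convexHull 𝕜 (ε • s) = (1 + ε) • convexHull 𝕜 s := by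
        rw [convexHull_smul, (convex_convexHull 𝕜 s).add_smul zero_le_one hε, one_smul]
    _ ⊆ convexHull 𝕜 s + ε • s := one_add_smul_convexHull_subset hε hdim

end

theorem finrank_vectorSpan_coe_lt_card {k V P : Type*} [DivisionRing k] [AddCommGroup V]
    [Module k V] [AddTorsor V P] {s : Finset P} (hs : s.Nonempty) :
    Module.finrank k (vectorSpan k (s : Set P)) < s.card := by
  classical
  obtain ⟨m, hm⟩ := Nat.exists_eq_add_one.2 hs.card_pos
  have finrank_le := finrank_vectorSpan_image_finset_le k id s hm
  rw [Finset.image_id] at finrank_le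
  rwa [hm, Nat.lt_succ_iff]

theorem mul_finrank_vectorSpan_coe_le_one {𝕜 V P : Type*} [Field 𝕜] [LinearOrder 𝕜]
    [IsStrictOrderedRing 𝕜] [AddCommGroup V] [Module 𝕜 V] [AddTorsor V P] {s : Finset P}
    (hs : s.Nonempty) {ε : 𝕜} (hε : ε ∈ Icc 0 (1 / (s.card : 𝕜))) :
    ε * Module.finrank 𝕜 (vectorSpan 𝕜 (s : Set P)) ≤ 1 :=
  calc ε * Module.finrank 𝕜 (vectorSpan 𝕜 (s : Set P)) ≤ ε * s.card :=
        mul_le_mul_of_nonneg_left (mod_cast (finrank_vectorSpan_coe_lt_card hs).le) hε.1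
    _ ≤ 1 := (le_div_iff₀ (mod_cast hs.card_pos)).1 hε.2

/-- For a finite set `A ⊆ ℝ^d` with `n` points and `ε ∈ [0, 1/n]`, one has
`conv(A) + conv(εA) = conv(A) + εA` (Minkowski sums). -/
theorem convexHull_add_smul_convexHull {d n : ℕ} (hn : 0 < n)
    (A : Finset (EuclideanSpace ℝ (Fin d))) (hcard : A.card = n)
    (ε : ℝ) (hε : ε ∈ Set.Icc (0 : ℝ) (1 / n)) :
    convexHull ℝ (A : Set (EuclideanSpace ℝ (Fin d))) +
        convexHull ℝ (ε • (A : Set (EuclideanSpace ℝ (Fin d)))) =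
      convexHull ℝ (A : Set (EuclideanSpace ℝ (Fin d))) +
        ε • (A : Set (EuclideanSpace ℝ (Fin d))) := by
  subst hcard
  exact convexHull_add_smul_convexHull_general _ hε.1
    (mul_finrank_vectorSpan_coe_le_one (Finset.card_pos.1 hn) hε)
end

section
/- Let A ⊂ ℝ^d be a bounded set and let R > 0. Suppose ‖a‖ ≥ R for every a ∈ A. Then for each z ∈ conv(A), ‖z‖ ≥ R − diam(A)²/(2R). -/
open Metric Set

/-!
Minimising the bilinear form `⟪·, ·⟫` in one variable at a time over `convexHull ℝ s`, one finds
`a, b ∈ s` with `⟪a, b⟫ ≤ ⟪z, z⟫ = ‖z‖²`. By polarization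
`2 ⟪a, b⟫ = ‖a‖² + ‖b‖² - ‖a - b‖² ≥ 2 R² - diam(s)²`, so `‖z‖² ≥ R² - diam(s)² / 2`.
If `‖z‖ ≤ R` then also `R ‖z‖ ≥ ‖z‖²`, and dividing by `R` gives the bound.
-/

theorem exists_bilin_le_of_mem_convexHull {𝕜 E F β : Type*} [Field 𝕜] [LinearOrder 𝕜]
    [IsStrictOrderedRing 𝕜] [AddCommGroup E] [Module 𝕜 E] [AddCommGroup F] [Module 𝕜 F]
    [AddCommGroup β] [LinearOrder β] [IsOrderedAddMonoid β] [Module 𝕜 β] [IsStrictOrderedModule 𝕜 β]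
    (B : E →ₗ[𝕜] F →ₗ[𝕜] β) {s : Set E} {t : Set F} {x : E} {y : F}
    (hx : x ∈ convexHull 𝕜 s) (hy : y ∈ convexHull 𝕜 t) :
    ∃ a ∈ s, ∃ b ∈ t, B a b ≤ B x y := by
  obtain ⟨a, ha, hay⟩ :=
    ((B.flip y).concaveOn convex_univ).exists_le_of_mem_convexHull (subset_univ s) hx
  obtain ⟨b, hb, hab⟩ :=
    ((B a).concaveOn convex_univ).exists_le_of_mem_convexHull (subset_univ t) hy
  exact ⟨a, ha, b, hb, hab.trans hay⟩

section InnerProductSpace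

variable {E : Type*} [SeminormedAddCommGroup E] [InnerProductSpace ℝ E] {s : Set E} {r : ℝ}

theorem sq_sub_dist_sq_div_two_le_inner {a b : E} (hr : 0 ≤ r) (ha : r ≤ ‖a‖) (hb : r ≤ ‖b‖) :
    r ^ 2 - dist a b ^ 2 / 2 ≤ inner ℝ a b := by
  have ha_sq : r ^ 2 ≤ ‖a‖ ^ 2 := by gcongr
  have hb_sq : r ^ 2 ≤ ‖b‖ ^ 2 := by gcongr
  rw [dist_eq_norm]
  linarith [norm_sub_sq_real a b]

theorem sq_sub_diam_sq_div_two_le_norm_sq (hs : Bornology.IsBounded s) (hr : 0 ≤ r)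
    (h : ∀ a ∈ s, r ≤ ‖a‖) {z : E} (hz : z ∈ convexHull ℝ s) :
    r ^ 2 - diam s ^ 2 / 2 ≤ ‖z‖ ^ 2 := by
  obtain ⟨a, ha, b, hb, hab⟩ := exists_bilin_le_of_mem_convexHull (innerₗ E) hz hz
  calc r ^ 2 - diam s ^ 2 / 2 ≤ r ^ 2 - dist a b ^ 2 / 2 := by
        gcongr
        exact dist_le_diam_of_mem hs ha hb
    _ ≤ inner ℝ a b := sq_sub_dist_sq_div_two_le_inner hr (h a ha) (h b hb)
    _ ≤ inner ℝ z z := hab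
    _ = ‖z‖ ^ 2 := real_inner_self_eq_norm_sq z

theorem norm_ge_of_mem_convexHull_general (hs : Bornology.IsBounded s) (hr : 0 < r)
    (h : ∀ a ∈ s, r ≤ ‖a‖) {z : E} (hz : z ∈ convexHull ℝ s) :
    r - diam s ^ 2 / (2 * r) ≤ ‖z‖ := by
  obtain hzr | hrz := le_total ‖z‖ r
  · refine le_of_mul_le_mul_left ?_ hr
    calc r * (r - diam s ^ 2 / (2 * r)) = r ^ 2 - diam s ^ 2 / 2 := by field_simp
      _ ≤ ‖z‖ ^ 2 := sq_sub_diam_sq_div_two_le_norm_sq hs hr.le h hz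
      _ = ‖z‖ * ‖z‖ := sq ‖z‖
      _ ≤ r * ‖z‖ := by gcongr
  · exact (sub_le_self r (by positivity)).trans hrz

end InnerProductSpace

/-- If `A ⊆ ℝ^d` is bounded and every `a ∈ A` satisfies `‖a‖ ≥ R`, then every point `z`
of the convex hull of `A` satisfies `‖z‖ ≥ R − diam(A)²/(2R)`. -/
theorem norm_ge_of_mem_convexHull {d : ℕ} (A : Set (EuclideanSpace ℝ (Fin d)))
    (hA : Bornology.IsBounded A) (R : ℝ) (hR : 0 < R) (h : ∀ a ∈ A, R ≤ ‖a‖) :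
    ∀ z ∈ convexHull ℝ A, R - Metric.diam A ^ 2 / (2 * R) ≤ ‖z‖ :=
  fun _ hz => norm_ge_of_mem_convexHull_general hA hR h hz
end
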